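/- arXiv:1105.4430 — 2 statements merged into one kernel-verified Lean document; each statement's English description precedes it below -/
import Mathlib

section
/- Let p, q > 0. There exists a constant c > 0, depending only on p and q, such that for every 𝔷 = (x,y,z) ∈ ℝ³: d_Sol(o, 𝔷) ≤ d_{H(p)}((x,z),(0,0)) + d_{H(q)}((y,−z),(0,0)) − |z| ≤ c + (2/p)·log(1+|x|) + (2/q)·log(1+|y|) + |z|. -/
open Real MeasureTheory

/-- A path `γ` is piecewise `C¹` on `[0,1]` if it is continuous there and there is a
finite partition `0 = t₀ < t₁ < ⋯ < tₙ = 1` such that `γ` is `C¹` on each subinterval. -/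
def PiecewiseC1 {E : Type*} [NormedAddCommGroup E] [NormedSpace ℝ E] (γ : ℝ → E) : Prop :=
  ContinuousOn γ (Set.Icc 0 1) ∧
  ∃ (n : ℕ) (t : ℕ → ℝ), t 0 = 0 ∧ t n = 1 ∧ (∀ i < n, t i < t (i + 1)) ∧
    ∀ i < n, ContDiffOn ℝ 1 γ (Set.Icc (t i) (t (i + 1)))

/-- The `Sol(p,q)`-length of a path in `ℝ³`. -/
noncomputable def solLength (p q : ℝ) (γ : ℝ → ℝ × ℝ × ℝ) : ℝ :=
  ∫ t in (0:ℝ)..1,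
    Real.sqrt (Real.exp (-(2*p*(γ t).2.2)) * (deriv (fun s => (γ s).1) t)^2
      + Real.exp (2*q*(γ t).2.2) * (deriv (fun s => (γ s).2.1) t)^2
      + (deriv (fun s => (γ s).2.2) t)^2)

/-- The `Sol(p,q)` distance: infimum of lengths of piecewise `C¹` paths joining the points. -/
noncomputable def solDist (p q : ℝ) (u v : ℝ × ℝ × ℝ) : ℝ :=
  ⨅ γ : {γ : ℝ → ℝ × ℝ × ℝ // γ 0 = u ∧ γ 1 = v ∧ PiecewiseC1 γ}, solLength p q γ.1

/-- The `H(r)`-length of a path in `ℝ²` (logarithmic model of the hyperbolic plane). -/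
noncomputable def hypLength (r : ℝ) (γ : ℝ → ℝ × ℝ) : ℝ :=
  ∫ t in (0:ℝ)..1,
    Real.sqrt (Real.exp (-(2*r*(γ t).2)) * (deriv (fun s => (γ s).1) t)^2
      + (deriv (fun s => (γ s).2) t)^2)

/-- The `H(r)` distance: infimum of lengths of piecewise `C¹` paths joining the points. -/
noncomputable def hypDist (r : ℝ) (u v : ℝ × ℝ) : ℝ :=
  ⨅ γ : {γ : ℝ → ℝ × ℝ // γ 0 = u ∧ γ 1 = v ∧ PiecewiseC1 γ}, hypLength r γ.1


open Set

/-- The integrand of `solLength`. -/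
noncomputable def solSpeed (p q : ℝ) (γ : ℝ → ℝ × ℝ × ℝ) (t : ℝ) : ℝ :=
  Real.sqrt (Real.exp (-(2*p*(γ t).2.2)) * (deriv (fun s => (γ s).1) t)^2
      + Real.exp (2*q*(γ t).2.2) * (deriv (fun s => (γ s).2.1) t)^2
      + (deriv (fun s => (γ s).2.2) t)^2)

/-- The integrand of `hypLength`. -/
noncomputable def hypSpeed (r : ℝ) (γ : ℝ → ℝ × ℝ) (t : ℝ) : ℝ :=
  Real.sqrt (Real.exp (-(2*r*(γ t).2)) * (deriv (fun s => (γ s).1) t)^2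
      + (deriv (fun s => (γ s).2) t)^2)

lemma solLength_eq (p q : ℝ) (γ : ℝ → ℝ × ℝ × ℝ) :
    solLength p q γ = ∫ t in (0:ℝ)..1, solSpeed p q γ t := rfl

lemma hypLength_eq (r : ℝ) (γ : ℝ → ℝ × ℝ) :
    hypLength r γ = ∫ t in (0:ℝ)..1, hypSpeed r γ t := rfl

lemma hypSpeed_eq_solSpeed (r q : ℝ) (γ : ℝ → ℝ × ℝ) :
    hypSpeed r γ = solSpeed r q (fun t => ((γ t).1, 0, (γ t).2)) := by
  funext t
  simp [hypSpeed, solSpeed]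

lemma intervalIntegrable_solSpeed_of_contDiffOn (p q : ℝ) {γ : ℝ → ℝ × ℝ × ℝ} {a b : ℝ}
    (hab : a < b) (h : ContDiffOn ℝ 1 γ (Icc a b)) :
    IntervalIntegrable (solSpeed p q γ) volume a b := by
  have cont : ∀ f : ℝ → ℝ, ContDiffOn ℝ 1 f (Icc a b) →
      ContinuousOn (derivWithin f (Icc a b)) (Icc a b) := fun f hf =>
    hf.continuousOn_derivWithin (uniqueDiffOn_Icc hab) le_rfl
  have c1 := cont _ h.fst
  have c2 := cont _ h.snd.fst
  have c3 := cont _ h.snd.snd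
  have c4 : ContinuousOn (fun s => (γ s).2.2) (Icc a b) := h.snd.snd.continuousOn
  have key : ContinuousOn (fun t => Real.sqrt (Real.exp (-(2*p*(γ t).2.2)) *
      (derivWithin (fun s => (γ s).1) (Icc a b) t)^2
      + Real.exp (2*q*(γ t).2.2) * (derivWithin (fun s => (γ s).2.1) (Icc a b) t)^2
      + (derivWithin (fun s => (γ s).2.2) (Icc a b) t)^2)) (Icc a b) := by
    fun_prop
  refine (key.intervalIntegrable_of_Icc hab.le).congr_uIoo fun t ht => ?_
  rw [uIoo_of_le hab.le] at ht
  have hn : Icc a b ∈ nhds t := Icc_mem_nhds ht.1 ht.2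
  simp only [solSpeed, derivWithin_of_mem_nhds hn]

lemma intervalIntegrable_hypSpeed_of_contDiffOn (r : ℝ) {γ : ℝ → ℝ × ℝ} {a b : ℝ}
    (hab : a < b) (h : ContDiffOn ℝ 1 γ (Icc a b)) :
    IntervalIntegrable (hypSpeed r γ) volume a b := by
  rw [hypSpeed_eq_solSpeed r 0]
  exact intervalIntegrable_solSpeed_of_contDiffOn r 0 hab
    (h.fst.prodMk (contDiffOn_const.prodMk h.snd))

lemma PiecewiseC1.intervalIntegrable_solSpeed (p q : ℝ) {γ : ℝ → ℝ × ℝ × ℝ}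
    (h : PiecewiseC1 γ) : IntervalIntegrable (solSpeed p q γ) volume 0 1 := by
  obtain ⟨-, n, t, h0, h1, hlt, hC⟩ := h
  rw [← h0, ← h1]
  exact IntervalIntegrable.trans_iterate fun i hi =>
    intervalIntegrable_solSpeed_of_contDiffOn p q (hlt i hi) (hC i hi)

lemma PiecewiseC1.of_contDiffOn {E : Type*} [NormedAddCommGroup E] [NormedSpace ℝ E] {γ : ℝ → E}
    (h : ContDiffOn ℝ 1 γ (Icc 0 1)) : PiecewiseC1 γ := by
  refine ⟨h.continuousOn, 1, fun i => i, by simp, by simp, by simp, fun i hi => ?_⟩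
  obtain rfl : i = 0 := by omega
  simpa using h

lemma PiecewiseC1.comp_contDiff {E F : Type*} [NormedAddCommGroup E] [NormedSpace ℝ E]
    [NormedAddCommGroup F] [NormedSpace ℝ F] {γ : ℝ → E} {g : E → F}
    (hγ : PiecewiseC1 γ) (hg : ContDiff ℝ 1 g) : PiecewiseC1 (fun t => g (γ t)) := by
  obtain ⟨hc, n, t, h0, h1, hlt, hC⟩ := hγ
  exact ⟨hg.continuous.comp_continuousOn hc, n, t, h0, h1, hlt,
    fun i hi => hg.comp_contDiffOn (hC i hi)⟩

/-- Concatenation of two paths parametrized by `[0,1]`. -/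
noncomputable def concatPath {E : Type*} (γ₁ γ₂ : ℝ → E) (t : ℝ) : E :=
  if t ≤ 1 / 2 then γ₁ (2 * t) else γ₂ (2 * t - 1)

lemma concatPath_of_le {E : Type*} (γ₁ γ₂ : ℝ → E) {t : ℝ} (ht : t ≤ 1 / 2) :
    concatPath γ₁ γ₂ t = γ₁ (2 * t) := if_pos ht

lemma concatPath_of_ge {E : Type*} {γ₁ γ₂ : ℝ → E} (h : γ₁ 1 = γ₂ 0) {t : ℝ} (ht : 1 / 2 ≤ t) :
    concatPath γ₁ γ₂ t = γ₂ (2 * t - 1) := by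
  rcases ht.eq_or_lt with rfl | ht
  · rw [concatPath_of_le _ _ le_rfl]; norm_num [h]
  · exact if_neg (not_le.2 ht)

lemma PiecewiseC1.partition_mem_Icc {n : ℕ} {t : ℕ → ℝ} (h0 : t 0 = 0) (h1 : t n = 1)
    (hlt : ∀ i < n, t i < t (i + 1)) {i : ℕ} (hi : i ≤ n) : t i ∈ Icc (0:ℝ) 1 := by
  have mono : ∀ k, ∀ j, j + k ≤ n → t j ≤ t (j + k) := by
    intro k
    induction k with
    | zero => intro j _; simp
    | succ k ih => intro j hj; exact (ih j (by omega)).trans (hlt (j + k) (by omega)).le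
  constructor
  · have := mono i 0 (by omega)
    rwa [h0, zero_add] at this
  · have := mono (n - i) i (by omega)
    rwa [Nat.add_sub_cancel' hi, h1] at this

lemma PiecewiseC1.concat {E : Type*} [NormedAddCommGroup E] [NormedSpace ℝ E] {γ₁ γ₂ : ℝ → E}
    (h₁ : PiecewiseC1 γ₁) (h₂ : PiecewiseC1 γ₂) (h : γ₁ 1 = γ₂ 0) :
    PiecewiseC1 (concatPath γ₁ γ₂) := by
  obtain ⟨c₁, n, t, t0, t1, tlt, tC⟩ := h₁
  obtain ⟨c₂, m, s, s0, s1, slt, sC⟩ := h₂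
  have e₁ : ∀ x ∈ Icc (0:ℝ) (1/2), concatPath γ₁ γ₂ x = γ₁ (2 * x) := fun x hx =>
    concatPath_of_le _ _ hx.2
  have e₂ : ∀ x ∈ Icc (1/2 : ℝ) 1, concatPath γ₁ γ₂ x = γ₂ (2 * x - 1) := fun x hx =>
    concatPath_of_ge h hx.1
  refine ⟨?_, n + m, fun i => if i ≤ n then t i / 2 else 1 / 2 + s (i - n) / 2, by simp [t0],
    ?_, ?_, ?_⟩
  · rw [← Icc_union_Icc_eq_Icc (show (0:ℝ) ≤ 1/2 by norm_num) (by norm_num)]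
    refine ContinuousOn.union_of_isClosed ?_ ?_ isClosed_Icc isClosed_Icc
    · refine ContinuousOn.congr ?_ e₁
      refine c₁.comp (by fun_prop) fun x hx => ?_
      constructor <;> linarith [hx.1, hx.2]
    · refine ContinuousOn.congr ?_ e₂
      refine c₂.comp (by fun_prop) fun x hx => ?_
      constructor <;> linarith [hx.1, hx.2]
  · have hm : m ≠ 0 := by rintro rfl; linarith
    simp [hm, s1]; norm_num
  · intro i hi
    rcases lt_trichotomy i n with hin | rfl | hin
    · have := tlt i hin
      simp only [hin.le, if_true, show i + 1 ≤ n from hin]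
      linarith
    · have := slt 0 (by omega)
      simp [t1]
      linarith
    · have := slt (i - n) (by omega)
      simp only [not_le.2 hin, if_false, show ¬ i + 1 ≤ n by omega,
        show i + 1 - n = i - n + 1 by omega]
      linarith
  · intro i hi
    by_cases hin : i < n
    · simp only [hin.le, if_true, show i + 1 ≤ n from hin]
      have b₁ := PiecewiseC1.partition_mem_Icc t0 t1 tlt hin.le
      have b₂ := PiecewiseC1.partition_mem_Icc t0 t1 tlt (show i + 1 ≤ n from hin)
      refine ContDiffOn.congr ?_ fun x hx => e₁ x
        ⟨by linarith [hx.1, b₁.1], by linarith [hx.2, b₂.2]⟩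
      refine (tC i hin).comp (by fun_prop) fun x hx => ?_
      constructor <;> linarith [hx.1, hx.2]
    · have hl : (if i ≤ n then t i / 2 else 1 / 2 + s (i - n) / 2) = 1 / 2 + s (i - n) / 2 := by
        split_ifs with h'
        · obtain rfl : i = n := by omega
          simp [t1, s0]
        · rfl
      simp only [hl, show ¬ i + 1 ≤ n by omega, if_false, show i + 1 - n = i - n + 1 by omega]
      have b₁ := PiecewiseC1.partition_mem_Icc s0 s1 slt (show i - n ≤ m by omega)
      have b₂ := PiecewiseC1.partition_mem_Icc s0 s1 slt (show i - n + 1 ≤ m by omega)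
      refine ContDiffOn.congr ?_ fun x hx => e₂ x
        ⟨by linarith [hx.1, b₁.1], by linarith [hx.2, b₂.2]⟩
      refine (sC (i - n) (by omega)).comp (by fun_prop) fun x hx => ?_
      constructor <;> linarith [hx.1, hx.2]

lemma solSpeed_congr (p q : ℝ) {γ₁ γ₂ : ℝ → ℝ × ℝ × ℝ} {t : ℝ} (h : γ₁ =ᶠ[nhds t] γ₂) :
    solSpeed p q γ₁ t = solSpeed p q γ₂ t := by
  have d1 : (fun s => (γ₁ s).1) =ᶠ[nhds t] fun s => (γ₂ s).1 := h.mono fun s hs => by simp [hs]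
  have d2 : (fun s => (γ₁ s).2.1) =ᶠ[nhds t] fun s => (γ₂ s).2.1 := h.mono fun s hs => by simp [hs]
  have d3 : (fun s => (γ₁ s).2.2) =ᶠ[nhds t] fun s => (γ₂ s).2.2 := h.mono fun s hs => by simp [hs]
  simp only [solSpeed, d1.deriv_eq, d2.deriv_eq, d3.deriv_eq, h.eq_of_nhds]

lemma solSpeed_comp_two_mul_sub (p q c : ℝ) (γ : ℝ → ℝ × ℝ × ℝ) (t : ℝ) :
    solSpeed p q (fun s => γ (2 * s - c)) t = 2 * solSpeed p q γ (2 * t - c) := by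
  have d : ∀ f : ℝ → ℝ, deriv (fun s => f (2 * s - c)) t = 2 * deriv f (2 * t - c) := by
    intro f
    have := deriv_comp_mul_left 2 (fun s => f (s - c)) t
    rw [deriv_comp_sub_const] at this
    simpa using this
  simp only [solSpeed, d (fun s => (γ s).1), d (fun s => (γ s).2.1), d (fun s => (γ s).2.2)]
  rw [← Real.sqrt_sq (show (0:ℝ) ≤ 2 by norm_num), ← Real.sqrt_mul (by positivity),
    Real.sqrt_sq (show (0:ℝ) ≤ 2 by norm_num)]
  congr 1
  ring

lemma solLength_concatPath (p q : ℝ) {γ₁ γ₂ : ℝ → ℝ × ℝ × ℝ}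
    (h₁ : PiecewiseC1 γ₁) (h₂ : PiecewiseC1 γ₂) (h : γ₁ 1 = γ₂ 0) :
    solLength p q (concatPath γ₁ γ₂) = solLength p q γ₁ + solLength p q γ₂ := by
  have int := (h₁.concat h₂ h).intervalIntegrable_solSpeed p q
  have sub₁ : uIcc (0:ℝ) (1/2) ⊆ uIcc 0 1 := by
    rw [uIcc_of_le (by norm_num), uIcc_of_le (by norm_num)]
    exact Icc_subset_Icc_right (by norm_num)
  have sub₂ : uIcc (1/2:ℝ) 1 ⊆ uIcc 0 1 := by
    rw [uIcc_of_le (by norm_num), uIcc_of_le (by norm_num)]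
    exact Icc_subset_Icc_left (by norm_num)
  rw [solLength_eq, ← intervalIntegral.integral_add_adjacent_intervals (int.mono_set sub₁)
    (int.mono_set sub₂)]
  congr 1
  · rw [intervalIntegral.integral_congr_Ioo_of_le (g := fun t => 2 * solSpeed p q γ₁ (2 * t - 0))
      (by norm_num), intervalIntegral.integral_const_mul,
      intervalIntegral.integral_comp_mul_sub _ (by norm_num), solLength_eq]
    · norm_num
      ring
    · intro t ht
      dsimp only
      rw [← solSpeed_comp_two_mul_sub]
      apply solSpeed_congr
      filter_upwards [Iio_mem_nhds ht.2] with s hs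
      rw [concatPath_of_le _ _ (le_of_lt hs), sub_zero]
  · rw [intervalIntegral.integral_congr_Ioo_of_le (g := fun t => 2 * solSpeed p q γ₂ (2 * t - 1))
      (by norm_num), intervalIntegral.integral_const_mul,
      intervalIntegral.integral_comp_mul_sub _ (by norm_num), solLength_eq]
    · norm_num
      ring
    · intro t ht
      dsimp only
      rw [← solSpeed_comp_two_mul_sub]
      apply solSpeed_congr
      filter_upwards [Ioi_mem_nhds ht.1] with s hs
      rw [concatPath_of_ge h (le_of_lt hs)]

lemma PiecewiseC1.lineMap {E : Type*} [NormedAddCommGroup E] [NormedSpace ℝ E] (u v : E) :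
    PiecewiseC1 (fun t : ℝ => u + t • (v - u)) :=
  PiecewiseC1.of_contDiffOn (by fun_prop)

instance nonempty_path {E : Type*} [NormedAddCommGroup E] [NormedSpace ℝ E] (u v : E) :
    Nonempty {γ : ℝ → E // γ 0 = u ∧ γ 1 = v ∧ PiecewiseC1 γ} :=
  ⟨⟨_, by simp, by simp, PiecewiseC1.lineMap u v⟩⟩

lemma solLength_nonneg (p q : ℝ) (γ : ℝ → ℝ × ℝ × ℝ) : 0 ≤ solLength p q γ :=
  intervalIntegral.integral_nonneg zero_le_one fun _ _ => Real.sqrt_nonneg _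

lemma hypLength_nonneg (r : ℝ) (γ : ℝ → ℝ × ℝ) : 0 ≤ hypLength r γ :=
  intervalIntegral.integral_nonneg zero_le_one fun _ _ => Real.sqrt_nonneg _

lemma solDist_le_solLength (p q : ℝ) {γ : ℝ → ℝ × ℝ × ℝ} (h : PiecewiseC1 γ) :
    solDist p q (γ 0) (γ 1) ≤ solLength p q γ :=
  ciInf_le (f := fun γ' : {γ' : ℝ → ℝ × ℝ × ℝ // γ' 0 = γ 0 ∧ γ' 1 = γ 1 ∧ PiecewiseC1 γ'} =>
    solLength p q γ'.1) ⟨0, by rintro _ ⟨γ', rfl⟩; exact solLength_nonneg p q _⟩ ⟨γ, rfl, rfl, h⟩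

lemma hypDist_le_hypLength (r : ℝ) {γ : ℝ → ℝ × ℝ} (h : PiecewiseC1 γ) :
    hypDist r (γ 0) (γ 1) ≤ hypLength r γ :=
  ciInf_le (f := fun γ' : {γ' : ℝ → ℝ × ℝ // γ' 0 = γ 0 ∧ γ' 1 = γ 1 ∧ PiecewiseC1 γ'} =>
    hypLength r γ'.1) ⟨0, by rintro _ ⟨γ', rfl⟩; exact hypLength_nonneg r _⟩ ⟨γ, rfl, rfl, h⟩

lemma le_solDist {p q d : ℝ} {u v : ℝ × ℝ × ℝ}
    (h : ∀ γ : ℝ → ℝ × ℝ × ℝ, γ 0 = u → γ 1 = v → PiecewiseC1 γ → d ≤ solLength p q γ) :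
    d ≤ solDist p q u v :=
  le_ciInf fun γ => h γ.1 γ.2.1 γ.2.2.1 γ.2.2.2

lemma le_hypDist {r d : ℝ} {u v : ℝ × ℝ}
    (h : ∀ γ : ℝ → ℝ × ℝ, γ 0 = u → γ 1 = v → PiecewiseC1 γ → d ≤ hypLength r γ) :
    d ≤ hypDist r u v :=
  le_ciInf fun γ => h γ.1 γ.2.1 γ.2.2.1 γ.2.2.2

lemma solDist_triangle (p q : ℝ) (u v w : ℝ × ℝ × ℝ) :
    solDist p q u w ≤ solDist p q u v + solDist p q v w := by
  rw [← sub_le_iff_le_add]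
  refine le_solDist fun γ₁ a₁ b₁ h₁ => ?_
  rw [sub_le_iff_le_add, ← sub_le_iff_le_add']
  refine le_solDist fun γ₂ a₂ b₂ h₂ => ?_
  have h : γ₁ 1 = γ₂ 0 := b₁.trans a₂.symm
  have key := solDist_le_solLength p q (h₁.concat h₂ h)
  rw [solLength_concatPath p q h₁ h₂ h, concatPath_of_le _ _ (by norm_num),
    concatPath_of_ge h (by norm_num)] at key
  norm_num [a₁, b₂] at key
  linarith

/-- The isometry `(x, y, z) ↦ (y, x, -z)` from `Sol(p,q)` to `Sol(q,p)`. -/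
lemma solDist_swap_le (p q : ℝ) (u v : ℝ × ℝ × ℝ) :
    solDist p q u v ≤ solDist q p (u.2.1, u.1, -u.2.2) (v.2.1, v.1, -v.2.2) := by
  refine le_solDist fun γ a b h => ?_
  have h' : PiecewiseC1 (fun t => ((γ t).2.1, (γ t).1, -(γ t).2.2)) :=
    h.comp_contDiff (g := fun w : ℝ × ℝ × ℝ => (w.2.1, w.1, -w.2.2)) (by fun_prop)
  have key := solDist_le_solLength p q h'
  simp only [a, b, neg_neg] at key
  refine key.trans_eq ?_
  rw [solLength_eq, solLength_eq]
  congr 1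
  funext t
  simp only [solSpeed, deriv.fun_neg, neg_sq]
  congr 1
  ring_nf

lemma hypDist_le_solDist (p q : ℝ) (x y z x' y' z' : ℝ) :
    hypDist p (x, z) (x', z') ≤ solDist p q (x, y, z) (x', y', z') := by
  refine le_solDist fun γ a b h => ?_
  have h' : PiecewiseC1 (fun t => ((γ t).1, (γ t).2.2)) :=
    h.comp_contDiff (g := fun w : ℝ × ℝ × ℝ => (w.1, w.2.2)) (by fun_prop)
  have h'' : PiecewiseC1 (fun t => ((γ t).1, (0:ℝ), (γ t).2.2)) :=
    h.comp_contDiff (g := fun w : ℝ × ℝ × ℝ => (w.1, (0:ℝ), w.2.2)) (by fun_prop)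
  have key := hypDist_le_hypLength p h'
  simp only [a, b] at key
  refine key.trans ?_
  rw [solLength_eq, hypLength_eq]
  refine intervalIntegral.integral_mono_on zero_le_one ?_
    (h.intervalIntegrable_solSpeed p q) fun t _ => ?_
  · rw [hypSpeed_eq_solSpeed p q]
    exact h''.intervalIntegrable_solSpeed p q
  · refine Real.sqrt_le_sqrt ?_
    have : 0 ≤ Real.exp (2*q*(γ t).2.2) * (deriv (fun s => (γ s).2.1) t)^2 := by positivity
    dsimp only
    linarith

/-- A function on the `H(r)` plane whose differential has norm at most one. -/
def IsCalibration (r : ℝ) (u : ℝ × ℝ → ℝ) : Prop :=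
  ∀ P : ℝ × ℝ, ∃ u' : ℝ × ℝ →L[ℝ] ℝ, HasFDerivAt u u' P ∧
    ∀ v : ℝ × ℝ, u' v ≤ Real.sqrt (Real.exp (-(2*r*P.2)) * v.1^2 + v.2^2)

lemma IsCalibration.sub_le_integral {r : ℝ} {u : ℝ × ℝ → ℝ} (hu : IsCalibration r u)
    {γ : ℝ → ℝ × ℝ} {a b : ℝ} (hab : a < b) (hγ : ContDiffOn ℝ 1 γ (Icc a b)) :
    u (γ b) - u (γ a) ≤ ∫ t in a..b, hypSpeed r γ t := by
  choose u' hu' hle using hu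
  have ucont : Continuous u := continuous_iff_continuousAt.2 fun P => (hu' P).continuousAt
  refine intervalIntegral.sub_le_integral_of_hasDeriv_right_of_le (g := fun t => u (γ t))
    (g' := fun t => u' (γ t) (deriv γ t)) hab.le
    (ucont.comp_continuousOn hγ.continuousOn) (fun t ht => ?_) ?_ fun t ht => ?_
  · have hd : DifferentiableAt ℝ γ t :=
      (hγ.differentiableOn one_ne_zero).differentiableAt (Icc_mem_nhds ht.1 ht.2)
    exact ((hu' (γ t)).comp_hasDerivAt t hd.hasDerivAt).hasDerivWithinAt
  · exact (intervalIntegrable_iff_integrableOn_Icc_of_le hab.le).1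
      (intervalIntegrable_hypSpeed_of_contDiffOn r hab hγ)
  · have hd : DifferentiableAt ℝ γ t :=
      (hγ.differentiableOn one_ne_zero).differentiableAt (Icc_mem_nhds ht.1 ht.2)
    have e1 : deriv (fun s => (γ s).1) t = (deriv γ t).1 :=
      (HasFDerivAt.comp_hasDerivAt t (hasFDerivAt_fst (𝕜 := ℝ) (p := γ t)) hd.hasDerivAt).deriv
    have e2 : deriv (fun s => (γ s).2) t = (deriv γ t).2 :=
      (HasFDerivAt.comp_hasDerivAt t (hasFDerivAt_snd (𝕜 := ℝ) (p := γ t)) hd.hasDerivAt).deriv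
    simp only [hypSpeed, e1, e2]
    exact hle _ _

lemma IsCalibration.sub_le_hypDist {r : ℝ} {u : ℝ × ℝ → ℝ} (hu : IsCalibration r u)
    (P Q : ℝ × ℝ) : u Q - u P ≤ hypDist r P Q := by
  refine le_hypDist fun γ hP hQ ⟨_, n, t, h0, h1, hlt, hC⟩ => ?_
  rw [hypLength_eq, ← hP, ← hQ, ← h0, ← h1, ← intervalIntegral.sum_integral_adjacent_intervals
    fun i hi => intervalIntegrable_hypSpeed_of_contDiffOn r (hlt i hi) (hC i hi),
    ← Finset.sum_range_sub (fun i => u (γ (t i)))]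
  exact Finset.sum_le_sum fun i hi =>
    hu.sub_le_integral (hlt i (Finset.mem_range.1 hi)) (hC i (Finset.mem_range.1 hi))

/-- Upper bound for `solDist` by a smooth path whose speed is dominated by a derivative. -/
lemma solDist_le_of_hasDerivAt {p q : ℝ} {x y z x' y' z' L ℓ : ℝ → ℝ}
    (hC : ContDiffOn ℝ 1 (fun t => (x t, y t, z t)) (Icc 0 1))
    (hx : ∀ t ∈ Icc (0:ℝ) 1, HasDerivAt x (x' t) t) (hy : ∀ t ∈ Icc (0:ℝ) 1, HasDerivAt y (y' t) t)
    (hz : ∀ t ∈ Icc (0:ℝ) 1, HasDerivAt z (z' t) t) (hL : ∀ t ∈ Icc (0:ℝ) 1, HasDerivAt L (ℓ t) t)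
    (hle : ∀ t ∈ Icc (0:ℝ) 1, Real.sqrt (Real.exp (-(2*p*z t)) * x' t ^ 2
      + Real.exp (2*q*z t) * y' t ^ 2 + z' t ^ 2) ≤ ℓ t) :
    solDist p q (x 0, y 0, z 0) (x 1, y 1, z 1) ≤ L 1 - L 0 := by
  refine (solDist_le_solLength p q (PiecewiseC1.of_contDiffOn hC)).trans ?_
  rw [solLength_eq]
  refine intervalIntegral.integral_le_sub_of_hasDeriv_right_of_le zero_le_one
    (fun t ht => (hL t ht).continuousAt.continuousWithinAt)
    (fun t ht => (hL t (Ioo_subset_Icc_self ht)).hasDerivWithinAt)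
    ((intervalIntegrable_iff_integrableOn_Icc_of_le zero_le_one).1
      (intervalIntegrable_solSpeed_of_contDiffOn p q zero_lt_one hC)) fun t ht => ?_
  have ht' := Ioo_subset_Icc_self ht
  simp only [solSpeed, (hx t ht').deriv, (hy t ht').deriv, (hz t ht').deriv]
  exact hle t ht'

lemma solDist_vertical_le (p q x y z z' : ℝ) :
    solDist p q (x, y, z) (x, y, z') ≤ |z' - z| := by
  have := solDist_le_of_hasDerivAt (p := p) (q := q) (x := fun _ => x) (y := fun _ => y)
    (z := fun t => z + t * (z' - z)) (x' := fun _ => 0) (y' := fun _ => 0)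
    (z' := fun _ => z' - z) (L := fun t => t * |z' - z|) (ℓ := fun _ => |z' - z|)
    (by fun_prop) (fun t _ => hasDerivAt_const t x) (fun t _ => hasDerivAt_const t y)
    (fun t _ => by simpa using ((hasDerivAt_id t).mul_const (z' - z)).const_add z)
    (fun t _ => by simpa using (hasDerivAt_id t).mul_const |z' - z|)
    (fun t _ => by simp [Real.sqrt_sq_eq_abs])
  simpa using this

/-- The distance between two points of equal height, differing in the first coordinate, is at
most the length of a geodesic arc of `H(p)`. -/
lemma solDist_arc_fst_le {p : ℝ} (hp : 0 < p) (q x x' y z : ℝ) :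
    solDist p q (x, y, z) (x', y, z)
      ≤ 2 / p * Real.arsinh (p * Real.exp (-(p * z)) * |x' - x| / 2) := by
  set τ := Real.arsinh (p * Real.exp (-(p * z)) * (x' - x) / 2) with hτ
  set c := Real.exp (p * z) * Real.cosh τ / p with hc
  have cosh_ne : ∀ s, Real.cosh s ≠ 0 := fun s => (Real.cosh_pos s).ne'
  have hsinh : Real.sinh τ = p * Real.exp (-(p * z)) * (x' - x) / 2 := Real.sinh_arsinh _
  have hcτ : c * (Real.sinh τ / Real.cosh τ) = (x' - x) / 2 := by
    rw [hc, hsinh, Real.exp_neg]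
    field_simp [cosh_ne τ, hp.ne']
  have dlin : ∀ t : ℝ, HasDerivAt (fun t => -τ + 2 * τ * t) (2 * τ) t := fun t => by
    simpa using ((hasDerivAt_id t).const_mul (2 * τ)).const_add (-τ)
  have main := solDist_le_of_hasDerivAt (p := p) (q := q)
    (x := fun t => (x + x') / 2 +
      c * (Real.sinh (-τ + 2 * τ * t) / Real.cosh (-τ + 2 * τ * t)))
    (y := fun _ => y)
    (z := fun t => z + (Real.log (Real.cosh τ) - Real.log (Real.cosh (-τ + 2 * τ * t))) / p)
    (x' := fun t => c * (2 * τ / Real.cosh (-τ + 2 * τ * t) ^ 2)) (y' := fun _ => 0)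
    (z' := fun t => -(2 * τ * (Real.sinh (-τ + 2 * τ * t) / Real.cosh (-τ + 2 * τ * t))) / p)
    (L := fun t => t * (2 / p * |τ|)) (ℓ := fun _ => 2 / p * |τ|)
    ?_ ?_ (fun t _ => hasDerivAt_const t y) ?_
    (fun t _ => by simpa using (hasDerivAt_id t).mul_const (2 / p * |τ|)) ?_
  · have e0 : (x + x') / 2 + c * (Real.sinh (-τ) / Real.cosh τ) = x := by
      rw [Real.sinh_neg, neg_div, mul_neg, hcτ]; ring
    have e1 : (x + x') / 2 + c * (Real.sinh τ / Real.cosh τ) = x' := by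
      rw [hcτ]; ring
    have e2 : -τ + 2 * τ = τ := by ring
    simp only [mul_zero, add_zero, mul_one, e2, e0, e1, Real.cosh_neg, sub_self, zero_div,
      zero_mul, sub_zero, one_mul] at main
    refine main.trans_eq ?_
    congr 1
    rw [hτ, show p * Real.exp (-(p * z)) * |x' - x| / 2
      = |p * Real.exp (-(p * z)) * (x' - x) / 2| by
        rw [abs_div, abs_mul, abs_mul, abs_of_pos hp, abs_of_pos (Real.exp_pos _)]; norm_num]
    rcases le_total 0 (p * Real.exp (-(p * z)) * (x' - x) / 2) with h | h
    · rw [abs_of_nonneg h, abs_of_nonneg (Real.arsinh_nonneg_iff.2 h)]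
    · rw [abs_of_nonpos h, abs_of_nonpos (Real.arsinh_nonpos_iff.2 h), Real.arsinh_neg]
  · apply ContDiff.contDiffOn
    have h1 : ContDiff ℝ 1 (fun t : ℝ => Real.cosh (-τ + 2 * τ * t)) := by fun_prop
    have h2 : ContDiff ℝ 1 (fun t : ℝ => Real.sinh (-τ + 2 * τ * t)) := by fun_prop
    have h3 := h2.div h1 fun t => cosh_ne _
    have h4 := h1.log fun t => cosh_ne _
    exact (contDiff_const.add (contDiff_const.mul h3)).prodMk (contDiff_const.prodMk
      (contDiff_const.add ((contDiff_const.sub h4).div_const p)))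
  · intro t _
    have := (((dlin t).sinh.fun_div (dlin t).cosh (cosh_ne _)).const_mul c).const_add ((x + x') / 2)
    refine this.congr_deriv ?_
    congr 2
    linear_combination (2 * τ) * Real.cosh_sq (-τ + 2 * τ * t)
  · intro t _
    have := ((((dlin t).cosh.log (cosh_ne _)).const_sub
      (Real.log (Real.cosh τ))).div_const p).const_add z
    refine this.congr_deriv ?_
    ring
  · intro t _
    set s := -τ + 2 * τ * t
    have hcs := Real.cosh_pos s
    have e : Real.exp (-(2 * p * (z + (Real.log (Real.cosh τ) - Real.log (Real.cosh s)) / p)))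
        = (Real.exp (-(p * z)) * Real.cosh s / Real.cosh τ) ^ 2 := by
      rw [← Real.exp_log hcs, ← Real.exp_log (Real.cosh_pos τ), ← Real.exp_add, ← Real.exp_sub,
        ← Real.exp_nat_mul, Real.log_exp, Real.log_exp]
      congr 1
      field_simp
      push_cast
      ring
    rw [e]
    refine Real.sqrt_le_iff.2 ⟨by positivity, le_of_eq ?_⟩
    rw [hc, mul_pow _ |τ|, sq_abs, Real.exp_neg]
    have := cosh_ne τ
    field_simp
    rw [Real.cosh_sq s]
    ring

lemma solDist_arc_snd_le (p : ℝ) {q : ℝ} (hq : 0 < q) (x y y' z : ℝ) :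
    solDist p q (x, y, z) (x, y', z)
      ≤ 2 / q * Real.arsinh (q * Real.exp (q * z) * |y' - y| / 2) := by
  refine (solDist_swap_le p q _ _).trans ?_
  simpa using solDist_arc_fst_le hq p y y' x (-z)

lemma arsinh_half_le_log {t : ℝ} (ht : 0 ≤ t) : Real.arsinh (t / 2) ≤ Real.log (1 + t) := by
  rw [Real.arsinh]
  refine Real.log_le_log (by positivity) ?_
  have : Real.sqrt (1 + (t / 2) ^ 2) ≤ 1 + t / 2 :=
    Real.sqrt_le_iff.2 ⟨by positivity, by nlinarith⟩
  linarith

lemma hypDist_origin_le {p : ℝ} (hp : 0 < p) (x z : ℝ) :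
    hypDist p (x, z) (0, 0)
      ≤ 2 / p * Real.log (1 + p) + 2 * Real.log (1 + |x|) / p + |z| := by
  have h1 := hypDist_le_solDist p 1 x 0 z 0 0 0
  have h2 := solDist_triangle p 1 (x, 0, z) (x, 0, 0) (0, 0, 0)
  have h3 := solDist_vertical_le p 1 x 0 z 0
  have h4 := solDist_arc_fst_le hp 1 x 0 0 0
  have h5 : Real.arsinh (p * |x| / 2) ≤ Real.log (1 + p) + Real.log (1 + |x|) := by
    rw [← Real.log_mul (by positivity) (by positivity)]
    refine (arsinh_half_le_log (by positivity)).trans (Real.log_le_log (by positivity) ?_)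
    nlinarith [abs_nonneg x]
  have h6 := mul_le_mul_of_nonneg_left h5 (show 0 ≤ 2 / p by positivity)
  simp only [mul_zero, neg_zero, Real.exp_zero, mul_one, zero_sub, abs_neg] at h3 h4
  have : 2 * Real.log (1 + |x|) / p = 2 / p * Real.log (1 + |x|) := by ring
  linarith

/-- A graph `x = f h` over the heights `h ∈ [0, z]` in the `H(p)` plane, starting at the origin and
of length at most `L z - L 0`. -/
structure IsClimb (p z : ℝ) (f f' L ℓ : ℝ → ℝ) : Prop where
  contDiffOn : ContDiffOn ℝ 1 f (Icc 0 z)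
  hasDerivAt : ∀ h ∈ Icc 0 z, HasDerivAt f (f' h) h
  hasDerivAt_length : ∀ h ∈ Icc 0 z, HasDerivAt L (ℓ h) h
  speed_le : ∀ h ∈ Icc 0 z, Real.sqrt (1 + Real.exp (-(2*p*h)) * f' h ^ 2) ≤ ℓ h
  map_zero : f 0 = 0

lemma sqrt_one_add_add_le {a b s t : ℝ} (ha : 0 ≤ a) (hb : 0 ≤ b) (hs : Real.sqrt (1 + a) ≤ s)
    (ht : Real.sqrt (1 + b) ≤ t) : Real.sqrt (a + b + 1) ≤ s + t - 1 := by
  have h1 := (Real.sqrt_le_iff.1 hs)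
  have h2 := (Real.sqrt_le_iff.1 ht)
  have h3 : 1 ≤ s := by nlinarith
  have h4 : 1 ≤ t := by nlinarith
  refine Real.sqrt_le_iff.2 ⟨by linarith, ?_⟩
  nlinarith [mul_nonneg (sub_nonneg.2 h3) (sub_nonneg.2 h4)]

/-- Two climbs, the second one traversed backwards, can be performed simultaneously. -/
lemma solDist_le_of_isClimb {p q z : ℝ} (hz : 0 ≤ z) {f f' L ℓ g g' M m : ℝ → ℝ}
    (hf : IsClimb p z f f' L ℓ) (hg : IsClimb q z g g' M m) (y : ℝ) :
    solDist p q (0, y - Real.exp (-(q * z)) * g z, 0) (f z, y, z)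
      ≤ (L z - L 0) + (M z - M 0) - z := by
  have m1 : ∀ t ∈ Icc (0:ℝ) 1, z * t ∈ Icc 0 z := fun t ht =>
    ⟨mul_nonneg hz ht.1, mul_le_of_le_one_right hz ht.2⟩
  have m2 : ∀ t ∈ Icc (0:ℝ) 1, z - z * t ∈ Icc 0 z := fun t ht =>
    ⟨by linarith [(m1 t ht).2], by linarith [(m1 t ht).1]⟩
  have d1 : ∀ t : ℝ, HasDerivAt (fun t => z * t) z t := fun t => by
    simpa using (hasDerivAt_id t).const_mul z
  have d2 : ∀ t : ℝ, HasDerivAt (fun t => z - z * t) (-z) t := fun t => (d1 t).const_sub z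
  have main := solDist_le_of_hasDerivAt (p := p) (q := q)
    (x := fun t => f (z * t)) (y := fun t => y - Real.exp (-(q * z)) * g (z - z * t))
    (z := fun t => z * t) (x' := fun t => f' (z * t) * z)
    (y' := fun t => -(Real.exp (-(q * z)) * (g' (z - z * t) * -z)))
    (z' := fun _ => z) (L := fun t => L (z * t) - M (z - z * t) - z * t)
    (ℓ := fun t => ℓ (z * t) * z - m (z - z * t) * -z - z)
    ?_ (fun t ht => (hf.hasDerivAt _ (m1 t ht)).comp t (d1 t))
    (fun t ht => (((hg.hasDerivAt _ (m2 t ht)).comp t (d2 t)).const_mul _).const_sub _)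
    (fun t _ => d1 t)
    (fun t ht => (((hf.hasDerivAt_length _ (m1 t ht)).comp t (d1 t)).sub
      ((hg.hasDerivAt_length _ (m2 t ht)).comp t (d2 t))).sub (d1 t)) ?_
  · simp only [mul_zero, mul_one, sub_zero, sub_self, hf.map_zero, hg.map_zero] at main
    linarith
  · have c1 : ContDiffOn ℝ 1 (fun t => f (z * t)) (Icc 0 1) :=
      hf.contDiffOn.comp (by fun_prop) m1
    have c2 : ContDiffOn ℝ 1 (fun t => g (z - z * t)) (Icc 0 1) :=
      hg.contDiffOn.comp (by fun_prop) m2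
    exact c1.prodMk ((contDiffOn_const.sub (contDiffOn_const.mul c2)).prodMk (by fun_prop))
  · intro t ht
    have key := sqrt_one_add_add_le (by positivity) (by positivity)
      (hf.speed_le _ (m1 t ht)) (hg.speed_le _ (m2 t ht))
    have key' := mul_le_mul_of_nonneg_left key hz
    have e : Real.exp (-(2*q*(z - z*t))) = Real.exp (2*q*(z*t)) * Real.exp (-(q*z)) ^ 2 := by
      rw [← Real.exp_nat_mul, ← Real.exp_add]
      congr 1
      push_cast
      ring
    have e' : Real.exp (-(2*p*(z*t))) * (f' (z*t) * z)^2
        + Real.exp (2*q*(z*t)) * (-(Real.exp (-(q*z)) * (g' (z - z*t) * -z)))^2 + z^2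
        = z^2 * (Real.exp (-(2*p*(z*t))) * f' (z*t)^2
          + Real.exp (-(2*q*(z - z*t))) * g' (z - z*t)^2 + 1) := by
      rw [e]; ring
    rw [e', Real.sqrt_mul (sq_nonneg z), Real.sqrt_sq hz]
    linarith

lemma solDist_le_of_isClimb_of_arcs {p q z : ℝ} (hp : 0 < p) (hq : 0 < q) (hz : 0 ≤ z)
    {f f' L ℓ g g' M m : ℝ → ℝ} (hf : IsClimb p z f f' L ℓ) (hg : IsClimb q z g g' M m) (x y : ℝ) :
    solDist p q (0, 0, 0) (x, y, z)
      ≤ (L z - L 0 + 2 / p * Real.arsinh (p * Real.exp (-(p * z)) * |x - f z| / 2))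
        + (M z - M 0 + 2 / q * Real.arsinh
            (q * Real.exp (-(q * z)) * |Real.exp (q * z) * y - g z| / 2)) - z := by
  have h1 := solDist_triangle p q (0, 0, 0) (0, y - Real.exp (-(q * z)) * g z, 0) (x, y, z)
  have h2 := solDist_triangle p q (0, y - Real.exp (-(q * z)) * g z, 0) (f z, y, z) (x, y, z)
  have h3 := solDist_arc_snd_le p hq 0 0 (y - Real.exp (-(q * z)) * g z) 0
  have h4 := solDist_le_of_isClimb hz hf hg y
  have h5 := solDist_arc_fst_le hp q (f z) x y z
  have e : q * Real.exp (q * 0) * |y - Real.exp (-(q * z)) * g z - 0|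
      = q * Real.exp (-(q * z)) * |Real.exp (q * z) * y - g z| := by
    have : y - Real.exp (-(q * z)) * g z
        = Real.exp (-(q * z)) * (Real.exp (q * z) * y - g z) := by
      rw [mul_sub, ← mul_assoc, ← Real.exp_add]; simp
    rw [sub_zero, this, abs_mul, abs_of_pos (Real.exp_pos _)]
    simp [mul_assoc]
  rw [e] at h3
  linarith

lemma isCalibration_snd (r : ℝ) : IsCalibration r Prod.snd := fun P =>
  ⟨ContinuousLinearMap.snd ℝ ℝ ℝ, hasFDerivAt_snd, fun v => by
    refine (le_abs_self v.2).trans (Real.abs_le_sqrt ?_)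
    have : 0 ≤ Real.exp (-(2*r*P.2)) * v.1^2 := by positivity
    linarith⟩

lemma sq_gradient_mul_le {w : ℝ} (hw : 0 < w) (m n a b : ℝ) :
    ((m / (m^2 + w) - n / (n^2 + w)) * a + w * (1 / (m^2 + w) - 1 / (n^2 + w)) * b) ^ 2
      ≤ w⁻¹ * a^2 + b^2 := by
  set A := m^2 + w with hA
  set B := n^2 + w with hB
  have Apos : 0 < A := by positivity
  have Bpos : 0 < B := by positivity
  set g := m / A - n / B with hg
  set k := w * (1 / A - 1 / B) with hk
  have e : w * g^2 + k^2 = w * (m - n)^2 / (A * B) := by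
    rw [hg, hk]
    field_simp
    rw [hA, hB]
    ring
  have grad : w * g^2 + k^2 ≤ 1 := by
    rw [e, div_le_one (by positivity), hA, hB]
    nlinarith [sq_nonneg (m * n + w)]
  have cs : (g * a + k * b)^2 ≤ (w * g^2 + k^2) * (w⁻¹ * a^2 + b^2) := by
    have : (w * g^2 + k^2) * (w⁻¹ * a^2 + b^2) - (g * a + k * b)^2
        = w⁻¹ * (w * g * b - k * a)^2 := by
      field_simp
      ring
    have : 0 ≤ w⁻¹ * (w * g * b - k * a)^2 := by positivity
    linarith
  exact cs.trans (mul_le_of_le_one_left (by positivity) grad)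

/-- The signed distance along the geodesic with endpoints `e₁`, `e₂`, in the half-plane model with
coordinates `(r x, exp (r z))`. -/
noncomputable def geodesicCoord (r e₁ e₂ : ℝ) (P : ℝ × ℝ) : ℝ :=
  1 / (2 * r) * (Real.log ((r * P.1 - e₁) ^ 2 + Real.exp (2 * r * P.2))
    - Real.log ((r * P.1 - e₂) ^ 2 + Real.exp (2 * r * P.2)))

lemma isCalibration_geodesicCoord {r : ℝ} (hr : 0 < r) (e₁ e₂ : ℝ) :
    IsCalibration r (geodesicCoord r e₁ e₂) := by
  intro P
  set w := Real.exp (2 * r * P.2) with hw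
  have wpos : 0 < w := Real.exp_pos _
  set A := (r * P.1 - e₁) ^ 2 + w with hA
  set B := (r * P.1 - e₂) ^ 2 + w with hB
  have Apos : 0 < A := by positivity
  have Bpos : 0 < B := by positivity
  have hfst : HasFDerivAt (fun P : ℝ × ℝ => P.1) (ContinuousLinearMap.fst ℝ ℝ ℝ) P :=
    hasFDerivAt_fst
  have hsnd : HasFDerivAt (fun P : ℝ × ℝ => P.2) (ContinuousLinearMap.snd ℝ ℝ ℝ) P :=
    hasFDerivAt_snd
  have part : ∀ e : ℝ, (r * P.1 - e) ^ 2 + Real.exp (2 * r * P.2) ≠ 0 := fun e => by positivity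
  have hlog := fun e : ℝ =>
    ((((hfst.const_mul r).sub_const e).pow 2).add ((hsnd.const_mul (2 * r)).exp)).log (part e)
  refine ⟨_, ((hlog e₁).sub (hlog e₂)).const_mul (1 / (2 * r)), fun v => ?_⟩
  refine (le_abs_self _).trans (Real.abs_le_sqrt ?_)
  have e1 : Real.exp (-(2 * r * P.2)) = w⁻¹ := Real.exp_neg _
  rw [e1]
  refine le_trans (le_of_eq ?_) (sq_gradient_mul_le wpos (r * P.1 - e₁) (r * P.1 - e₂) v.1 v.2)
  congr 1
  simp [← hw, ← hA, ← hB]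
  field_simp
  ring

lemma IsCalibration.fun_neg {r : ℝ} {u : ℝ × ℝ → ℝ} (hu : IsCalibration r u) :
    IsCalibration r (fun P => -u P) := by
  intro P
  obtain ⟨u', hu', hle⟩ := hu P
  refine ⟨-u', hu'.neg, fun v => ?_⟩
  simpa using hle (-v)

/-- Calibrations are preserved by the isometry `(x, h) ↦ (exp (r z) (y - x), h + z)`. -/
lemma IsCalibration.comp_isometry {r : ℝ} {u : ℝ × ℝ → ℝ} (hu : IsCalibration r u) (y z : ℝ) :
    IsCalibration r (fun P => u (Real.exp (r * z) * (y - P.1), P.2 + z)) := by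
  intro P
  obtain ⟨u', hu', hle⟩ := hu (Real.exp (r * z) * (y - P.1), P.2 + z)
  have hfst : HasFDerivAt (fun P : ℝ × ℝ => P.1) (ContinuousLinearMap.fst ℝ ℝ ℝ) P :=
    hasFDerivAt_fst
  have hsnd : HasFDerivAt (fun P : ℝ × ℝ => P.2) (ContinuousLinearMap.snd ℝ ℝ ℝ) P :=
    hasFDerivAt_snd
  refine ⟨_, HasFDerivAt.comp P hu'
    (((hfst.const_sub y).const_mul (Real.exp (r * z))).prodMk (hsnd.add_const z)), fun v => ?_⟩
  refine (hle _).trans_eq ?_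
  congr 1
  have e : Real.exp (-(2 * r * (P.2 + z))) * Real.exp (r * z) ^ 2 = Real.exp (-(2 * r * P.2)) := by
    rw [← Real.exp_nat_mul, ← Real.exp_add]
    congr 1
    push_cast
    ring
  simp [mul_pow, ← mul_assoc, e]

/-- The ascending arc of the geodesic of `H(p)` through the origin with Euclidean radius `R`. -/
lemma isClimb_geodesic {p z R ς : ℝ} (hp : 0 < p) (hR : Real.exp (p * z) < R) (hς : ς ^ 2 = 1) :
    IsClimb p z (fun h => ς * (Real.sqrt (R^2 - 1) - Real.sqrt (R^2 - Real.exp (p * h) ^ 2)) / p)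
      (fun h => ς * Real.exp (p * h) ^ 2 / Real.sqrt (R^2 - Real.exp (p * h) ^ 2))
      (fun h => h - Real.log (R + Real.sqrt (R^2 - Real.exp (p * h) ^ 2)) / p)
      (fun h => R / Real.sqrt (R^2 - Real.exp (p * h) ^ 2)) := by
  have Rpos : 0 < R := (Real.exp_pos _).trans hR
  have pos : ∀ h ∈ Icc 0 z, 0 < R^2 - Real.exp (p * h) ^ 2 := by
    intro h hh
    have h1 : Real.exp (p * h) ≤ Real.exp (p * z) :=
      Real.exp_le_exp.2 (mul_le_mul_of_nonneg_left hh.2 hp.le)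
    have h2 := Real.exp_pos (p * h)
    nlinarith
  have dsqrt : ∀ h ∈ Icc 0 z, HasDerivAt (fun h => Real.sqrt (R^2 - Real.exp (p * h) ^ 2))
      (-(p * Real.exp (p * h) ^ 2) / Real.sqrt (R^2 - Real.exp (p * h) ^ 2)) h := by
    intro h hh
    have d1 : HasDerivAt (fun h => p * h) p h := by simpa using (hasDerivAt_id h).const_mul p
    refine (((d1.exp.fun_pow 2).const_sub (R^2)).sqrt (pos h hh).ne').congr_deriv ?_
    have := (Real.sqrt_pos.2 (pos h hh)).ne'
    field_simp
    ring
  refine ⟨?_, fun h hh => ?_, fun h hh => ?_, fun h hh => ?_, by simp⟩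
  · have c : ContDiffOn ℝ 1 (fun h => Real.sqrt (R^2 - Real.exp (p * h) ^ 2)) (Icc 0 z) :=
      ContDiffOn.sqrt (by fun_prop) fun h hh => (pos h hh).ne'
    exact (contDiffOn_const.mul (contDiffOn_const.sub c)).div_const p
  · refine ((((dsqrt h hh).const_sub _).const_mul ς).div_const p).congr_deriv ?_
    have := (Real.sqrt_pos.2 (pos h hh)).ne'
    field_simp
  · have wpos := Real.sqrt_pos.2 (pos h hh)
    have wsq := Real.sq_sqrt (pos h hh).le
    refine ((hasDerivAt_id h).sub ((((dsqrt h hh).const_add R).log (by positivity)).div_const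
      p)).congr_deriv ?_
    set w := Real.sqrt (R^2 - Real.exp (p * h) ^ 2)
    have : Real.exp (p * h) ^ 2 = R^2 - w^2 := by linarith
    rw [this]
    field_simp
    ring
  · have wpos := Real.sqrt_pos.2 (pos h hh)
    have wsq := Real.sq_sqrt (pos h hh).le
    refine Real.sqrt_le_iff.2 ⟨by positivity, le_of_eq ?_⟩
    have e : Real.exp (-(2*p*h)) = (Real.exp (p * h) ^ 2)⁻¹ := by
      rw [← Real.exp_nat_mul, ← Real.exp_neg]
      congr 1
      push_cast
      ring
    set w := Real.sqrt (R^2 - Real.exp (p * h) ^ 2)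
    have epos := Real.exp_pos (p * h)
    rw [e, div_pow, div_pow, mul_pow, hς]
    field_simp
    linarith

lemma isClimb_zero (p z : ℝ) : IsClimb p z (fun _ => 0) (fun _ => 0) (fun h => h) (fun _ => 1) :=
  ⟨contDiffOn_const, fun h _ => hasDerivAt_const h 0, fun h _ => hasDerivAt_id h,
    fun h _ => by simp, rfl⟩

/-- The value at its far endpoint of the calibration of the geodesic with Euclidean centre `a` and
radius `R` agrees with the length of an ascending arc followed by an arc between equal heights. -/
lemma geodesic_length_eq {a b R Y : ℝ} (hY : 0 < Y) (hR : 0 < R)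
    (ha : R^2 = a^2 + 1) (hb : R^2 = b^2 + Y^2) :
    Real.log Y - Real.log (R + |b|) + Real.log (R + a) + 2 * Real.arsinh (Y⁻¹ * (b + |b|) / 2)
      = 1 / 2 * ((Real.log ((b + R)^2 + Y^2) - Real.log ((b - R)^2 + Y^2))
        - (Real.log ((R - a)^2 + 1) - Real.log ((R + a)^2 + 1))) := by
  have hRb : 0 < R + b := by nlinarith [abs_lt_of_sq_lt_sq' (show b^2 < R^2 by nlinarith) hR.le]
  have hRb' : 0 < R - b := by nlinarith [abs_lt_of_sq_lt_sq' (show b^2 < R^2 by nlinarith) hR.le]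
  have hRa : 0 < R + a := by nlinarith [abs_lt_of_sq_lt_sq' (show a^2 < R^2 by nlinarith) hR.le]
  have hRa' : 0 < R - a := by nlinarith [abs_lt_of_sq_lt_sq' (show a^2 < R^2 by nlinarith) hR.le]
  have e1 : (b + R)^2 + Y^2 = 2 * R * (R + b) := by linear_combination -hb
  have e2 : (b - R)^2 + Y^2 = 2 * R * (R - b) := by linear_combination -hb
  have e3 : (R - a)^2 + 1 = 2 * R * (R - a) := by linear_combination -ha
  have e4 : (R + a)^2 + 1 = 2 * R * (R + a) := by linear_combination -ha
  have l1 : Real.log (R - b) = 2 * Real.log Y - Real.log (R + b) := by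
    rw [eq_sub_iff_add_eq, ← Real.log_mul hRb'.ne' hRb.ne',
      show (R - b) * (R + b) = Y^2 by linear_combination hb, Real.log_pow]
    norm_num
  have l2 : Real.log (R - a) = -Real.log (R + a) := by
    rw [eq_neg_iff_add_eq_zero, ← Real.log_mul hRa'.ne' hRa.ne',
      show (R - a) * (R + a) = 1 by linear_combination ha, Real.log_one]
  have hR2 : (2 * R) ≠ 0 := by positivity
  rw [e1, e2, e3, e4, Real.log_mul hR2 hRb.ne', Real.log_mul hR2 hRb'.ne',
    Real.log_mul hR2 hRa.ne', Real.log_mul hR2 hRa'.ne', l2]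
  rcases le_total 0 b with h | h
  · have e : Real.arsinh (Y⁻¹ * (b + |b|) / 2) = Real.log (R + b) - Real.log Y := by
      have hs : Real.sqrt (1 + (b / Y)^2) = R / Y := by
        rw [show 1 + (b / Y)^2 = (R / Y)^2 by rw [div_pow, div_pow, hb]; field_simp; ring,
          Real.sqrt_sq (by positivity)]
      rw [abs_of_nonneg h, show Y⁻¹ * (b + b) / 2 = b / Y by field_simp; ring, Real.arsinh, hs,
        ← Real.log_div hRb.ne' hY.ne']
      congr 1
      field_simp
      ring
    rw [e, l1, abs_of_nonneg h]
    ring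
  · rw [abs_of_nonpos h]
    simp only [add_neg_cancel, mul_zero, zero_div, Real.arsinh_zero, ← sub_eq_add_neg, l1]
    ring

/-- If no calibration separates `(x, z)` from the origin by more than `d`, then up to `ε` the point
can be reached at cost `d` by a climb followed by an arc between points of equal height. -/
lemma exists_isClimb {p z d ε : ℝ} (hp : 0 < p) (hz : 0 ≤ z) (x : ℝ)
    (hd : ∀ u, IsCalibration p u → u (x, z) - u (0, 0) ≤ d) (hε : 0 < ε) :
    ∃ f f' L ℓ : ℝ → ℝ, IsClimb p z f f' L ℓ ∧
      L z - L 0 + 2 / p * Real.arsinh (p * Real.exp (-(p * z)) * |x - f z| / 2) ≤ d + ε := by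
  rcases eq_or_ne x 0 with rfl | hx
  · refine ⟨_, _, _, _, isClimb_zero p z, ?_⟩
    have := hd _ (isCalibration_snd p)
    simp at this ⊢
    linarith
  obtain ⟨ς, hς, hςx⟩ : ∃ ς : ℝ, ς ^ 2 = 1 ∧ 0 < ς * x := by
    rcases hx.lt_or_gt with h | h
    · exact ⟨-1, by norm_num, by linarith⟩
    · exact ⟨1, by norm_num, by linarith⟩
  set X := p * (ς * x) with hX
  have Xpos : 0 < X := by positivity
  set Y := Real.exp (p * z) with hY
  have Ypos : 0 < Y := Real.exp_pos _
  have Y1 : 1 ≤ Y := Real.one_le_exp (by positivity)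
  set a := (X^2 + Y^2 - 1) / (2 * X) with ha
  have a0 : 0 ≤ a := div_nonneg (by nlinarith) (by positivity)
  have haX : 2 * a * X = X^2 + Y^2 - 1 := by rw [ha]; field_simp
  set b := X - a with hb
  set R₀ := Real.sqrt (a^2 + 1) with hR₀
  have Rpos : 0 < R₀ := Real.sqrt_pos.2 (by positivity)
  have Ra : R₀^2 = a^2 + 1 := Real.sq_sqrt (by positivity)
  have Rb : R₀^2 = b^2 + Y^2 := by rw [Ra, hb]; linear_combination haX
  have YR : Y ≤ R₀ := abs_le_of_sq_le_sq' (by nlinarith) Rpos.le |>.2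
  let T : ℝ → ℝ := fun R => z - Real.log (R + Real.sqrt (R^2 - Y^2)) / p
    - (0 - Real.log (R + Real.sqrt (R^2 - 1)) / p)
    + 2 / p * Real.arsinh (Y⁻¹ * |X - (Real.sqrt (R^2 - 1) - Real.sqrt (R^2 - Y^2))| / 2)
  have Tcont : ContinuousAt T R₀ := by
    have n1 : R₀ + Real.sqrt (R₀^2 - Y^2) ≠ 0 := by positivity
    have n2 : R₀ + Real.sqrt (R₀^2 - 1) ≠ 0 := by positivity
    have c1 : ContinuousAt (fun R => Real.log (R + Real.sqrt (R^2 - Y^2))) R₀ :=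
      ContinuousAt.log (by fun_prop) n1
    have c2 : ContinuousAt (fun R => Real.log (R + Real.sqrt (R^2 - 1))) R₀ :=
      ContinuousAt.log (by fun_prop) n2
    have c3 : ContinuousAt (fun R => Real.arsinh
        (Y⁻¹ * |X - (Real.sqrt (R^2 - 1) - Real.sqrt (R^2 - Y^2))| / 2)) R₀ :=
      ContinuousAt.arsinh (by fun_prop)
    exact ((continuousAt_const.sub (c1.div_const p)).sub
      (continuousAt_const.sub (c2.div_const p))).add (continuousAt_const.mul c3)
  have Tle : T R₀ ≤ d := by
    have h := hd _ (isCalibration_geodesicCoord hp (ς * (a - R₀)) (ς * (a + R₀)))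
    have s1 : Real.sqrt (R₀^2 - 1) = a := by rw [Ra, add_sub_cancel_right, Real.sqrt_sq a0]
    have s2 : Real.sqrt (R₀^2 - Y^2) = |b| := by
      rw [Rb, add_sub_cancel_right, Real.sqrt_sq_eq_abs]
    have s3 : |X - (a - |b|)| = b + |b| := by
      rw [show X - (a - |b|) = b + |b| by rw [hb]; ring]
      exact abs_of_nonneg (by linarith [neg_abs_le b])
    have sq : ∀ e, (p * x - ς * e)^2 = (X - e)^2 := by
      intro e
      rw [hX]
      linear_combination (p^2 * x^2 * (-1) + e^2) * hς
    have sq0 : ∀ e, (0 - ς * e)^2 = e^2 := by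
      intro e
      linear_combination e^2 * hς
    have eY : Real.exp (2 * p * z) = Y^2 := by
      rw [hY, ← Real.exp_nat_mul]
      congr 1
      push_cast
      ring
    have lY : Real.log Y = p * z := Real.log_exp _
    have key := geodesic_length_eq Ypos Rpos Ra Rb
    simp only [geodesicCoord, sq, sq0, eY, mul_zero, Real.exp_zero] at h
    rw [show X - (a - R₀) = b + R₀ by rw [hb]; ring,
      show X - (a + R₀) = b - R₀ by rw [hb]; ring, show (a - R₀)^2 = (R₀ - a)^2 by ring,
      show a + R₀ = R₀ + a by ring] at h
    refine le_trans (le_of_eq ?_) h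
    simp only [T, s1, s2, s3]
    rw [← mul_sub, show 1 / (2 * p) = 1 / p * (1 / 2) by field_simp, mul_assoc, ← key, lY]
    field_simp
    ring
  obtain ⟨δ, δpos, hδ⟩ := Metric.continuousAt_iff.1 Tcont ε hε
  have hlt : T (R₀ + δ / 2) < T R₀ + ε := by
    have := hδ (x := R₀ + δ / 2) (by
      rw [Real.dist_eq, add_sub_cancel_left, abs_of_pos (by positivity)]; linarith)
    rw [Real.dist_eq] at this
    linarith [(abs_lt.1 this).2]
  refine ⟨_, _, _, _, isClimb_geodesic hp (R := R₀ + δ / 2) (by linarith) hς, ?_⟩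
  refine le_trans (le_of_eq ?_) (hlt.le.trans (by linarith))
  simp only [T, mul_zero, Real.exp_zero, one_pow, ← hY]
  congr 4
  have ς1 : |ς| = 1 := by rwa [← sq_eq_sq₀ (abs_nonneg _) zero_le_one, sq_abs, one_pow]
  generalize Real.sqrt ((R₀ + δ / 2)^2 - 1) - Real.sqrt ((R₀ + δ / 2)^2 - Y^2) = k
  rw [Real.exp_neg, ← hY, mul_comm p, mul_assoc]
  congr 1
  rw [← abs_of_pos hp, ← abs_mul, abs_of_pos hp, ← one_mul |X - k|, ← ς1, ← abs_mul]
  congr 1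
  rw [hX]
  field_simp
  linear_combination (-p * x) * hς

lemma solDist_le_of_nonneg {p q : ℝ} (hp : 0 < p) (hq : 0 < q) (x y : ℝ) {z : ℝ} (hz : 0 ≤ z) :
    solDist p q (0, 0, 0) (x, y, z)
      ≤ hypDist p (x, z) (0, 0) + hypDist q (y, -z) (0, 0) - z := by
  refine le_of_forall_pos_le_add fun ε hε => ?_
  obtain ⟨f, f', L, ℓ, hf, hfd⟩ := exists_isClimb hp hz x (d := hypDist p (x, z) (0, 0))
    (fun u hu => by
      have := hu.fun_neg.sub_le_hypDist (x, z) (0, 0)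
      linarith) (half_pos hε)
  obtain ⟨g, g', M, m, hg, hgd⟩ := exists_isClimb hq hz (Real.exp (q * z) * y)
    (d := hypDist q (y, -z) (0, 0))
    (fun u hu => by
      have := (hu.comp_isometry y z).sub_le_hypDist (y, -z) (0, 0)
      simpa using this) (half_pos hε)
  have := solDist_le_of_isClimb_of_arcs hp hq hz hf hg x y
  linarith

theorem solDist_upper_bound (p q : ℝ) (hp : 0 < p) (hq : 0 < q) :
    ∃ c > (0:ℝ), ∀ x y z : ℝ,
      solDist p q (0, 0, 0) (x, y, z)
          ≤ hypDist p (x, z) (0, 0) + hypDist q (y, -z) (0, 0) - |z|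
      ∧ hypDist p (x, z) (0, 0) + hypDist q (y, -z) (0, 0) - |z|
          ≤ c + 2 * Real.log (1 + |x|) / p + 2 * Real.log (1 + |y|) / q + |z| := by
  have hlp : 0 < Real.log (1 + p) := Real.log_pos (by linarith)
  have hlq : 0 < Real.log (1 + q) := Real.log_pos (by linarith)
  refine ⟨2 / p * Real.log (1 + p) + 2 / q * Real.log (1 + q), by positivity,
    fun x y z => ⟨?_, ?_⟩⟩
  · rcases le_total 0 z with hz | hz
    · rw [abs_of_nonneg hz]
      exact solDist_le_of_nonneg hp hq x y hz
    · rw [abs_of_nonpos hz]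
      have h1 := solDist_swap_le p q (0, 0, 0) (x, y, z)
      have h2 := solDist_le_of_nonneg hq hp y x (neg_nonneg.2 hz)
      simp only [neg_zero, neg_neg] at h1 h2
      linarith
  · have h1 := hypDist_origin_le hp x z
    have h2 := hypDist_origin_le hq y (-z)
    rw [abs_neg] at h2
    linarith
end

section
/- Let p, q > 0, a ∈ ℝ and λ ≥ −a²/2, and let h be a minimal element of H⁺(Δ_a, λ), where Δ_a is the Laplacian with vertical drift a on Sol(p,q). Then either there exists a minimal element h₁ of H⁺(Δ^{H(p)}_a, λ) such that h(x,y,z) = h₁(x,z) for all (x,y,z) ∈ ℝ³, or there exists a minimal element h₂ of H⁺(Δ^{H(q)}_{−a}, λ) such that h(x,y,z) = h₂(y,−z) for all (x,y,z) ∈ ℝ³. -/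
open Real

/-- The Laplacian with vertical drift `a` on `Sol(p,q) ≡ ℝ³`:
`Δ_a f = (1/2)(e^{2pz} f_xx + e^{−2qz} f_yy + f_zz) + a f_z`. -/
noncomputable def solLap (p q a : ℝ) (f : ℝ × ℝ × ℝ → ℝ) (w : ℝ × ℝ × ℝ) : ℝ :=
  (1/2) * (Real.exp (2*p*w.2.2) * iteratedDeriv 2 (fun t => f (t, w.2.1, w.2.2)) w.1
    + Real.exp (-(2*q*w.2.2)) * iteratedDeriv 2 (fun t => f (w.1, t, w.2.2)) w.2.1
    + iteratedDeriv 2 (fun t => f (w.1, w.2.1, t)) w.2.2)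
  + a * deriv (fun t => f (w.1, w.2.1, t)) w.2.2

/-- The hyperbolic Laplacian with drift `b` on the logarithmic model `H(r) ≡ ℝ²`:
`Δ^{H(r)}_b g = (1/2)(e^{2rz} g_xx + g_zz) + b g_z`. -/
noncomputable def hypLap (r b : ℝ) (g : ℝ × ℝ → ℝ) (w : ℝ × ℝ) : ℝ :=
  (1/2) * (Real.exp (2*r*w.2) * iteratedDeriv 2 (fun t => g (t, w.2)) w.1
    + iteratedDeriv 2 (fun t => g (w.1, t)) w.2)
  + b * deriv (fun t => g (w.1, t)) w.2

/-- Membership in `H⁺(Δ_a, λ)` on `Sol(p,q)`: strictly positive `C²` `λ`-eigenfunction. -/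
def IsSolEigen (p q a lam : ℝ) (h : ℝ × ℝ × ℝ → ℝ) : Prop :=
  ContDiff ℝ 2 h ∧ (∀ w, 0 < h w) ∧ ∀ w, solLap p q a h w = lam * h w

/-- A minimal element of `H⁺(Δ_a, λ)` on `Sol(p,q)`: value `1` at the origin, and any
element of `H⁺(Δ_a, λ)` dominated by it is a constant multiple of it. -/
def IsSolMinimal (p q a lam : ℝ) (h : ℝ × ℝ × ℝ → ℝ) : Prop :=
  IsSolEigen p q a lam h ∧ h (0, 0, 0) = 1 ∧
    ∀ f, IsSolEigen p q a lam f → (∀ w, f w ≤ h w) → ∃ c : ℝ, ∀ w, f w = c * h w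

/-- Membership in `H⁺(Δ^{H(r)}_b, λ)`: strictly positive `C²` `λ`-eigenfunction. -/
def IsHypEigen (r b lam : ℝ) (g : ℝ × ℝ → ℝ) : Prop :=
  ContDiff ℝ 2 g ∧ (∀ w, 0 < g w) ∧ ∀ w, hypLap r b g w = lam * g w

/-- A minimal element of `H⁺(Δ^{H(r)}_b, λ)`. -/
def IsHypMinimal (r b lam : ℝ) (g : ℝ × ℝ → ℝ) : Prop :=
  IsHypEigen r b lam g ∧ g (0, 0) = 1 ∧
    ∀ f, IsHypEigen r b lam f → (∀ w, f w ≤ g w) → ∃ c : ℝ, ∀ w, f w = c * g w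

/-- The derivative of `f` in the constant direction `v`. -/
noncomputable def pd (v : ℝ × ℝ × ℝ) (f : ℝ × ℝ × ℝ → ℝ) (w : ℝ × ℝ × ℝ) : ℝ := fderiv ℝ f w v

section DirectionalDerivatives

variable {v v' : ℝ × ℝ × ℝ} {f g : ℝ × ℝ × ℝ → ℝ}

theorem ContDiff.pd {n m : WithTop ℕ∞} (hf : ContDiff ℝ n f) (hmn : m + 1 ≤ n) :
    ContDiff ℝ m (pd v f) :=
  (hf.fderiv_right hmn).clm_apply contDiff_const

theorem pd_add (hf : Differentiable ℝ f) (hg : Differentiable ℝ g) :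
    pd v (fun w => f w + g w) = fun w => pd v f w + pd v g w := by
  funext w
  simp only [pd]
  rw [fderiv_fun_add (hf w) (hg w)]
  rfl

theorem pd_sub (hf : Differentiable ℝ f) (hg : Differentiable ℝ g) :
    pd v (fun w => f w - g w) = fun w => pd v f w - pd v g w := by
  funext w
  simp only [pd]
  rw [fderiv_fun_sub (hf w) (hg w)]
  rfl

theorem pd_const_mul (hf : Differentiable ℝ f) (c : ℝ) :
    pd v (fun w => c * f w) = fun w => c * pd v f w := by
  funext w
  simp only [pd]
  rw [fderiv_const_mul (hf w)]
  rfl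

theorem pd_mul (hf : Differentiable ℝ f) (hg : Differentiable ℝ g) :
    pd v (fun w => f w * g w) = fun w => f w * pd v g w + g w * pd v f w := by
  funext w
  simp only [pd]
  rw [fderiv_fun_mul (hf w) (hg w)]
  rfl

theorem pd_const (c : ℝ) : pd v (fun _ => c) = fun _ => 0 := by
  funext w
  simp [pd]

theorem pd_comm (hf : ContDiff ℝ 2 f) : pd v (pd v' f) = pd v' (pd v f) := by
  have key : ∀ a b w, pd a (pd b f) w = fderiv ℝ (fderiv ℝ f) w a b := by
    intro a b w
    have hd : DifferentiableAt ℝ (fderiv ℝ f) w :=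
      (hf.fderiv_right (m := 1) (by norm_num)).differentiable (by norm_num) w
    change fderiv ℝ (fun w => fderiv ℝ f w b) w a = _
    rw [fderiv_clm_apply hd (differentiableAt_const b)]
    simp
  funext w
  rw [key, key]
  exact (hf.contDiffAt.isSymmSndFDerivAt (by simp)) v v'

theorem hasDerivAt_line (hf : Differentiable ℝ f) (w v : ℝ × ℝ × ℝ) (t : ℝ) :
    HasDerivAt (fun s : ℝ => f (w + s • v)) (pd v f (w + t • v)) t := by
  have h1 : HasDerivAt (fun s : ℝ => w + s • v) v t := by
    simpa using ((hasDerivAt_id t).smul_const v).const_add w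
  exact (hf (w + t • v)).hasFDerivAt.comp_hasDerivAt t h1

theorem pd_comp_of_hasDerivAt {φ φ' : ℝ → ℝ} (hφ : ∀ t, HasDerivAt φ (φ' t) t)
    (hf : Differentiable ℝ f) :
    pd v (fun w => φ (f w)) = fun w => φ' (f w) * pd v f w := by
  funext w
  have := ((hφ (f w)).comp_hasFDerivAt w (hf w).hasFDerivAt).fderiv
  simp only [pd]
  change fderiv ℝ (φ ∘ f) w v = _
  rw [this]
  simp

theorem pd_comp_affine {τ : ℝ × ℝ × ℝ → ℝ × ℝ × ℝ} {T : ℝ × ℝ × ℝ →L[ℝ] ℝ × ℝ × ℝ}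
    (hτ : ∀ w, HasFDerivAt τ T w) (hf : Differentiable ℝ f) :
    pd v (fun w => f (τ w)) = fun w => pd (T v) f (τ w) := by
  funext w
  have := ((hf (τ w)).hasFDerivAt.comp w (hτ w)).fderiv
  simp only [pd]
  change fderiv ℝ (f ∘ τ) w v = _
  rw [this]
  simp

theorem pd_smul_dir (c : ℝ) : pd (c • v) f = fun w => c * pd v f w := by
  funext w
  simp [pd]

theorem pd_zero_dir : pd 0 f = fun _ => 0 := by
  funext w
  simp [pd]

theorem pd_snd_snd : pd v (fun w => w.2.2) = fun _ => v.2.2 := by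
  funext w
  have : HasFDerivAt (fun w : ℝ × ℝ × ℝ => w.2.2)
      ((ContinuousLinearMap.snd ℝ ℝ ℝ).comp (ContinuousLinearMap.snd ℝ ℝ (ℝ × ℝ))) w :=
    ((ContinuousLinearMap.snd ℝ ℝ ℝ).comp (ContinuousLinearMap.snd ℝ ℝ (ℝ × ℝ))).hasFDerivAt
  simp [pd, this.fderiv]

theorem pd_fst : pd v (fun w => w.1) = fun _ => v.1 := by
  funext w
  have : HasFDerivAt (fun w : ℝ × ℝ × ℝ => w.1) (ContinuousLinearMap.fst ℝ ℝ (ℝ × ℝ)) w :=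
    (ContinuousLinearMap.fst ℝ ℝ (ℝ × ℝ)).hasFDerivAt
  simp [pd, this.fderiv]

theorem pd_snd_fst : pd v (fun w => w.2.1) = fun _ => v.2.1 := by
  funext w
  have : HasFDerivAt (fun w : ℝ × ℝ × ℝ => w.2.1)
      ((ContinuousLinearMap.fst ℝ ℝ ℝ).comp (ContinuousLinearMap.snd ℝ ℝ (ℝ × ℝ))) w :=
    ((ContinuousLinearMap.fst ℝ ℝ ℝ).comp (ContinuousLinearMap.snd ℝ ℝ (ℝ × ℝ))).hasFDerivAt
  simp [pd, this.fderiv]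

/-- A function all of whose coordinate derivatives are `C^n` is `C^(n+1)`. -/
theorem contDiff_succ_of_pd {n : ℕ} (hf : Differentiable ℝ f)
    (h1 : ContDiff ℝ n (pd (1, 0, 0) f)) (h2 : ContDiff ℝ n (pd (0, 1, 0) f))
    (h3 : ContDiff ℝ n (pd (0, 0, 1) f)) : ContDiff ℝ (n + 1) f := by
  rw [contDiff_succ_iff_fderiv]
  refine ⟨hf, by simp, ?_⟩
  let P1 := ContinuousLinearMap.fst ℝ ℝ (ℝ × ℝ)
  let P2 := (ContinuousLinearMap.fst ℝ ℝ ℝ).comp (ContinuousLinearMap.snd ℝ ℝ (ℝ × ℝ))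
  let P3 := (ContinuousLinearMap.snd ℝ ℝ ℝ).comp (ContinuousLinearMap.snd ℝ ℝ (ℝ × ℝ))
  have : fderiv ℝ f = fun w => pd (1, 0, 0) f w • P1 + pd (0, 1, 0) f w • P2
      + pd (0, 0, 1) f w • P3 := by
    funext w
    ext <;> (simp [pd, P1, P2, P3]; try rfl)
  rw [this]
  exact ((h1.smul contDiff_const).add (h2.smul contDiff_const)).add (h3.smul contDiff_const)

/-- At a local maximum the first directional derivatives vanish and the second ones are
nonpositive. -/
theorem IsLocalMax.pd_eq_zero_and_pd_pd_nonpos {w : ℝ × ℝ × ℝ} (hm : IsLocalMax f w)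
    (hf : ContDiff ℝ 2 f) (v : ℝ × ℝ × ℝ) : pd v f w = 0 ∧ pd v (pd v f) w ≤ 0 := by
  have h0 : pd v f w = 0 := by simp [pd, hm.fderiv_eq_zero]
  refine ⟨h0, ?_⟩
  have hfd : Differentiable ℝ f := hf.differentiable (by norm_num)
  have hfd' : Differentiable ℝ (pd v f) :=
    (hf.pd (m := 1) (by norm_num)).differentiable (by norm_num)
  by_contra! hpos
  have hd1 : deriv (fun s : ℝ => f (w + s • v)) = fun t => pd v f (w + t • v) :=
    funext fun t => (hasDerivAt_line hfd w v t).deriv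
  have hd2 : deriv (deriv (fun s : ℝ => f (w + s • v))) 0 = pd v (pd v f) w := by
    rw [hd1]
    simpa using (hasDerivAt_line hfd' w v 0).deriv
  have hc : ContinuousAt (fun s : ℝ => w + s • v) 0 := by fun_prop
  have hmin : IsLocalMin (fun s : ℝ => f (w + s • v)) 0 := by
    refine isLocalMin_of_deriv_deriv_pos ?_ ?_ ?_
    · rw [hd2]; exact hpos
    · rw [hd1]; simpa using h0
    · exact (hasDerivAt_line hfd w v 0).continuousAt
  have hmax : IsLocalMax (fun s : ℝ => f (w + s • v)) 0 := by
    have h' : ∀ᶠ u in nhds ((fun s : ℝ => w + s • v) 0), f u ≤ f w := by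
      simp only [zero_smul, add_zero]
      exact hm
    have := hc.eventually h'
    simpa [IsLocalMax, IsMaxFilter] using this
  have heq : (fun s : ℝ => f (w + s • v)) =ᶠ[nhds 0] fun _ => f w := by
    filter_upwards [hmin, hmax] with s h1 h2
    simp only [zero_smul, add_zero] at h1 h2
    exact le_antisymm h2 h1
  have hz : deriv (deriv (fun s : ℝ => f (w + s • v))) 0 = 0 := by
    have := heq.deriv.deriv_eq
    simpa using this
  rw [hd2] at hz
  exact hpos.ne' hz

end DirectionalDerivatives

/-- The integral of `f` along the segment from `w` to `w + ε • v`. -/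
noncomputable def segInt (v : ℝ × ℝ × ℝ) (ε : ℝ) (f : ℝ × ℝ × ℝ → ℝ) (w : ℝ × ℝ × ℝ) : ℝ :=
  ∫ s in (0 : ℝ)..ε, f (w + s • v)

section SegmentIntegrals

variable {v u : ℝ × ℝ × ℝ} {ε : ℝ} {f : ℝ × ℝ × ℝ → ℝ}

theorem Continuous.segInt (hf : Continuous f) : Continuous (segInt v ε f) := by
  unfold _root_.segInt
  apply intervalIntegral.continuous_parametric_intervalIntegral_of_continuous'
  fun_prop

theorem hasFDerivAt_segInt (hf : ContDiff ℝ 1 f) (w : ℝ × ℝ × ℝ) :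
    HasFDerivAt (segInt v ε f) (∫ s in (0 : ℝ)..ε, fderiv ℝ f (w + s • v)) w := by
  have hc : Continuous f := hf.continuous
  have hc' : Continuous (fderiv ℝ f) := hf.continuous_fderiv (by norm_num)
  obtain ⟨C, hC⟩ := ((isCompact_closedBall w 1).prod (isCompact_uIcc (a := (0 : ℝ)) (b := ε))
    ).exists_bound_of_continuousOn
    (f := fun x : (ℝ × ℝ × ℝ) × ℝ => fderiv ℝ f (x.1 + x.2 • v)) (by fun_prop)
  refine intervalIntegral.hasFDerivAt_integral_of_dominated_of_fderiv_le
    (F := fun w s => f (w + s • v)) (F' := fun w s => fderiv ℝ f (w + s • v))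
    (bound := fun _ => C) (Metric.closedBall_mem_nhds w one_pos) ?_ ?_ ?_ ?_ ?_ ?_
  · exact Filter.Eventually.of_forall fun x =>
      (by fun_prop : Continuous fun s : ℝ => f (x + s • v)).aestronglyMeasurable
  · exact (by fun_prop : Continuous fun s : ℝ => f (w + s • v)).intervalIntegrable _ _
  · exact (by fun_prop : Continuous fun s : ℝ => fderiv ℝ f (w + s • v)).aestronglyMeasurable
  · exact Filter.Eventually.of_forall fun t ht x hx =>
      hC (x, t) ⟨hx, Set.uIoc_subset_uIcc ht⟩
  · exact intervalIntegrable_const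
  · refine Filter.Eventually.of_forall fun t _ x _ => ?_
    have h1 : HasFDerivAt (fun x : ℝ × ℝ × ℝ => x + t • v) (ContinuousLinearMap.id ℝ _) x :=
      (hasFDerivAt_id x).add_const _
    simpa [Function.comp_def] using ((hf.differentiable (by norm_num)) (x + t • v)).hasFDerivAt.comp x h1

theorem pd_segInt (hf : ContDiff ℝ 1 f) : pd u (segInt v ε f) = segInt v ε (pd u f) := by
  funext w
  have hc' : Continuous (fderiv ℝ f) := hf.continuous_fderiv (by norm_num)
  simp only [pd, (hasFDerivAt_segInt hf w).fderiv, segInt]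
  exact ContinuousLinearMap.intervalIntegral_apply
    ((by fun_prop : Continuous fun s : ℝ => fderiv ℝ f (w + s • v)).intervalIntegrable _ _) u

theorem pd_segInt_self (hf : ContDiff ℝ 1 f) :
    pd v (segInt v ε f) = fun w => f (w + ε • v) - f w := by
  rw [pd_segInt hf]
  funext w
  have hc : Continuous (pd v f) := (hf.pd (m := 0) (by norm_num)).continuous
  have := intervalIntegral.integral_eq_sub_of_hasDerivAt (a := 0) (b := ε)
    (fun t _ => hasDerivAt_line (hf.differentiable (by norm_num)) w v t)
    ((by fun_prop : Continuous fun s : ℝ => pd v f (w + s • v)).intervalIntegrable _ _)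
  simpa [segInt] using this

theorem ContDiff.segInt {n : ℕ} (hf : ContDiff ℝ n f) : ContDiff ℝ n (segInt v ε f) := by
  induction n generalizing f with
  | zero =>
    rw [Nat.cast_zero, contDiff_zero] at hf ⊢
    exact hf.segInt
  | succ n ih =>
    push_cast at hf ⊢
    have h1 : ContDiff ℝ 1 f := hf.of_le (by simp)
    refine contDiff_succ_of_pd (fun w => (hasFDerivAt_segInt h1 w).differentiableAt) ?_ ?_ ?_ <;>
    · rw [pd_segInt h1]
      exact ih (hf.pd le_rfl)

theorem segInt_pos (hε : 0 < ε) (hf : Continuous f) (hpos : ∀ w, 0 < f w) (w : ℝ × ℝ × ℝ) :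
    0 < segInt v ε f w :=
  intervalIntegral.intervalIntegral_pos_of_pos
    ((by fun_prop : Continuous fun s : ℝ => f (w + s • v)).intervalIntegrable _ _)
    (fun _ => hpos _) hε

theorem eq_zero_of_segInt_eq_zero {w : ℝ × ℝ × ℝ} (hf : Continuous f)
    (h : ∀ ε > 0, segInt v ε f w = 0) : f w = 0 := by
  have hg : Continuous fun s : ℝ => f (w + s • v) := by fun_prop
  have hd : HasDerivAt (fun ε => segInt v ε f w) (f w) 0 := by
    simpa [segInt] using intervalIntegral.integral_hasDerivAt_right (a := 0) (b := 0)
      (hg.intervalIntegrable _ _) (hg.stronglyMeasurableAtFilter _ _) hg.continuousAt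
  have h1 : HasDerivWithinAt (fun ε => segInt v ε f w) (f w) (Set.Ici 0) 0 :=
    hd.hasDerivWithinAt
  have h2 : HasDerivWithinAt (fun ε => segInt v ε f w) 0 (Set.Ici 0) 0 := by
    refine (hasDerivWithinAt_const (0 : ℝ) (Set.Ici 0) (0 : ℝ)).congr (fun x hx => ?_)
      (by simp [segInt])
    rcases (Set.mem_Ici.1 hx).eq_or_lt with rfl | hx
    · simp [segInt]
    · exact h x hx
  exact (uniqueDiffOn_Ici (0 : ℝ) 0 (Set.mem_Ici.2 le_rfl)).eq_deriv _ h1 h2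

end SegmentIntegrals

/-- The Laplacian with vertical drift, written with directional derivatives on `ℝ³`. -/
noncomputable def solOp (p q a : ℝ) (f : ℝ × ℝ × ℝ → ℝ) (w : ℝ × ℝ × ℝ) : ℝ :=
  (1/2) * (Real.exp (2*p*w.2.2) * pd (1, 0, 0) (pd (1, 0, 0) f) w
    + Real.exp (-(2*q*w.2.2)) * pd (0, 1, 0) (pd (0, 1, 0) f) w
    + pd (0, 0, 1) (pd (0, 0, 1) f) w) + a * pd (0, 0, 1) f w

section SolOp

variable {p q a lam : ℝ} {f g : ℝ × ℝ × ℝ → ℝ}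

theorem solLap_eq_solOp (hf : ContDiff ℝ 2 f) : solLap p q a f = solOp p q a f := by
  have hfd : Differentiable ℝ f := hf.differentiable (by norm_num)
  have hfd' : ∀ v, Differentiable ℝ (pd v f) := fun v =>
    (hf.pd (m := 1) (by norm_num)).differentiable (by norm_num)
  have d1 : ∀ {k : ℝ × ℝ × ℝ → ℝ}, Differentiable ℝ k → ∀ x y z,
      deriv (fun t => k (t, y, z)) x = pd (1, 0, 0) k (x, y, z) := by
    intro k hk x y z
    simpa using (hasDerivAt_line hk (0, y, z) (1, 0, 0) x).deriv
  have d2 : ∀ {k : ℝ × ℝ × ℝ → ℝ}, Differentiable ℝ k → ∀ x y z,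
      deriv (fun t => k (x, t, z)) y = pd (0, 1, 0) k (x, y, z) := by
    intro k hk x y z
    simpa using (hasDerivAt_line hk (x, 0, z) (0, 1, 0) y).deriv
  have d3 : ∀ {k : ℝ × ℝ × ℝ → ℝ}, Differentiable ℝ k → ∀ x y z,
      deriv (fun t => k (x, y, t)) z = pd (0, 0, 1) k (x, y, z) := by
    intro k hk x y z
    simpa using (hasDerivAt_line hk (x, y, 0) (0, 0, 1) z).deriv
  funext ⟨x, y, z⟩
  simp only [solLap, solOp, iteratedDeriv_succ, iteratedDeriv_zero]
  rw [funext fun t => d1 hfd t y z, funext fun t => d2 hfd x t z, funext fun t => d3 hfd x y t,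
    d1 (hfd' _), d2 (hfd' _), d3 (hfd' _)]

theorem solOp_add (hf : ContDiff ℝ 2 f) (hg : ContDiff ℝ 2 g) :
    solOp p q a (fun w => f w + g w) = fun w => solOp p q a f w + solOp p q a g w := by
  have h2 : ∀ {k : ℝ × ℝ × ℝ → ℝ}, ContDiff ℝ 2 k → Differentiable ℝ k := fun hk =>
    hk.differentiable (by norm_num)
  have h1 : ∀ {k : ℝ × ℝ × ℝ → ℝ}, ContDiff ℝ 2 k → ∀ v, Differentiable ℝ (pd v k) :=
    fun hk v => (hk.pd (m := 1) (by norm_num)).differentiable (by norm_num)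
  funext w
  simp only [solOp, pd_add (h2 hf) (h2 hg), pd_add (h1 hf _) (h1 hg _)]
  ring

theorem solOp_const_mul (hf : ContDiff ℝ 2 f) (c : ℝ) :
    solOp p q a (fun w => c * f w) = fun w => c * solOp p q a f w := by
  have h2 : Differentiable ℝ f := hf.differentiable (by norm_num)
  have h1 : ∀ v, Differentiable ℝ (pd v f) :=
    fun v => (hf.pd (m := 1) (by norm_num)).differentiable (by norm_num)
  funext w
  simp only [solOp, pd_const_mul h2, pd_const_mul (h1 _)]
  ring

theorem solOp_sub (hf : ContDiff ℝ 2 f) (hg : ContDiff ℝ 2 g) :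
    solOp p q a (fun w => f w - g w) = fun w => solOp p q a f w - solOp p q a g w := by
  have := solOp_add (p := p) (q := q) (a := a) hf (contDiff_const.mul hg : ContDiff ℝ 2
    fun w => (-1) * g w)
  rw [solOp_const_mul hg] at this
  simpa [sub_eq_add_neg] using this

theorem solOp_segInt {v : ℝ × ℝ × ℝ} {ε : ℝ} (hv : v.2.2 = 0) (hf : ContDiff ℝ 2 f) :
    solOp p q a (segInt v ε f) = segInt v ε (solOp p q a f) := by
  have h1 : ContDiff ℝ 1 f := hf.of_le (by norm_num)
  have h1' : ∀ u, ContDiff ℝ 1 (pd u f) := fun u => hf.pd (by norm_num)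
  have hc : ∀ u, Continuous (pd u f) := fun u => (h1' u).continuous
  have hc' : ∀ u u', Continuous (pd u (pd u' f)) := fun u u' =>
    ((h1' u').pd (m := 0) (by norm_num)).continuous
  funext w
  simp only [solOp, pd_segInt h1, pd_segInt (h1' _)]
  simp only [segInt, solOp, Prod.snd_add, Prod.smul_snd, hv, smul_zero, add_zero]
  have I1 := fun u => (by fun_prop : Continuous fun s : ℝ => pd u f (w + s • v)).intervalIntegrable
    (μ := MeasureTheory.volume) 0 ε
  have I2 := fun u => (by fun_prop : Continuous fun s : ℝ =>
    pd u (pd u f) (w + s • v)).intervalIntegrable (μ := MeasureTheory.volume) 0 ε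
  rw [intervalIntegral.integral_add ((((((I2 _).const_mul _).add ((I2 _).const_mul _)).add
      (I2 _))).const_mul _) ((I1 _).const_mul _), intervalIntegral.integral_const_mul,
    intervalIntegral.integral_const_mul, intervalIntegral.integral_add
      (((I2 _).const_mul _).add ((I2 _).const_mul _)) (I2 _),
    intervalIntegral.integral_add ((I2 _).const_mul _) ((I2 _).const_mul _),
    intervalIntegral.integral_const_mul, intervalIntegral.integral_const_mul]

/-- Integrating a `C²` eigenfunction over horizontal rectangles makes it `C³`. -/
theorem contDiff_three_segInt_segInt {ε ε' : ℝ} (hf : ContDiff ℝ 2 f)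
    (he : ∀ w, solOp p q a f w = lam * f w) :
    ContDiff ℝ 3 (segInt (0, 1, 0) ε (segInt (1, 0, 0) ε' f)) ∧
    ∀ w, solOp p q a (segInt (0, 1, 0) ε (segInt (1, 0, 0) ε' f)) w =
      lam * segInt (0, 1, 0) ε (segInt (1, 0, 0) ε' f) w := by
  have hS : ContDiff ℝ 2 (segInt (1, 0, 0) ε' f) := ContDiff.segInt (n := 2) hf
  set F := segInt (0, 1, 0) ε (segInt (1, 0, 0) ε' f) with hF
  have hF2 : ContDiff ℝ 2 F := ContDiff.segInt (n := 2) hS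
  have heq : ∀ w, solOp p q a F w = lam * F w := by
    intro w
    rw [hF, solOp_segInt rfl hS, solOp_segInt rfl hf, funext he]
    simp [segInt]
  refine ⟨?_, heq⟩
  have hS1 : ContDiff ℝ 1 (segInt (1, 0, 0) ε' f) := hS.of_le (by norm_num)
  have hf1 : ContDiff ℝ 1 f := hf.of_le (by norm_num)
  have hX : ContDiff ℝ 2 (pd (1, 0, 0) F) := by
    rw [hF, pd_segInt hS1, pd_segInt_self hf1]
    refine ContDiff.segInt (n := 2) (f := fun w => f (w + ε' • (1, 0, 0)) - f w) ?_
    exact (hf.comp (contDiff_id.add contDiff_const)).sub hf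
  have hY : ContDiff ℝ 2 (pd (0, 1, 0) F) := by
    rw [hF, pd_segInt_self hS1]
    exact (hS.comp (contDiff_id.add contDiff_const)).sub hS
  have hZ1 : ContDiff ℝ 1 (pd (0, 0, 1) F) := hF2.pd (by norm_num)
  have hZ : ContDiff ℝ 2 (pd (0, 0, 1) F) := by
    refine contDiff_succ_of_pd (n := 1) (hZ1.differentiable (by norm_num)) ?_ ?_ ?_
    · rw [pd_comm hF2]
      exact hX.pd (by norm_num)
    · rw [pd_comm hF2]
      exact hY.pd (by norm_num)
    · have hzz : pd (0, 0, 1) (pd (0, 0, 1) F) = fun w => 2 * lam * F w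
          - 2 * a * pd (0, 0, 1) F w
          - Real.exp (2*p*w.2.2) * pd (1, 0, 0) (pd (1, 0, 0) F) w
          - Real.exp (-(2*q*w.2.2)) * pd (0, 1, 0) (pd (0, 1, 0) F) w := by
        funext w
        have := heq w
        simp only [solOp] at this
        linarith
      rw [hzz]
      have hXX : ContDiff ℝ 1 (pd (1, 0, 0) (pd (1, 0, 0) F)) := hX.pd (by norm_num)
      have hYY : ContDiff ℝ 1 (pd (0, 1, 0) (pd (0, 1, 0) F)) := hY.pd (by norm_num)
      have hF1 : ContDiff ℝ 1 F := hF2.of_le (by norm_num)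
      simp only [Nat.cast_one]
      fun_prop
  exact contDiff_succ_of_pd (n := 2) (hF2.differentiable (by norm_num)) hX hY hZ

end SolOp

local notation "∂₁" => pd (1, 0, 0)
local notation "∂₂" => pd (0, 1, 0)
local notation "∂₃" => pd (0, 0, 1)

/-- The carré du champ `e^{2pz} f_x g_x + e^{-2qz} f_y g_y + f_z g_z`. -/
noncomputable def carre (p q : ℝ) (f g : ℝ × ℝ × ℝ → ℝ) (w : ℝ × ℝ × ℝ) : ℝ :=
  Real.exp (2*p*w.2.2) * (∂₁ f w * ∂₁ g w) + Real.exp (-(2*q*w.2.2)) * (∂₂ f w * ∂₂ g w)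
    + ∂₃ f w * ∂₃ g w

/-- Twice the conjugate of `Δ_a - λ` by a positive eigenfunction `exp u`. -/
noncomputable def driftOp (p q a : ℝ) (u f : ℝ × ℝ × ℝ → ℝ) (w : ℝ × ℝ × ℝ) : ℝ :=
  2 * solOp p q a f w + 2 * carre p q u f w

section CarreDuChamp

variable {p q a lam : ℝ} {u f g : ℝ × ℝ × ℝ → ℝ}

theorem ContDiff.differentiable_of_two (hf : ContDiff ℝ 2 f) : Differentiable ℝ f :=
  hf.differentiable (by norm_num)

theorem ContDiff.differentiable_pd_of_two (hf : ContDiff ℝ 2 f) (v : ℝ × ℝ × ℝ) :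
    Differentiable ℝ (_root_.pd v f) :=
  (hf.pd (m := 1) (by norm_num)).differentiable (by norm_num)

theorem ContDiff.pd_of_three (hf : ContDiff ℝ 3 f) (v : ℝ × ℝ × ℝ) : ContDiff ℝ 2 (_root_.pd v f) :=
  hf.pd (by norm_num)

theorem pd_pd_mul (hf : ContDiff ℝ 2 f) (hg : ContDiff ℝ 2 g) (v : ℝ × ℝ × ℝ) :
    pd v (pd v (fun w => f w * g w)) =
      fun w => f w * pd v (pd v g) w + g w * pd v (pd v f) w + 2 * (pd v f w * pd v g w) := by
  have f1 := hf.differentiable_of_two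
  have g1 := hg.differentiable_of_two
  have f2 := hf.differentiable_pd_of_two v
  have g2 := hg.differentiable_pd_of_two v
  rw [pd_mul f1 g1, pd_add (f1.fun_mul g2) (g1.fun_mul f2), pd_mul f1 g2, pd_mul g1 f2]
  funext w
  ring

theorem solOp_mul (hf : ContDiff ℝ 2 f) (hg : ContDiff ℝ 2 g) (w : ℝ × ℝ × ℝ) :
    solOp p q a (fun w => f w * g w) w =
      f w * solOp p q a g w + g w * solOp p q a f w + carre p q f g w := by
  simp only [solOp, carre]
  rw [pd_pd_mul hf hg (1, 0, 0), pd_pd_mul hf hg (0, 1, 0), pd_pd_mul hf hg (0, 0, 1),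
    pd_mul hf.differentiable_of_two hg.differentiable_of_two]
  ring

theorem driftOp_mul (hf : ContDiff ℝ 2 f) (hg : ContDiff ℝ 2 g) (w : ℝ × ℝ × ℝ) :
    driftOp p q a u (fun w => f w * g w) w =
      f w * driftOp p q a u g w + g w * driftOp p q a u f w + 2 * carre p q f g w := by
  simp only [driftOp, solOp_mul hf hg, carre, pd_mul hf.differentiable_of_two
    hg.differentiable_of_two]
  ring

theorem driftOp_add (hf : ContDiff ℝ 2 f) (hg : ContDiff ℝ 2 g) (w : ℝ × ℝ × ℝ) :
    driftOp p q a u (fun w => f w + g w) w = driftOp p q a u f w + driftOp p q a u g w := by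
  simp only [driftOp, solOp_add hf hg, carre, pd_add hf.differentiable_of_two
    hg.differentiable_of_two]
  ring

theorem pd_exp_height (c : ℝ) (v : ℝ × ℝ × ℝ) :
    pd v (fun w => Real.exp (c * w.2.2)) = fun w => Real.exp (c * w.2.2) * (c * v.2.2) := by
  have hd : Differentiable ℝ fun w : ℝ × ℝ × ℝ => c * w.2.2 := by fun_prop
  rw [pd_comp_of_hasDerivAt (φ := Real.exp) (φ' := Real.exp) Real.hasDerivAt_exp hd]
  rw [pd_const_mul (f := fun w : ℝ × ℝ × ℝ => w.2.2) (by fun_prop), pd_snd_snd]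

theorem contDiff_exp_height {n : WithTop ℕ∞} (c : ℝ) :
    ContDiff ℝ n (fun w : ℝ × ℝ × ℝ => Real.exp (c * w.2.2)) := by fun_prop

theorem driftOp_exp_height (c : ℝ) (w : ℝ × ℝ × ℝ) :
    driftOp p q a u (fun w => Real.exp (c * w.2.2)) w =
      Real.exp (c * w.2.2) * (c ^ 2 + 2 * a * c + 2 * c * ∂₃ u w) := by
  have hd : Differentiable ℝ fun w : ℝ × ℝ × ℝ => Real.exp (c * w.2.2) :=
    (contDiff_exp_height (n := 1) c).differentiable (by norm_num)
  simp only [driftOp, solOp, carre, pd_exp_height, mul_zero, mul_one, pd_const]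
  have : pd (0, 0, 1) (fun w : ℝ × ℝ × ℝ => Real.exp (c * w.2.2) * c)
      = fun w => c * (Real.exp (c * w.2.2) * c) := by
    rw [show (fun w : ℝ × ℝ × ℝ => Real.exp (c * w.2.2) * c) =
      fun w => c * Real.exp (c * w.2.2) from funext fun _ => mul_comm _ _, pd_const_mul hd,
      pd_exp_height]
    simp
  rw [this]
  ring

theorem carre_exp_height (c : ℝ) (w : ℝ × ℝ × ℝ) :
    carre p q (fun w => Real.exp (c * w.2.2)) f w =
      Real.exp (c * w.2.2) * c * ∂₃ f w := by
  simp only [carre, pd_exp_height, mul_zero, mul_one, zero_mul, zero_add]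

/-- The logarithmic form of the eigenvalue equation. -/
def IsLogEigen (p q a lam : ℝ) (u : ℝ × ℝ × ℝ → ℝ) : Prop :=
  ∀ w, 2 * solOp p q a u w + carre p q u u w = 2 * lam

/-- The equation satisfied by a directional derivative of the logarithm of an eigenfunction. -/
theorem driftOp_pd (hu : ContDiff ℝ 3 u) (he : IsLogEigen p q a lam u)
    (v w : ℝ × ℝ × ℝ) : driftOp p q a u (pd v u) w = v.2.2 *
      (2 * q * (Real.exp (-(2*q*w.2.2)) * (∂₂ (∂₂ u) w + ∂₂ u w * ∂₂ u w))
      - 2 * p * (Real.exp (2*p*w.2.2) * (∂₁ (∂₁ u) w + ∂₁ u w * ∂₁ u w))) := by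
  have h2 : ContDiff ℝ 2 u := hu.of_le (by norm_num)
  have huv := hu.pd_of_three
  have d1 : ∀ v, Differentiable ℝ (pd v u) := fun v => (huv v).differentiable_of_two
  have d2 : ∀ v v', Differentiable ℝ (pd v (pd v' u)) := fun v v' =>
    (huv v').differentiable_pd_of_two v
  have dE : ∀ c : ℝ, Differentiable ℝ fun w : ℝ × ℝ × ℝ => Real.exp (c * w.2.2) := fun c =>
    (contDiff_exp_height (n := 1) c).differentiable (by norm_num)
  have hEq : (fun w => Real.exp (2*p*w.2.2) * (∂₁ (∂₁ u) w + ∂₁ u w * ∂₁ u w)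
      + (Real.exp (-(2*q)*w.2.2) * (∂₂ (∂₂ u) w + ∂₂ u w * ∂₂ u w)
      + ((∂₃ (∂₃ u) w + ∂₃ u w * ∂₃ u w) + 2 * a * ∂₃ u w))) = fun _ => 2 * lam := by
    funext w
    rw [← he w]
    simp only [solOp, carre, neg_mul]
    ring
  have hD := congrArg (pd v) hEq
  have dd : ∀ v, Differentiable ℝ fun w => pd v (pd v u) w + pd v u w * pd v u w := fun v =>
    (d2 v v).fun_add ((d1 v).fun_mul (d1 v))
  rw [pd_const, pd_add ((dE _).fun_mul (dd _)) (((dE _).fun_mul (dd _)).fun_add ((dd _).fun_add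
      ((d1 _).const_mul _))), pd_add ((dE _).fun_mul (dd _)) ((dd _).fun_add ((d1 _).const_mul _)),
    pd_add (dd _) ((d1 _).const_mul _), pd_mul (dE _) (dd _), pd_mul (dE _) (dd _),
    pd_const_mul (d1 _), pd_exp_height, pd_exp_height, pd_add (d2 _ _) ((d1 _).fun_mul (d1 _)),
    pd_add (d2 _ _) ((d1 _).fun_mul (d1 _)), pd_add (d2 _ _) ((d1 _).fun_mul (d1 _)), pd_mul (d1 _) (d1 _),
    pd_mul (d1 _) (d1 _), pd_mul (d1 _) (d1 _), pd_comm (huv (1, 0, 0)), pd_comm (huv (0, 1, 0)),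
    pd_comm (huv (0, 0, 1)), pd_comm (v' := (1, 0, 0)) h2, pd_comm (v' := (0, 1, 0)) h2,
    pd_comm (v' := (0, 0, 1)) h2] at hD
  have := congrFun hD w
  simp only [neg_mul] at this
  simp only [driftOp, solOp, carre]
  linarith

end CarreDuChamp

section Bochner

variable {p q a lam : ℝ} {u f g : ℝ × ℝ × ℝ → ℝ}

theorem contDiff_carre_self (hu : ContDiff ℝ 3 u) : ContDiff ℝ 2 (carre p q u u) := by
  have h1 := hu.pd_of_three (1, 0, 0)
  have h2 := hu.pd_of_three (0, 1, 0)
  have h3 := hu.pd_of_three (0, 0, 1)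
  unfold carre
  fun_prop

/-- Bochner's formula for the squared gradient of the logarithm of an eigenfunction. -/
theorem driftOp_carre_self (hu : ContDiff ℝ 3 u) (he : IsLogEigen p q a lam u)
    (w : ℝ × ℝ × ℝ) : driftOp p q a u (carre p q u u) w =
      2 * (Real.exp (2*p*w.2.2) ^ 2 * ∂₁ (∂₁ u) w ^ 2
        + Real.exp (-(2*q*w.2.2)) ^ 2 * ∂₂ (∂₂ u) w ^ 2 + ∂₃ (∂₃ u) w ^ 2
        + 2 * Real.exp (2*p*w.2.2) * Real.exp (-(2*q*w.2.2)) * ∂₁ (∂₂ u) w ^ 2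
        + 2 * Real.exp (2*p*w.2.2) * ∂₁ (∂₃ u) w ^ 2
        + 2 * Real.exp (-(2*q*w.2.2)) * ∂₂ (∂₃ u) w ^ 2)
      + (4*p^2 + 4*p*a) * (Real.exp (2*p*w.2.2) * ∂₁ u w ^ 2)
      + (4*q^2 - 4*q*a) * (Real.exp (-(2*q*w.2.2)) * ∂₂ u w ^ 2)
      + 8 * p * Real.exp (2*p*w.2.2) * ∂₁ u w * ∂₁ (∂₃ u) w
      - 8 * q * Real.exp (-(2*q*w.2.2)) * ∂₂ u w * ∂₂ (∂₃ u) w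
      - 4 * p * ∂₃ u w * Real.exp (2*p*w.2.2) * ∂₁ (∂₁ u) w
      + 4 * q * ∂₃ u w * Real.exp (-(2*q*w.2.2)) * ∂₂ (∂₂ u) w := by
  have h2 : ContDiff ℝ 2 u := hu.of_le (by norm_num)
  have c := hu.pd_of_three
  have cE : ∀ c : ℝ, ContDiff ℝ 2 fun w : ℝ × ℝ × ℝ => Real.exp (c * w.2.2) :=
    contDiff_exp_height
  have hcar : carre p q u u = fun w => (Real.exp (2*p*w.2.2) * (∂₁ u w * ∂₁ u w)
      + Real.exp (-(2*q)*w.2.2) * (∂₂ u w * ∂₂ u w)) + ∂₃ u w * ∂₃ u w := by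
    funext w
    simp only [carre, neg_mul]
  have m := fun v => (c v).mul (c v)
  rw [hcar, driftOp_add (((cE _).mul (m _)).add ((cE _).mul (m _))) (m _),
    driftOp_add ((cE _).mul (m _)) ((cE _).mul (m _)), driftOp_mul (cE _) (m _),
    driftOp_mul (cE _) (m _), driftOp_mul (c _) (c _), driftOp_mul (c _) (c _),
    driftOp_mul (c _) (c _), driftOp_pd hu he, driftOp_pd hu he, driftOp_pd hu he,
    driftOp_exp_height, driftOp_exp_height, carre_exp_height, carre_exp_height,
    pd_mul (c _).differentiable_of_two (c _).differentiable_of_two,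
    pd_mul (c _).differentiable_of_two (c _).differentiable_of_two]
  simp only [carre, neg_mul]
  rw [pd_comm (v := (0, 0, 1)) (v' := (1, 0, 0)) h2, pd_comm (v := (0, 0, 1)) (v' := (0, 1, 0)) h2,
    pd_comm (v := (0, 1, 0)) (v' := (1, 0, 0)) h2]
  ring

theorem bochner_quadratic_lower_bound (p q a X₁ X₂ X₃ X₁₁ X₂₂ X₃₃ X₁₂ X₁₃ X₂₃ : ℝ) :
    X₁₁^2 + X₂₂^2 + X₃₃^2 - (8*p^2 + 8*q^2 + 4*|p*a| + 4*|q*a|) * (X₁^2 + X₂^2 + X₃^2) ≤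
      2 * (X₁₁^2 + X₂₂^2 + X₃₃^2 + 2 * X₁₂^2 + 2 * X₁₃^2 + 2 * X₂₃^2)
      + (4*p^2 + 4*p*a) * X₁^2 + (4*q^2 - 4*q*a) * X₂^2 + 8 * p * X₁ * X₁₃ - 8 * q * X₂ * X₂₃
      - 4 * p * X₃ * X₁₁ + 4 * q * X₃ * X₂₂ := by
  have h1 : 0 ≤ (4 * (p * a) + 4 * |p * a|) * X₁^2 :=
    mul_nonneg (by linarith [neg_abs_le (p * a)]) (sq_nonneg _)
  have h2 : 0 ≤ (4 * |q * a| - 4 * (q * a)) * X₂^2 :=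
    mul_nonneg (by linarith [le_abs_self (q * a)]) (sq_nonneg _)
  have h3 : 0 ≤ 4 * (p * X₁ + X₁₃)^2 + 4 * (q * X₂ - X₂₃)^2
      + (X₁₁ - 2 * p * X₃)^2 + (X₂₂ + 2 * q * X₃)^2 + X₃₃^2 + 4 * X₁₂^2
      + (4 * (p * a) + 4 * |p * a|) * X₁^2 + (4 * |q * a| - 4 * (q * a)) * X₂^2
      + 4 * (|p * a| * (X₂^2 + X₃^2)) + 4 * (|q * a| * (X₁^2 + X₃^2))
      + (8*p^2 + 8*q^2) * (X₁^2 + X₂^2) + 4 * ((p^2 + q^2) * X₃^2) := by positivity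
  linarith

theorem trace_lower_bound {a lam X₁ X₂ X₃ X₁₁ X₂₂ X₃₃ : ℝ}
    (heq : X₁₁ + X₂₂ + X₃₃ + 2 * a * X₃ + (X₁^2 + X₂^2 + X₃^2) = 2 * lam) :
    (X₁^2 + X₂^2 + X₃^2)^2 / 24 - 4/3 * (a^2 + |lam|)^2 ≤ X₁₁^2 + X₂₂^2 + X₃₃^2 := by
  have hcs : (X₁₁ + X₂₂ + X₃₃)^2 ≤ 3 * (X₁₁^2 + X₂₂^2 + X₃₃^2) := by
    linarith [sq_nonneg (X₁₁ - X₂₂), sq_nonneg (X₁₁ - X₃₃), sq_nonneg (X₂₂ - X₃₃)]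
  have ht : (X₁^2 + X₂^2 + X₃^2) / 2 - 2 * (a^2 + |lam|) ≤ -(X₁₁ + X₂₂ + X₃₃) := by
    linarith [sq_nonneg (X₃ + 2 * a), sq_nonneg X₁, sq_nonneg X₂, le_abs_self lam]
  have hW0 : 0 ≤ X₁^2 + X₂^2 + X₃^2 := by positivity
  have hs0 : 0 ≤ a^2 + |lam| := by positivity
  generalize X₁^2 + X₂^2 + X₃^2 = W at *
  generalize a^2 + |lam| = s at *
  generalize X₁₁ + X₂₂ + X₃₃ = t at *
  clear heq
  have : W^2 / 8 - 4 * s^2 ≤ t^2 := by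
    rcases le_total (2 * s) (W / 2) with h | h
    · have := mul_self_le_mul_self (sub_nonneg.2 h) ht
      linarith [sq_nonneg (W - 8 * s)]
    · have := mul_self_le_mul_self (by positivity) h
      linarith [sq_nonneg t, sq_nonneg s]
  linarith

theorem le_of_quadratic_bounds {C E s η W : ℝ} (hC : 0 ≤ C) (hE : 0 ≤ E) (hW : 0 ≤ W)
    (hη : 0 < η) (hη1 : η ≤ 1)
    (hmain : η^2 * (W^2 / 48 - 4/3 * s^2 - C * W) ≤ E * W) :
    η^2 * W ≤ 48 * (C + E) + 16 * s^2 + 1 := by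
  have hη2 : 0 < η^2 := by positivity
  have hη21 : η^2 ≤ 1 := pow_le_one₀ hη.le hη1
  have hη41 : η^4 ≤ 1 := pow_le_one₀ hη.le hη1
  have hΦ : (η^2 * W)^2 ≤ 64 * s^2 + 48 * (C + E) * (η^2 * W) := by
    have h1 := mul_le_mul_of_nonneg_left hmain hη2.le
    have h2 := mul_le_mul_of_nonneg_right hη41 (sq_nonneg s)
    have h3 := mul_le_mul_of_nonneg_right hη21 (by positivity : 0 ≤ C * (η^2 * W))
    linarith
  have hΦ0 : 0 ≤ η^2 * W := by positivity
  generalize η^2 * W = Φ at *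
  by_contra! hlt
  have hT : 0 ≤ (16 * s^2 + 1)^2 - 64 * s^2 := by
    have : (16 * s^2 + 1)^2 - 64 * s^2 = (16 * s^2 - 1)^2 := by ring
    rw [this]; positivity
  have h1 : (48 * (C + E) + (16 * s^2 + 1)) * Φ < Φ * Φ :=
    mul_lt_mul_of_pos_right (by linarith) (by nlinarith [sq_nonneg s])
  have h2 : (16 * s^2 + 1) * (16 * s^2 + 1) ≤ (16 * s^2 + 1) * Φ :=
    mul_le_mul_of_nonneg_left (by linarith) (by positivity)
  linarith

/-- The algebraic part of the local gradient estimate: an inequality holding at a maximum of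
`η² |∇u|²`. -/
theorem le_of_bochner {p q a lam M η W Γ D X₁ X₂ X₃ X₁₁ X₂₂ X₃₃ X₁₂ X₁₃ X₂₃ : ℝ}
    (hη : 0 < η) (hη1 : η ≤ 1) (hW : W = X₁^2 + X₂^2 + X₃^2) (hM : 0 ≤ M)
    (heq : X₁₁ + X₂₂ + X₃₃ + 2 * a * X₃ + W = 2 * lam)
    (hΓ : Γ ≤ 4 * M) (hD : -(4 * M + 8 * |a|) - 1/48 * η^2 * W - 192 * Γ ≤ 2 * η * D)
    (hmax : η^2 * (2 * (X₁₁^2 + X₂₂^2 + X₃₃^2 + 2 * X₁₂^2 + 2 * X₁₃^2 + 2 * X₂₃^2)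
      + (4*p^2 + 4*p*a) * X₁^2 + (4*q^2 - 4*q*a) * X₂^2 + 8 * p * X₁ * X₁₃ - 8 * q * X₂ * X₂₃
      - 4 * p * X₃ * X₁₁ + 4 * q * X₃ * X₂₂) + 2 * η * W * D - 6 * W * Γ ≤ 0) :
    η^2 * W ≤ 48 * ((8*p^2 + 8*q^2 + 4*|p*a| + 4*|q*a|) + (796 * M + 8 * |a|))
      + 16 * (a^2 + |lam|)^2 + 1 := by
  have hW0 : 0 ≤ W := by rw [hW]; positivity
  have hB := bochner_quadratic_lower_bound p q a X₁ X₂ X₃ X₁₁ X₂₂ X₃₃ X₁₂ X₁₃ X₂₃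
  have hT := trace_lower_bound (hW ▸ heq)
  rw [← hW] at hB hT
  refine le_of_quadratic_bounds (by positivity) (by positivity) hW0 hη hη1 ?_
  have h1 := mul_le_mul_of_nonneg_left (hB.trans' (sub_le_sub_right hT _)) (sq_nonneg η)
  have h2 := mul_le_mul_of_nonneg_left hD hW0
  have h3 := mul_le_mul_of_nonneg_left hΓ hW0
  linarith

end Bochner

section LocalGradientEstimate

variable {p q a lam : ℝ} {u f g : ℝ × ℝ × ℝ → ℝ}

/-- The cutoff function `1 - x² - y² - z²`. -/
def cutoff (w : ℝ × ℝ × ℝ) : ℝ := 1 - (w.1 * w.1 + (w.2.1 * w.2.1 + w.2.2 * w.2.2))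

theorem contDiff_cutoff {n : WithTop ℕ∞} : ContDiff ℝ n cutoff := by
  unfold cutoff
  fun_prop

theorem pd_cutoff (v : ℝ × ℝ × ℝ) : pd v cutoff =
    fun w => -2 * (w.1 * v.1 + (w.2.1 * v.2.1 + w.2.2 * v.2.2)) := by
  have d1 : Differentiable ℝ fun w : ℝ × ℝ × ℝ => w.1 := by fun_prop
  have d2 : Differentiable ℝ fun w : ℝ × ℝ × ℝ => w.2.1 := by fun_prop
  have d3 : Differentiable ℝ fun w : ℝ × ℝ × ℝ => w.2.2 := by fun_prop
  unfold cutoff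
  rw [pd_sub (by fun_prop) (by fun_prop), pd_const,
    pd_add (f := fun w => w.1 * w.1) (g := fun w => w.2.1 * w.2.1 + w.2.2 * w.2.2)
      (by fun_prop) (by fun_prop),
    pd_add (f := fun w => w.2.1 * w.2.1) (g := fun w => w.2.2 * w.2.2)
      (by fun_prop) (by fun_prop), pd_mul d1 d1, pd_mul d2 d2, pd_mul d3 d3, pd_fst,
    pd_snd_fst, pd_snd_snd]
  funext w
  ring

theorem pd_pd_cutoff (v : ℝ × ℝ × ℝ) : pd v (pd v cutoff) =
    fun _ => -2 * (v.1 * v.1 + (v.2.1 * v.2.1 + v.2.2 * v.2.2)) := by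
  have hlin : (fun w : ℝ × ℝ × ℝ => -2 * (w.1 * v.1 + (w.2.1 * v.2.1 + w.2.2 * v.2.2))) =
      fun w => (-2 * v.1) * w.1 + ((-2 * v.2.1) * w.2.1 + (-2 * v.2.2) * w.2.2) := by
    funext w
    ring
  rw [pd_cutoff, hlin,
    pd_add (f := fun w => (-2 * v.1) * w.1)
      (g := fun w => (-2 * v.2.1) * w.2.1 + (-2 * v.2.2) * w.2.2) (by fun_prop) (by fun_prop),
    pd_add (f := fun w => (-2 * v.2.1) * w.2.1) (g := fun w => (-2 * v.2.2) * w.2.2)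
      (by fun_prop) (by fun_prop), pd_const_mul (f := fun w => w.1) (by fun_prop),
    pd_const_mul (f := fun w => w.2.1) (by fun_prop),
    pd_const_mul (f := fun w => w.2.2) (by fun_prop), pd_fst, pd_snd_fst, pd_snd_snd]
  funext w
  ring

theorem driftOp_nonpos_of_isLocalMax {w : ℝ × ℝ × ℝ} (hf : ContDiff ℝ 2 f)
    (hm : IsLocalMax f w) : driftOp p q a u f w ≤ 0 := by
  have h := fun v => hm.pd_eq_zero_and_pd_pd_nonpos hf v
  simp only [driftOp, solOp, carre, (h _).1]
  have h1 := mul_nonpos_of_nonneg_of_nonpos (Real.exp_pos (2*p*w.2.2)).le (h (1, 0, 0)).2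
  have h2 := mul_nonpos_of_nonneg_of_nonpos (Real.exp_pos (-(2*q*w.2.2))).le (h (0, 1, 0)).2
  have h3 := (h (0, 0, 1)).2
  linarith

/-- The inequality at a local maximum of `η² W`. -/
theorem driftOp_le_of_isLocalMax_mul {η W : ℝ × ℝ × ℝ → ℝ} {w : ℝ × ℝ × ℝ}
    (hη : ContDiff ℝ 2 η) (hW : ContDiff ℝ 2 W) (hpos : η w ≠ 0)
    (hm : IsLocalMax (fun w => (η w * η w) * W w) w) :
    η w ^ 2 * driftOp p q a u W w + 2 * η w * W w * driftOp p q a u η w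
      - 6 * W w * carre p q η η w ≤ 0 := by
  have hηη := hη.mul hη
  have h1 := driftOp_nonpos_of_isLocalMax (p := p) (q := q) (a := a) (u := u) (hηη.mul hW) hm
  rw [driftOp_mul hηη hW, driftOp_mul hη hη] at h1
  have hgrad : ∀ v, η w * pd v W w = -2 * W w * pd v η w := by
    intro v
    have := (hm.pd_eq_zero_and_pd_pd_nonpos (hηη.mul hW) v).1
    rw [pd_mul hηη.differentiable_of_two hW.differentiable_of_two,
      pd_mul hη.differentiable_of_two hη.differentiable_of_two] at this
    apply mul_left_cancel₀ hpos
    linarith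
  have hcar : carre p q (fun w => η w * η w) W w = -4 * W w * carre p q η η w := by
    have e : ∀ v, pd v (fun w => η w * η w) w * pd v W w = -4 * W w * (pd v η w * pd v η w) := by
      intro v
      rw [pd_mul hη.differentiable_of_two hη.differentiable_of_two]
      linear_combination 2 * pd v η w * hgrad v
    simp only [carre, e]
    ring
  rw [hcar] at h1
  linarith

theorem isCompact_cutoff_nonneg : IsCompact {w : ℝ × ℝ × ℝ | 0 ≤ cutoff w} := by
  refine (isCompact_closedBall (0 : ℝ × ℝ × ℝ) 1).of_isClosed_subset
    (isClosed_le continuous_const (contDiff_cutoff (n := 0)).continuous) fun w hw => ?_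
  have hw' : 0 ≤ 1 - (w.1 * w.1 + (w.2.1 * w.2.1 + w.2.2 * w.2.2)) := hw
  simp only [Metric.mem_closedBall, dist_zero_right, Prod.norm_def, Real.norm_eq_abs,
    sup_le_iff, abs_le]
  refine ⟨⟨?_, ?_⟩, ⟨?_, ?_⟩, ?_, ?_⟩ <;> nlinarith

section CutoffBounds

variable {x y z : ℝ}

theorem carre_cutoff_le (hx : x * x ≤ 1) (hy : y * y ≤ 1) (hz : z * z ≤ 1)
    (hA₁ : Real.exp (2 * p * z) ≤ Real.exp (2 * p))
    (hA₂ : Real.exp (-(2 * q * z)) ≤ Real.exp (2 * q)) :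
    carre p q cutoff cutoff (x, y, z) ≤ 4 * (Real.exp (2 * p) + Real.exp (2 * q) + 1) := by
  simp only [carre, pd_cutoff]
  have k1 : Real.exp (2 * p * z) * (x * x) ≤ Real.exp (2 * p) * 1 :=
    mul_le_mul hA₁ hx (mul_self_nonneg _) (Real.exp_pos _).le
  have k2 : Real.exp (-(2 * q * z)) * (y * y) ≤ Real.exp (2 * q) * 1 :=
    mul_le_mul hA₂ hy (mul_self_nonneg _) (Real.exp_pos _).le
  linarith

theorem mul_driftOp_cutoff_ge (hpos : 0 ≤ cutoff (x, y, z)) (hle : cutoff (x, y, z) ≤ 1)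
    (hz : |z| ≤ 1) (hA₁ : Real.exp (2 * p * z) ≤ Real.exp (2 * p))
    (hA₂ : Real.exp (-(2 * q * z)) ≤ Real.exp (2 * q)) :
    -(4 * (Real.exp (2 * p) + Real.exp (2 * q) + 1 + 2 * |a|))
      - 1/48 * cutoff (x, y, z) ^ 2 * carre p q u u (x, y, z)
      - 192 * carre p q cutoff cutoff (x, y, z) ≤
    2 * cutoff (x, y, z) * driftOp p q a u cutoff (x, y, z) := by
  have hD : 2 * cutoff (x, y, z) * driftOp p q a u cutoff (x, y, z) =
      -(4 * cutoff (x, y, z) * (Real.exp (2 * p * z) + Real.exp (-(2 * q * z)) + 1 + 2 * a * z))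
      + 4 * cutoff (x, y, z) * carre p q u cutoff (x, y, z) := by
    simp only [driftOp, solOp, pd_pd_cutoff]
    simp only [pd_cutoff]
    ring
  rw [hD]
  have key : ∀ A s t e : ℝ, 0 ≤ A →
      -(1/48 * e^2 * (A * (s * s))) - 192 * (A * (t * t)) ≤ 4 * e * (A * (s * t)) := by
    intro A s t e hA
    have := mul_nonneg hA (sq_nonneg (e * s + 96 * t))
    linarith
  have k1 := key _ (∂₁ u (x, y, z)) (∂₁ cutoff (x, y, z)) (cutoff (x, y, z))
    (Real.exp_pos (2 * p * z)).le
  have k2 := key _ (∂₂ u (x, y, z)) (∂₂ cutoff (x, y, z)) (cutoff (x, y, z))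
    (Real.exp_pos (-(2 * q * z))).le
  have k3 := key 1 (∂₃ u (x, y, z)) (∂₃ cutoff (x, y, z)) (cutoff (x, y, z)) zero_le_one
  have k4 : -(1/48 * cutoff (x, y, z)^2 * carre p q u u (x, y, z))
      - 192 * carre p q cutoff cutoff (x, y, z) ≤
      4 * cutoff (x, y, z) * carre p q u cutoff (x, y, z) := by
    simp only [carre]
    linarith
  have k5 : a * z ≤ |a| := by
    calc a * z ≤ |a * z| := le_abs_self _
      _ = |a| * |z| := abs_mul _ _
      _ ≤ |a| * 1 := by gcongr
      _ = |a| := mul_one _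
  have k6 : cutoff (x, y, z) * (Real.exp (2 * p * z) + Real.exp (-(2 * q * z)) + 1 + 2 * a * z)
      ≤ 1 * (Real.exp (2 * p) + Real.exp (2 * q) + 1 + 2 * |a|) := by
    have : Real.exp (2 * p * z) + Real.exp (-(2 * q * z)) + 1 + 2 * a * z ≤
        Real.exp (2 * p) + Real.exp (2 * q) + 1 + 2 * |a| := by
      linarith
    exact (mul_le_mul_of_nonneg_left this hpos).trans
      (mul_le_mul_of_nonneg_right hle (by positivity))
  linarith

set_option maxHeartbeats 800000 in
theorem cutoff_sq_mul_carre_le_of_isLocalMax (hp : 0 < p) (hq : 0 < q) (hu : ContDiff ℝ 3 u)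
    (he : IsLogEigen p q a lam u) (hpos : 0 < cutoff (x, y, z))
    (hloc : IsLocalMax (fun w => (cutoff w * cutoff w) * carre p q u u w) (x, y, z)) :
    cutoff (x, y, z) ^ 2 * carre p q u u (x, y, z) ≤
      48 * ((8*p^2 + 8*q^2 + 4*|p*a| + 4*|q*a|)
        + (796 * (Real.exp (2 * p) + Real.exp (2 * q) + 1) + 8 * |a|))
      + 16 * (a^2 + |lam|)^2 + 1 := by
  have hineq := driftOp_le_of_isLocalMax_mul (p := p) (q := q) (a := a) (u := u)
    contDiff_cutoff (contDiff_carre_self hu) hpos.ne' hloc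
  rw [driftOp_carre_self hu he] at hineq
  have heqm := he (x, y, z)
  have hball : 0 < 1 - (x * x + (y * y + z * z)) := hpos
  have hx2 : x * x ≤ 1 := by nlinarith [mul_self_nonneg y, mul_self_nonneg z]
  have hy2 : y * y ≤ 1 := by nlinarith [mul_self_nonneg x, mul_self_nonneg z]
  have hz2 : z * z ≤ 1 := by nlinarith [mul_self_nonneg y, mul_self_nonneg x]
  have hz1 : |z| ≤ 1 := abs_le.2 ⟨by nlinarith, by nlinarith⟩
  have hb1 : Real.exp (2 * p * z) = Real.exp (p * z) ^ 2 := by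
    rw [← Real.exp_nat_mul]; congr 1; push_cast; ring
  have hb2 : Real.exp (-(2 * q * z)) = Real.exp (-(q * z)) ^ 2 := by
    rw [← Real.exp_nat_mul]; congr 1; push_cast; ring
  have hA1 : Real.exp (2 * p * z) ≤ Real.exp (2 * p) :=
    Real.exp_le_exp.2 (by nlinarith [(abs_le.1 hz1).2])
  have hA2 : Real.exp (-(2 * q * z)) ≤ Real.exp (2 * q) :=
    Real.exp_le_exp.2 (by nlinarith [(abs_le.1 hz1).1])
  have hη1 : cutoff (x, y, z) ≤ 1 := by
    have : cutoff (x, y, z) = 1 - (x * x + (y * y + z * z)) := rfl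
    linarith [mul_self_nonneg y, mul_self_nonneg x, mul_self_nonneg z]
  have hΓ := carre_cutoff_le hx2 hy2 hz2 hA1 hA2
  have hD := mul_driftOp_cutoff_ge (a := a) (u := u) hpos.le hη1 hz1 hA1 hA2
  refine le_of_bochner (p := p) (q := q) (a := a) (lam := lam)
    (Γ := carre p q cutoff cutoff (x, y, z))
    (D := driftOp p q a u cutoff (x, y, z))
    (X₁ := Real.exp (p * z) * ∂₁ u (x, y, z)) (X₂ := Real.exp (-(q * z)) * ∂₂ u (x, y, z))
    (X₃ := ∂₃ u (x, y, z)) (X₁₁ := Real.exp (p * z) ^ 2 * ∂₁ (∂₁ u) (x, y, z))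
    (X₂₂ := Real.exp (-(q * z)) ^ 2 * ∂₂ (∂₂ u) (x, y, z)) (X₃₃ := ∂₃ (∂₃ u) (x, y, z))
    (X₁₂ := Real.exp (p * z) * Real.exp (-(q * z)) * ∂₁ (∂₂ u) (x, y, z))
    (X₁₃ := Real.exp (p * z) * ∂₁ (∂₃ u) (x, y, z))
    (X₂₃ := Real.exp (-(q * z)) * ∂₂ (∂₃ u) (x, y, z))
    hpos hη1 ?_ (by positivity) ?_ hΓ ?_ ?_
  · simp only [carre, hb1, hb2]
    ring
  · simp only [solOp, carre, hb1, hb2] at heqm ⊢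
    linarith
  · linarith
  · simp only [hb1, hb2] at hineq
    refine le_of_eq_of_le ?_ hineq
    ring

end CutoffBounds

theorem exists_carre_log_bound (hp : 0 < p) (hq : 0 < q) (a lam : ℝ) :
    ∃ C, ∀ u, ContDiff ℝ 3 u → IsLogEigen p q a lam u → carre p q u u 0 ≤ C := by
  refine ⟨48 * ((8*p^2 + 8*q^2 + 4*|p*a| + 4*|q*a|)
      + (796 * (Real.exp (2 * p) + Real.exp (2 * q) + 1) + 8 * |a|))
      + 16 * (a^2 + |lam|)^2 + 1, fun u hu he => ?_⟩
  have hηc : Continuous cutoff := (contDiff_cutoff (n := 0)).continuous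
  have hWc : Continuous (carre p q u u) := (contDiff_carre_self hu).continuous
  have h0 : (0 : ℝ × ℝ × ℝ) ∈ {w : ℝ × ℝ × ℝ | 0 ≤ cutoff w} := by simp [cutoff]
  obtain ⟨m, hmK, hmax⟩ := isCompact_cutoff_nonneg.exists_isMaxOn ⟨0, h0⟩
    (f := fun w => (cutoff w * cutoff w) * carre p q u u w) (by fun_prop)
  have hm0 : carre p q u u 0 ≤ (cutoff m * cutoff m) * carre p q u u m := by
    simpa [cutoff] using hmax h0
  refine hm0.trans ?_
  have hmK' : 0 ≤ cutoff m := hmK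
  rw [← sq]
  rcases hmK'.eq_or_lt with hz | hpos
  · rw [← hz, zero_pow two_ne_zero, zero_mul]
    positivity
  · have hloc : IsLocalMax (fun w => (cutoff w * cutoff w) * carre p q u u w) m := by
      refine hmax.isLocalMax ?_
      filter_upwards [(isOpen_lt continuous_const hηc).mem_nhds hpos] with w hw
      exact le_of_lt hw
    exact cutoff_sq_mul_carre_le_of_isLocalMax hp hq hu he hpos hloc

end LocalGradientEstimate

section PointwiseGradientEstimate

variable {p q a lam : ℝ} {u h : ℝ × ℝ × ℝ → ℝ}

theorem pd_exp_comp (hu : Differentiable ℝ u) (v : ℝ × ℝ × ℝ) :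
    pd v (fun w => Real.exp (u w)) = fun w => Real.exp (u w) * pd v u w :=
  pd_comp_of_hasDerivAt (φ := Real.exp) (φ' := Real.exp) Real.hasDerivAt_exp hu

theorem solOp_exp_comp (hu : ContDiff ℝ 2 u) (w : ℝ × ℝ × ℝ) :
    solOp p q a (fun w => Real.exp (u w)) w =
      Real.exp (u w) * (solOp p q a u w + 1/2 * carre p q u u w) := by
  have hd := hu.differentiable_of_two
  have hE : Differentiable ℝ fun w => Real.exp (u w) := by fun_prop
  simp only [solOp, carre, pd_exp_comp hd, pd_mul hE (hu.differentiable_pd_of_two _)]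
  ring

theorem isLogEigen_log (hh : ContDiff ℝ 3 h) (hpos : ∀ w, 0 < h w)
    (he : ∀ w, solOp p q a h w = lam * h w) :
    ContDiff ℝ 3 (fun w => Real.log (h w)) ∧ IsLogEigen p q a lam (fun w => Real.log (h w)) := by
  have hu : ContDiff ℝ 3 (fun w => Real.log (h w)) := hh.log fun w => (hpos w).ne'
  refine ⟨hu, fun w => ?_⟩
  have hexp : (fun w => Real.exp (Real.log (h w))) = h := funext fun w => Real.exp_log (hpos w)
  have := solOp_exp_comp (p := p) (q := q) (a := a) (hu.of_le (by norm_num)) w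
  rw [hexp, he, Real.exp_log (hpos w), mul_comm] at this
  have := mul_left_cancel₀ (hpos w).ne' this
  linarith

/-- Left multiplication by the group element `(b.1, b.2.1, b.2.2)` of `Sol(p,q)`. -/
noncomputable def leftMul (p q : ℝ) (b w : ℝ × ℝ × ℝ) : ℝ × ℝ × ℝ :=
  (Real.exp (p * b.2.2) * w.1 + b.1, Real.exp (-(q * b.2.2)) * w.2.1 + b.2.1, w.2.2 + b.2.2)

theorem contDiff_leftMul {n : WithTop ℕ∞} (b : ℝ × ℝ × ℝ) : ContDiff ℝ n (leftMul p q b) := by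
  unfold leftMul
  fun_prop

theorem pd_comp_leftMul (hh : Differentiable ℝ h) (b : ℝ × ℝ × ℝ) :
    (∂₁ (fun w => h (leftMul p q b w)) =
      fun w => Real.exp (p * b.2.2) * ∂₁ h (leftMul p q b w)) ∧
    (∂₂ (fun w => h (leftMul p q b w)) =
      fun w => Real.exp (-(q * b.2.2)) * ∂₂ h (leftMul p q b w)) ∧
    ∂₃ (fun w => h (leftMul p q b w)) = fun w => ∂₃ h (leftMul p q b w) := by
  let P1 := ContinuousLinearMap.fst ℝ ℝ (ℝ × ℝ)
  let P2 := (ContinuousLinearMap.fst ℝ ℝ ℝ).comp (ContinuousLinearMap.snd ℝ ℝ (ℝ × ℝ))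
  let P3 := (ContinuousLinearMap.snd ℝ ℝ ℝ).comp (ContinuousLinearMap.snd ℝ ℝ (ℝ × ℝ))
  let T : ℝ × ℝ × ℝ →L[ℝ] ℝ × ℝ × ℝ :=
    (Real.exp (p * b.2.2) • P1).prod ((Real.exp (-(q * b.2.2)) • P2).prod P3)
  have hτ : ∀ w, HasFDerivAt (leftMul p q b) T w := fun w => T.hasFDerivAt.add_const b
  have e1 : T (1, 0, 0) = Real.exp (p * b.2.2) • (1, 0, 0) := by
    simp [T, P1, P2, P3]
  have e2 : T (0, 1, 0) = Real.exp (-(q * b.2.2)) • (0, 1, 0) := by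
    simp [T, P1, P2, P3]
  have e3 : T (0, 0, 1) = (0, 0, 1) := by
    simp [T, P1, P2, P3]
  refine ⟨?_, ?_, ?_⟩
  · rw [pd_comp_affine hτ hh, e1, pd_smul_dir]
  · rw [pd_comp_affine hτ hh, e2, pd_smul_dir]
  · rw [pd_comp_affine hτ hh, e3]

theorem solOp_comp_leftMul (hh : ContDiff ℝ 2 h) (b w : ℝ × ℝ × ℝ) :
    solOp p q a (fun w => h (leftMul p q b w)) w = solOp p q a h (leftMul p q b w) := by
  have h0 := pd_comp_leftMul (p := p) (q := q) hh.differentiable_of_two b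
  have h1 := fun v => pd_comp_leftMul (p := p) (q := q) (hh.differentiable_pd_of_two v) b
  have hd : ∀ v, Differentiable ℝ fun w => pd v h (leftMul p q b w) := fun v =>
    (hh.differentiable_pd_of_two v).comp
      ((contDiff_leftMul (n := 1) b).differentiable (by norm_num))
  simp only [solOp, h0.1, h0.2.1, h0.2.2, pd_const_mul (hd _), (h1 _).1, (h1 _).2.1, (h1 _).2.2]
  have k1 : Real.exp (2 * p * (leftMul p q b w).2.2) =
      Real.exp (2 * p * w.2.2) * (Real.exp (p * b.2.2) * Real.exp (p * b.2.2)) := by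
    simp only [leftMul, ← Real.exp_add]
    congr 1
    ring
  have k2 : Real.exp (-(2 * q * (leftMul p q b w).2.2)) =
      Real.exp (-(2 * q * w.2.2)) * (Real.exp (-(q * b.2.2)) * Real.exp (-(q * b.2.2))) := by
    simp only [leftMul, ← Real.exp_add]
    congr 1
    ring
  rw [k1, k2]
  ring

/-- The Cheng-Yau gradient estimate for positive eigenfunctions. -/
theorem exists_gradient_bound (hp : 0 < p) (hq : 0 < q) (a lam : ℝ) :
    ∃ C, 0 ≤ C ∧ ∀ h : ℝ × ℝ × ℝ → ℝ, ContDiff ℝ 3 h → (∀ w, 0 < h w) →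
      (∀ w, solOp p q a h w = lam * h w) → ∀ w, |Real.exp (p * w.2.2) * ∂₁ h w| ≤ C * h w ∧
        |Real.exp (-(q * w.2.2)) * ∂₂ h w| ≤ C * h w ∧ |∂₃ h w| ≤ C * h w := by
  obtain ⟨C, hC⟩ := exists_carre_log_bound hp hq a lam
  refine ⟨√C, Real.sqrt_nonneg _, fun h hh hpos he b => ?_⟩
  set k : ℝ × ℝ × ℝ → ℝ := fun w => h (leftMul p q b w) with hk
  have hk3 : ContDiff ℝ 3 k := hh.comp (contDiff_leftMul b)
  have hkpos : ∀ w, 0 < k w := fun w => hpos _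
  have hke : ∀ w, solOp p q a k w = lam * k w := fun w => by
    rw [hk, solOp_comp_leftMul (hh.of_le (by norm_num)), he]
  obtain ⟨hu, hue⟩ := isLogEigen_log hk3 hkpos hke
  have hb := hC _ hu hue
  set u : ℝ × ℝ × ℝ → ℝ := fun w => Real.log (k w) with hudef
  have hexp : (fun w => Real.exp (u w)) = k := funext fun w => Real.exp_log (hkpos w)
  have hpd : ∀ v, pd v k 0 = k 0 * pd v u 0 := fun v => by
    have := pd_exp_comp (hu.differentiable (by norm_num)) v
    rw [hexp] at this
    rw [this, hudef]
    simp only [Real.exp_log (hkpos _)]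
  have h0 : leftMul p q b 0 = b := by simp [leftMul]
  have hk0 : k 0 = h b := by rw [hk]; simp only [h0]
  obtain ⟨d1, d2, d3⟩ := pd_comp_leftMul (p := p) (q := q) (hh.differentiable (by norm_num)) b
  have e1 := congrFun d1 0
  have e2 := congrFun d2 0
  have e3 := congrFun d3 0
  rw [← hk, hpd, hk0, h0] at e1 e2 e3
  simp only [carre, Prod.snd_zero, mul_zero, neg_zero, Real.exp_zero, one_mul] at hb
  have key : ∀ v, pd v u 0 * pd v u 0 ≤ C → |h b * pd v u 0| ≤ √C * h b := fun v hv => by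
    rw [abs_mul, abs_of_pos (hpos b), mul_comm]
    exact mul_le_mul_of_nonneg_right (Real.abs_le_sqrt (by rw [sq]; exact hv)) (hpos b).le
  rw [← e1, ← e2, ← e3]
  have s1 := mul_self_nonneg (∂₁ u 0)
  have s2 := mul_self_nonneg (∂₂ u 0)
  have s3 := mul_self_nonneg (∂₃ u 0)
  exact ⟨key _ (by linarith), key _ (by linarith), key _ (by linarith)⟩

end PointwiseGradientEstimate

section MaximumPrinciple

variable {p q a lam : ℝ} {u ρ : ℝ × ℝ × ℝ → ℝ}

/-- A proper function on the line with bounded first and second derivatives. -/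
noncomputable def logBarrier (s : ℝ) : ℝ := Real.log (1 + s ^ 2)

theorem hasDerivAt_logBarrier (s : ℝ) : HasDerivAt logBarrier (2 * s / (1 + s ^ 2)) s := by
  have h : HasDerivAt (fun s : ℝ => 1 + s ^ 2) (2 * s) s := by
    simpa using (hasDerivAt_pow 2 s).const_add 1
  exact h.log (by positivity)

theorem hasDerivAt_deriv_logBarrier (s : ℝ) :
    HasDerivAt (fun s : ℝ => 2 * s / (1 + s ^ 2))
      ((2 * (1 + s ^ 2) - 2 * s * (2 * s)) / (1 + s ^ 2) ^ 2) s := by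
  have h : HasDerivAt (fun s : ℝ => 1 + s ^ 2) (2 * s) s := by
    simpa using (hasDerivAt_pow 2 s).const_add 1
  have h2 : HasDerivAt (fun s : ℝ => 2 * s) 2 s := by
    simpa using (hasDerivAt_id s).const_mul 2
  exact h2.div h (by positivity)

theorem abs_deriv_logBarrier_le (s : ℝ) : |2 * s / (1 + s ^ 2)| ≤ 1 := by
  have h : 0 < 1 + s ^ 2 := by positivity
  rw [abs_div, abs_of_pos h, div_le_one h, abs_le]
  constructor <;> nlinarith [sq_nonneg (s - 1), sq_nonneg (s + 1)]

theorem deriv_deriv_logBarrier_le (s : ℝ) :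
    (2 * (1 + s ^ 2) - 2 * s * (2 * s)) / (1 + s ^ 2) ^ 2 ≤ 2 := by
  have h : 0 < (1 + s ^ 2) ^ 2 := by positivity
  rw [div_le_iff₀ h]
  nlinarith [sq_nonneg s, sq_nonneg (s ^ 2)]

theorem logBarrier_nonneg (s : ℝ) : 0 ≤ logBarrier s :=
  Real.log_nonneg (by nlinarith [sq_nonneg s])

theorem contDiff_logBarrier {n : WithTop ℕ∞} : ContDiff ℝ n logBarrier := by
  unfold logBarrier
  exact ContDiff.log (by fun_prop) fun s => by positivity

theorem pd_pd_comp_coordinate {ℓ : ℝ × ℝ × ℝ → ℝ} {φ φ' φ'' : ℝ → ℝ} {v : ℝ × ℝ × ℝ} {c : ℝ}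
    (hℓ : Differentiable ℝ ℓ) (hc : pd v ℓ = fun _ => c)
    (h1 : ∀ t, HasDerivAt φ (φ' t) t) (h2 : ∀ t, HasDerivAt φ' (φ'' t) t) :
    (pd v fun w => φ (ℓ w)) = (fun w => c * φ' (ℓ w)) ∧
      pd v (pd v fun w => φ (ℓ w)) = fun w => c ^ 2 * φ'' (ℓ w) := by
  have e1 : (pd v fun w => φ (ℓ w)) = fun w => c * φ' (ℓ w) := by
    rw [pd_comp_of_hasDerivAt h1 hℓ, hc]
    simp only [mul_comm]
  have d : Differentiable ℝ φ' := fun t => (h2 t).differentiableAt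
  refine ⟨e1, ?_⟩
  rw [e1, pd_const_mul (f := fun w => φ' (ℓ w)) (d.comp hℓ), pd_comp_of_hasDerivAt h2 hℓ, hc]
  funext w
  ring

theorem driftOp_logBarrier_fst_le {C N : ℝ} {w : ℝ × ℝ × ℝ} (hp : 0 < p)
    (hz : |w.2.2| ≤ N) (hu : |∂₁ u w| ≤ C) :
    driftOp p q a u (fun w => logBarrier w.1) w ≤ Real.exp (2 * p * N) * (2 + 2 * C) := by
  have key := fun v => pd_pd_comp_coordinate (v := v) (ℓ := fun w : ℝ × ℝ × ℝ => w.1)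
    (by fun_prop) pd_fst hasDerivAt_logBarrier hasDerivAt_deriv_logBarrier
  simp only [driftOp, solOp, carre, (key _).2]
  simp only [(key _).1]
  have hE : Real.exp (2 * p * w.2.2) ≤ Real.exp (2 * p * N) :=
    Real.exp_le_exp.2 (by nlinarith [(abs_le.1 hz).2])
  have h2 := deriv_deriv_logBarrier_le w.1
  have h1 : ∂₁ u w * (2 * w.1 / (1 + w.1 ^ 2)) ≤ C := by
    refine (le_abs_self _).trans ?_
    rw [abs_mul]
    calc _ ≤ C * 1 := mul_le_mul hu (abs_deriv_logBarrier_le _) (abs_nonneg _)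
          ((abs_nonneg _).trans hu)
      _ = C := mul_one C
  have hC : 0 ≤ C := (abs_nonneg _).trans hu
  refine le_trans ?_ (mul_le_mul_of_nonneg_right hE (by positivity))
  refine le_trans (le_of_eq ?_)
    (mul_le_mul_of_nonneg_left (add_le_add h2 (mul_le_mul_of_nonneg_left h1 zero_le_two))
      (Real.exp_pos _).le)
  ring

theorem driftOp_logBarrier_snd_le {C N : ℝ} {w : ℝ × ℝ × ℝ} (hq : 0 < q)
    (hz : |w.2.2| ≤ N) (hu : |∂₂ u w| ≤ C) :
    driftOp p q a u (fun w => logBarrier w.2.1) w ≤ Real.exp (2 * q * N) * (2 + 2 * C) := by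
  have key := fun v => pd_pd_comp_coordinate (v := v) (ℓ := fun w : ℝ × ℝ × ℝ => w.2.1)
    (by fun_prop) pd_snd_fst hasDerivAt_logBarrier hasDerivAt_deriv_logBarrier
  simp only [driftOp, solOp, carre, (key _).2]
  simp only [(key _).1]
  have hE : Real.exp (-(2 * q * w.2.2)) ≤ Real.exp (2 * q * N) :=
    Real.exp_le_exp.2 (by nlinarith [(abs_le.1 hz).1])
  have h2 := deriv_deriv_logBarrier_le w.2.1
  have h1 : ∂₂ u w * (2 * w.2.1 / (1 + w.2.1 ^ 2)) ≤ C := by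
    refine (le_abs_self _).trans ?_
    rw [abs_mul]
    calc _ ≤ C * 1 := mul_le_mul hu (abs_deriv_logBarrier_le _) (abs_nonneg _)
          ((abs_nonneg _).trans hu)
      _ = C := mul_one C
  have hC : 0 ≤ C := (abs_nonneg _).trans hu
  refine le_trans ?_ (mul_le_mul_of_nonneg_right hE (by positivity))
  refine le_trans (le_of_eq ?_)
    (mul_le_mul_of_nonneg_left (add_le_add h2 (mul_le_mul_of_nonneg_left h1 zero_le_two))
      (Real.exp_pos _).le)
  ring

theorem driftOp_const_mul {f : ℝ × ℝ × ℝ → ℝ} (hf : ContDiff ℝ 2 f) (c : ℝ) (w : ℝ × ℝ × ℝ) :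
    driftOp p q a u (fun w => c * f w) w = c * driftOp p q a u f w := by
  simp only [driftOp, solOp_const_mul hf, carre, pd_const_mul hf.differentiable_of_two]
  ring

/-- The function `ρ` perturbed by the barriers used in the maximum principle. -/
noncomputable def perturbed (ρ : ℝ × ℝ × ℝ → ℝ) (κ M δ : ℝ) (w : ℝ × ℝ × ℝ) : ℝ :=
  ρ w + (κ * Real.exp (M * w.2.2) + (-δ) * (logBarrier w.1 + logBarrier w.2.1))

theorem contDiff_perturbed (hρ : ContDiff ℝ 2 ρ) (κ M δ : ℝ) :
    ContDiff ℝ 2 (perturbed ρ κ M δ) := by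
  have h1 : ContDiff ℝ 2 fun w : ℝ × ℝ × ℝ => logBarrier w.1 :=
    contDiff_logBarrier.comp contDiff_fst
  have h2 : ContDiff ℝ 2 fun w : ℝ × ℝ × ℝ => logBarrier w.2.1 :=
    contDiff_logBarrier.comp (contDiff_fst.comp contDiff_snd)
  exact hρ.add ((contDiff_const.mul (contDiff_exp_height M)).add (contDiff_const.mul (h1.add h2)))

theorem driftOp_perturbed_pos {C N κ δ : ℝ} {w : ℝ × ℝ × ℝ} (hp : 0 < p) (hq : 0 < q)
    (hρ : ContDiff ℝ 2 ρ) (hdρ : driftOp p q a u ρ w = 0) (hz : |w.2.2| ≤ N)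
    (hgrad : |∂₁ u w| ≤ C ∧ |∂₂ u w| ≤ C ∧ |∂₃ u w| ≤ C) (hκ : 0 < κ) (hδ : 0 < δ)
    (hδκ : δ * ((Real.exp (2 * p * N) + Real.exp (2 * q * N)) * (2 + 2 * C)) <
      κ * Real.exp (-((2 * C + 2 * |a| + 2) * N))) :
    0 < driftOp p q a u (perturbed ρ κ (2 * C + 2 * |a| + 2) δ) w := by
  have hC : 0 ≤ C := (abs_nonneg _).trans hgrad.1
  set M := 2 * C + 2 * |a| + 2 with hM
  have hM2 : 2 ≤ M := by linarith [abs_nonneg a]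
  have h1 : ContDiff ℝ 2 fun w : ℝ × ℝ × ℝ => logBarrier w.1 :=
    contDiff_logBarrier.comp contDiff_fst
  have h2 : ContDiff ℝ 2 fun w : ℝ × ℝ × ℝ => logBarrier w.2.1 :=
    contDiff_logBarrier.comp (contDiff_fst.comp contDiff_snd)
  have hE := contDiff_exp_height (n := 2) M
  have hkE : ContDiff ℝ 2 fun w : ℝ × ℝ × ℝ => κ * Real.exp (M * w.2.2) := contDiff_const.mul hE
  have hdB : ContDiff ℝ 2 fun w : ℝ × ℝ × ℝ => (-δ) * (logBarrier w.1 + logBarrier w.2.1) :=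
    contDiff_const.mul (h1.add h2)
  have e : driftOp p q a u (perturbed ρ κ M δ) w =
      κ * (Real.exp (M * w.2.2) * (M ^ 2 + 2 * a * M + 2 * M * ∂₃ u w))
      - δ * (driftOp p q a u (fun w => logBarrier w.1) w
        + driftOp p q a u (fun w => logBarrier w.2.1) w) := by
    unfold perturbed
    rw [driftOp_add hρ (hkE.add hdB), driftOp_add hkE hdB, driftOp_const_mul hE,
      driftOp_const_mul (h1.add h2), driftOp_add h1 h2, driftOp_exp_height, hdρ]
    ring
  have b1 := driftOp_logBarrier_fst_le (q := q) (a := a) hp hz hgrad.1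
  have b2 := driftOp_logBarrier_snd_le (p := p) (a := a) hq hz hgrad.2.1
  have b3 : 1 ≤ M ^ 2 + 2 * a * M + 2 * M * ∂₃ u w := by
    have := (abs_le.1 hgrad.2.2).1
    have := neg_abs_le a
    have h : 2 ≤ M + 2 * a + 2 * ∂₃ u w := by linarith
    nlinarith
  have b4 : Real.exp (-(M * N)) ≤ Real.exp (M * w.2.2) :=
    Real.exp_le_exp.2 (by nlinarith [(abs_le.1 hz).1])
  have b5 : κ * Real.exp (-(M * N)) ≤
      κ * (Real.exp (M * w.2.2) * (M ^ 2 + 2 * a * M + 2 * M * ∂₃ u w)) :=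
    mul_le_mul_of_nonneg_left (b4.trans (le_mul_of_one_le_right (Real.exp_pos _).le b3)) hκ.le
  have b6 := mul_le_mul_of_nonneg_left (add_le_add b1 b2) hδ.le
  rw [e]
  linarith

theorem exists_logBarrier_ge (r K : ℝ) : ∃ R, r ≤ R ∧ K ≤ logBarrier R := by
  refine ⟨max r (Real.exp K), le_max_left _ _, ?_⟩
  set R := max r (Real.exp K)
  have h : Real.exp K ≤ R := le_max_right _ _
  have h0 := Real.exp_pos K
  rw [logBarrier, Real.le_log_iff_exp_le (by positivity)]
  nlinarith [sq_nonneg (R - 1)]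

theorem logBarrier_abs (s : ℝ) : logBarrier |s| = logBarrier s := by
  simp [logBarrier]

theorem perturbed_le {C N K κ δ : ℝ} (hp : 0 < p) (hq : 0 < q)
    (hρ : ContDiff ℝ 2 ρ) (hdρ : ∀ w, driftOp p q a u ρ w = 0)
    (hgrad : ∀ w : ℝ × ℝ × ℝ, |w.2.2| ≤ N → |∂₁ u w| ≤ C ∧ |∂₂ u w| ≤ C ∧ |∂₃ u w| ≤ C)
    (hK : ∀ w : ℝ × ℝ × ℝ, |w.2.2| ≤ N → ρ w ≤ K)
    (hbd : ∀ w : ℝ × ℝ × ℝ, |w.2.2| = N → ρ w ≤ 0) (hκ : 0 < κ) (hδ : 0 < δ)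
    (hδκ : δ * ((Real.exp (2 * p * N) + Real.exp (2 * q * N)) * (2 + 2 * C)) <
      κ * Real.exp (-((2 * C + 2 * |a| + 2) * N))) {w₀ : ℝ × ℝ × ℝ} (hw₀ : |w₀.2.2| ≤ N) :
    perturbed ρ κ (2 * C + 2 * |a| + 2) δ w₀ ≤ κ * Real.exp ((2 * C + 2 * |a| + 2) * N) := by
  have hC : 0 ≤ C := (abs_nonneg _).trans (hgrad w₀ hw₀).1
  set M := 2 * C + 2 * |a| + 2 with hM
  have hM2 : 0 ≤ M := by linarith [abs_nonneg a]
  by_contra! hlt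
  obtain ⟨R, hR, hRK⟩ := exists_logBarrier_ge (max |w₀.1| |w₀.2.1|) (K / δ)
  rw [div_le_iff₀ hδ] at hRK
  have hΨ := contDiff_perturbed hρ κ M δ
  set Ψ := perturbed ρ κ M δ with hΨdef
  set S : Set (ℝ × ℝ × ℝ) := Set.Icc (-R) R ×ˢ Set.Icc (-R) R ×ˢ Set.Icc (-N) N with hS
  have hScomp : IsCompact S := isCompact_Icc.prod (isCompact_Icc.prod isCompact_Icc)
  have hw₀S : w₀ ∈ S := ⟨abs_le.1 ((le_max_left _ _).trans hR),
    abs_le.1 ((le_max_right _ _).trans hR), abs_le.1 hw₀⟩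
  obtain ⟨m, hmS, hmax⟩ := hScomp.exists_isMaxOn ⟨w₀, hw₀S⟩ hΨ.continuous.continuousOn
  have hΨm : κ * Real.exp (M * N) < Ψ m := hlt.trans_le (hmax hw₀S)
  have hmx : |m.1| ≤ R := abs_le.2 hmS.1
  have hmy : |m.2.1| ≤ R := abs_le.2 hmS.2.1
  have hmz : |m.2.2| ≤ N := abs_le.2 hmS.2.2
  have hEm : κ * Real.exp (M * m.2.2) ≤ κ * Real.exp (M * N) :=
    mul_le_mul_of_nonneg_left (Real.exp_le_exp.2
      (mul_le_mul_of_nonneg_left (abs_le.1 hmz).2 hM2)) hκ.le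
  have hΨm' : Ψ m = ρ m + κ * Real.exp (M * m.2.2)
      - δ * logBarrier m.1 - δ * logBarrier m.2.1 := by
    rw [hΨdef, perturbed]; ring
  have n1 := mul_nonneg hδ.le (logBarrier_nonneg m.1)
  have n2 := mul_nonneg hδ.le (logBarrier_nonneg m.2.1)
  have hmz' : |m.2.2| < N := hmz.lt_of_ne fun h => by linarith [hbd m h]
  have hmx' : |m.1| < R := hmx.lt_of_ne fun h => by
    rw [← logBarrier_abs m.1, h] at hΨm'
    linarith [hK m hmz]
  have hmy' : |m.2.1| < R := hmy.lt_of_ne fun h => by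
    rw [← logBarrier_abs m.2.1, h] at hΨm'
    linarith [hK m hmz]
  have hloc : IsLocalMax Ψ m := by
    refine hmax.isLocalMax ?_
    exact prod_mem_nhds (Icc_mem_nhds (abs_lt.1 hmx').1 (abs_lt.1 hmx').2)
      (prod_mem_nhds (Icc_mem_nhds (abs_lt.1 hmy').1 (abs_lt.1 hmy').2)
        (Icc_mem_nhds (abs_lt.1 hmz').1 (abs_lt.1 hmz').2))
  have h1 := driftOp_nonpos_of_isLocalMax (p := p) (q := q) (a := a) (u := u) hΨ hloc
  have h2 := driftOp_perturbed_pos hp hq hρ (hdρ m) hmz (hgrad m hmz) hκ hδ hδκ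
  exact absurd h1 (not_le.2 h2)

theorem nonpos_of_driftOp_eq_zero {C N K : ℝ} (hp : 0 < p) (hq : 0 < q)
    (hρ : ContDiff ℝ 2 ρ) (hdρ : ∀ w, driftOp p q a u ρ w = 0)
    (hgrad : ∀ w : ℝ × ℝ × ℝ, |w.2.2| ≤ N → |∂₁ u w| ≤ C ∧ |∂₂ u w| ≤ C ∧ |∂₃ u w| ≤ C)
    (hK : ∀ w : ℝ × ℝ × ℝ, |w.2.2| ≤ N → ρ w ≤ K)
    (hbd : ∀ w : ℝ × ℝ × ℝ, |w.2.2| = N → ρ w ≤ 0) {w₀ : ℝ × ℝ × ℝ} (hw₀ : |w₀.2.2| ≤ N) :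
    ρ w₀ ≤ 0 := by
  have hC : 0 ≤ C := (abs_nonneg _).trans (hgrad w₀ hw₀).1
  set E := Real.exp ((2 * C + 2 * |a| + 2) * N) with hE
  have hE0 : 0 < E := Real.exp_pos _
  set D := (Real.exp (2 * p * N) + Real.exp (2 * q * N)) * (2 + 2 * C) with hD
  have hD0 : 0 < D := by positivity
  set B := logBarrier w₀.1 + logBarrier w₀.2.1 with hB
  have hB0 : 0 ≤ B := add_nonneg (logBarrier_nonneg _) (logBarrier_nonneg _)
  have main : ∀ κ > 0, ρ w₀ ≤ κ * (E + 1) := by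
    intro κ hκ
    set F := κ * Real.exp (-((2 * C + 2 * |a| + 2) * N)) with hF
    have hF0 : 0 < F := by positivity
    set δ := min (F / (2 * D)) (κ / (B + 1)) with hδdef
    have hδ : 0 < δ := by positivity
    have hδκ : δ * D < F := by
      have : δ * (2 * D) ≤ F := (le_div_iff₀ (by positivity)).1 (min_le_left _ _)
      nlinarith
    have hδB : δ * B ≤ κ := by
      have : δ * (B + 1) ≤ κ := (le_div_iff₀ (by positivity)).1 (min_le_right _ _)
      linarith
    have := perturbed_le hp hq hρ hdρ hgrad hK hbd hκ hδ hδκ hw₀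
    rw [perturbed, ← hB, ← hE] at this
    have hpos : 0 < κ * Real.exp ((2 * C + 2 * |a| + 2) * w₀.2.2) := by positivity
    linarith
  by_contra! hlt
  have := main (ρ w₀ / (2 * (E + 1))) (by positivity)
  have e : ρ w₀ / (2 * (E + 1)) * (E + 1) = ρ w₀ / 2 := by
    field_simp
  linarith

/-- Maximum principle on a slab, relative to a positive eigenfunction of bounded logarithmic
gradient. -/
theorem slab_maximum_principle {H g : ℝ × ℝ × ℝ → ℝ} {C N K : ℝ} (hp : 0 < p) (hq : 0 < q)
    (hH : ContDiff ℝ 2 H) (hpos : ∀ w, 0 < H w) (hHe : ∀ w, solOp p q a H w = lam * H w)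
    (hg : ContDiff ℝ 2 g) (hge : ∀ w, solOp p q a g w = lam * g w)
    (hgrad : ∀ w : ℝ × ℝ × ℝ, |w.2.2| ≤ N →
      |∂₁ H w| ≤ C * H w ∧ |∂₂ H w| ≤ C * H w ∧ |∂₃ H w| ≤ C * H w)
    (hK : ∀ w : ℝ × ℝ × ℝ, |w.2.2| ≤ N → g w ≤ K * H w)
    (hbd : ∀ w : ℝ × ℝ × ℝ, |w.2.2| = N → g w ≤ 0) {w₀ : ℝ × ℝ × ℝ} (hw₀ : |w₀.2.2| ≤ N) :
    g w₀ ≤ 0 := by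
  have hu : ContDiff ℝ 2 (fun w => Real.log (H w)) := hH.log fun w => (hpos w).ne'
  have hexp : (fun w => Real.exp (Real.log (H w))) = H := funext fun w => Real.exp_log (hpos w)
  have hpd : ∀ v w, pd v H w = H w * pd v (fun w => Real.log (H w)) w := fun v w => by
    have := pd_exp_comp hu.differentiable_of_two v
    rw [hexp] at this
    rw [this]
    simp only [Real.exp_log (hpos _)]
  set u : ℝ × ℝ × ℝ → ℝ := fun w => Real.log (H w) with hudef
  have hρ : ContDiff ℝ 2 (fun w => g w / H w) := hg.div hH fun w => (hpos w).ne'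
  have hgρ : (fun w => g w / H w * H w) = g :=
    funext fun w => div_mul_cancel₀ _ (hpos w).ne'
  have hd : ∀ w, driftOp p q a u (fun w => g w / H w) w = 0 := by
    intro w
    have h1 := solOp_mul (p := p) (q := q) (a := a) hρ hH w
    rw [hgρ, hge, hHe] at h1
    have h2 : carre p q (fun w => g w / H w) H w =
        H w * carre p q u (fun w => g w / H w) w := by
      simp only [carre, hpd]
      ring
    have h3 : g w / H w * (lam * H w) = lam * g w := by
      have := (hpos w).ne'
      field_simp
    rw [h2, h3] at h1
    have h4 : H w * driftOp p q a u (fun w => g w / H w) w = H w * 0 := by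
      rw [driftOp]; linarith
    exact mul_left_cancel₀ (hpos w).ne' h4
  have hgr : ∀ v w, |pd v H w| ≤ C * H w → |pd v u w| ≤ C := fun v w h => by
    rw [hpd, abs_mul, abs_of_pos (hpos w), mul_comm] at h
    exact le_of_mul_le_mul_right h (hpos w)
  have := nonpos_of_driftOp_eq_zero (C := C) (N := N) (K := K) hp hq hρ hd
    (fun w hw => ⟨hgr _ _ (hgrad w hw).1, hgr _ _ (hgrad w hw).2.1, hgr _ _ (hgrad w hw).2.2⟩)
    (fun w hw => (div_le_iff₀ (hpos w)).2 (hK w hw))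
    (fun w hw => div_nonpos_of_nonpos_of_nonneg (hbd w hw) (hpos w).le) hw₀
  by_contra! hlt
  exact absurd this (not_le.2 (div_pos hlt (hpos w₀)))

end MaximumPrinciple

section MixedDifferences

open Filter Topology

variable {p q a lam : ℝ} {f h : ℝ × ℝ × ℝ → ℝ}

/-- A quantitative Harnack inequality along a segment. -/
theorem abs_sub_le_of_abs_pd_le {b w : ℝ × ℝ × ℝ} {c : ℝ} (hh : Differentiable ℝ h)
    (hc : ∀ t : ℝ, |pd b h (w + t • b)| ≤ c * h (w + t • b)) (hw : 0 ≤ h w) :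
    |h (w + b) - h w| ≤ (Real.exp c - 1) * h w := by
  have hd := fun t => hasDerivAt_line hh w b t
  have hexp : ∀ k t : ℝ, HasDerivAt (fun t => Real.exp (k * t) * h (w + t • b))
      (Real.exp (k * t) * (k * h (w + t • b) + pd b h (w + t • b))) t := fun k t => by
    have h1 : HasDerivAt (fun t => Real.exp (k * t)) (Real.exp (k * t) * k) t := by
      simpa using ((hasDerivAt_id t).const_mul k).exp
    refine (h1.mul (hd t)).congr_deriv ?_
    ring
  have upper : h (w + b) ≤ Real.exp c * h w := by
    have hanti : Antitone fun t => Real.exp (-c * t) * h (w + t • b) :=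
      antitone_of_hasDerivAt_nonpos (hexp (-c)) fun t =>
        mul_nonpos_of_nonneg_of_nonpos (Real.exp_pos _).le (by
          linarith [(abs_le.1 (hc t)).2])
    have := hanti zero_le_one
    simp only [mul_one, one_smul, mul_zero, Real.exp_zero, zero_smul, add_zero, one_mul] at this
    calc h (w + b) = Real.exp c * (Real.exp (-c) * h (w + b)) := by
          rw [← mul_assoc, ← Real.exp_add]; simp
      _ ≤ _ := mul_le_mul_of_nonneg_left this (Real.exp_pos _).le
  have lower : Real.exp (-c) * h w ≤ h (w + b) := by
    have hmono : Monotone fun t => Real.exp (c * t) * h (w + t • b) :=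
      monotone_of_hasDerivAt_nonneg (hexp c) fun t =>
        mul_nonneg (Real.exp_pos _).le (by linarith [(abs_le.1 (hc t)).1])
    have := hmono zero_le_one
    simp only [mul_one, one_smul, mul_zero, Real.exp_zero, zero_smul, add_zero, one_mul] at this
    calc Real.exp (-c) * h w ≤ Real.exp (-c) * (Real.exp c * h (w + b)) :=
          mul_le_mul_of_nonneg_left this (Real.exp_pos _).le
      _ = h (w + b) := by rw [← mul_assoc, ← Real.exp_add]; simp
  rw [abs_le]
  refine ⟨?_, by linarith⟩
  have : 2 ≤ Real.exp c + Real.exp (-c) := by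
    linarith [Real.add_one_le_exp c, Real.add_one_le_exp (-c)]
  nlinarith

theorem solOp_translate {b : ℝ × ℝ × ℝ} (hb : b.2.2 = 0) (hh : ContDiff ℝ 2 h)
    (w : ℝ × ℝ × ℝ) : solOp p q a (fun w => h (w + b)) w = solOp p q a h (w + b) := by
  have e : leftMul p q b = fun w => w + b := by
    funext w
    simp [leftMul, hb, Prod.ext_iff]
  simpa only [e] using solOp_comp_leftMul (p := p) (q := q) (a := a) hh b w

theorem nonpos_of_forall_slab {H g : ℝ × ℝ × ℝ → ℝ} {ε : ℝ → ℝ} (hp : 0 < p) (hq : 0 < q)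
    (hH : ContDiff ℝ 3 H) (hpos : ∀ w, 0 < H w) (hHe : ∀ w, solOp p q a H w = lam * H w)
    (hg : ContDiff ℝ 2 g) (hge : ∀ w, solOp p q a g w = lam * g w)
    (hK : ∀ w, g w ≤ H w) (hε0 : ∀ N, 0 ≤ ε N) (hε : Tendsto ε atTop (𝓝 0))
    (hbd : ∀ w, g w ≤ ε |w.2.2| * H w) (w : ℝ × ℝ × ℝ) : g w ≤ 0 := by
  obtain ⟨C, hC0, hC⟩ := exists_gradient_bound hp hq a lam
  have hH2 : ContDiff ℝ 2 H := hH.of_le (by norm_num)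
  have key : ∀ N, |w.2.2| ≤ N → g w ≤ ε N * H w := by
    intro N hN
    have hN0 : 0 ≤ N := (abs_nonneg _).trans hN
    have hεH : ContDiff ℝ 2 fun w => ε N * H w := contDiff_const.mul hH2
    have := slab_maximum_principle (p := p) (q := q) (a := a) (lam := lam) (H := H)
      (g := fun w => g w - ε N * H w) (C := C * Real.exp (p * N) * Real.exp (q * N)) (N := N)
      (K := 1) hp hq hH2 hpos hHe (hg.sub hεH) ?_ ?_ ?_ ?_ (w₀ := w) hN
    · linarith
    · intro w
      rw [solOp_sub hg hεH, solOp_const_mul hH2]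
      simp only [hge, hHe]
      ring
    · intro w hw
      obtain ⟨h1, h2, h3⟩ := hC H hH hpos hHe w
      have ew := abs_le.1 hw
      have hpN : 1 ≤ Real.exp (p * N) := Real.one_le_exp (by positivity)
      have hqN : 1 ≤ Real.exp (q * N) := Real.one_le_exp (by positivity)
      have hCH : 0 ≤ C * H w := mul_nonneg hC0 (hpos w).le
      have hpq : 1 ≤ Real.exp (p * N) * Real.exp (q * N) := by nlinarith
      have e1 : Real.exp (-(p * N)) * |∂₁ H w| ≤ C * H w := by
        rw [abs_mul, abs_of_pos (Real.exp_pos _)] at h1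
        refine (mul_le_mul_of_nonneg_right ?_ (abs_nonneg _)).trans h1
        exact Real.exp_le_exp.2 (by nlinarith)
      have e2 : Real.exp (-(q * N)) * |∂₂ H w| ≤ C * H w := by
        rw [abs_mul, abs_of_pos (Real.exp_pos _)] at h2
        refine (mul_le_mul_of_nonneg_right ?_ (abs_nonneg _)).trans h2
        exact Real.exp_le_exp.2 (by nlinarith)
      rw [Real.exp_neg, inv_mul_le_iff₀ (Real.exp_pos _)] at e1 e2
      refine ⟨e1.trans ?_, e2.trans ?_, h3.trans ?_⟩
      · nlinarith [mul_nonneg (mul_nonneg (Real.exp_pos (p * N)).le hCH) (sub_nonneg.2 hqN)]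
      · nlinarith [mul_nonneg (mul_nonneg (Real.exp_pos (q * N)).le hCH) (sub_nonneg.2 hpN)]
      · nlinarith [mul_nonneg hCH (sub_nonneg.2 hpq)]
    · intro w _
      have := mul_nonneg (hε0 N) (hpos w).le
      linarith [hK w]
    · intro w hw
      have := hbd w
      rw [hw] at this
      linarith
  have hlim : Tendsto (fun N => ε N * H w) atTop (𝓝 (0 * H w)) := hε.mul_const _
  rw [zero_mul] at hlim
  refine ge_of_tendsto hlim ?_
  filter_upwards [eventually_ge_atTop |w.2.2|] with N hN using key N hN

/-- The mixed second difference of `h`. -/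
def mixedDiff (b c : ℝ × ℝ × ℝ) (h : ℝ × ℝ × ℝ → ℝ) (w : ℝ × ℝ × ℝ) : ℝ :=
  h (w + c + b) - h (w + c) - (h (w + b) - h w)

theorem mixedDiff_comm (b c w : ℝ × ℝ × ℝ) : mixedDiff b c h w = mixedDiff c b h w := by
  simp only [mixedDiff, add_right_comm w c b]
  ring

/-- The sum of the values entering the mixed second difference. -/
def mixedSum (b c : ℝ × ℝ × ℝ) (h : ℝ × ℝ × ℝ → ℝ) (w : ℝ × ℝ × ℝ) : ℝ :=
  h (w + c + b) + h (w + c) + (h (w + b) + h w)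

theorem mixedSum_comm (b c w : ℝ × ℝ × ℝ) : mixedSum b c h w = mixedSum c b h w := by
  simp only [mixedSum, add_right_comm w c b]
  ring

theorem ContDiff.mixedDiff {n : WithTop ℕ∞} {b c : ℝ × ℝ × ℝ} (hh : ContDiff ℝ n h) :
    ContDiff ℝ n (mixedDiff b c h) := by
  have ht : ∀ d : ℝ × ℝ × ℝ, ContDiff ℝ n fun w => h (w + d) := fun d =>
    hh.comp (contDiff_id.add contDiff_const)
  exact ((hh.comp ((contDiff_id.add contDiff_const).add contDiff_const)).sub (ht c)).sub
    ((ht b).sub hh)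

theorem ContDiff.mixedSum {n : WithTop ℕ∞} {b c : ℝ × ℝ × ℝ} (hh : ContDiff ℝ n h) :
    ContDiff ℝ n (mixedSum b c h) := by
  have ht : ∀ d : ℝ × ℝ × ℝ, ContDiff ℝ n fun w => h (w + d) := fun d =>
    hh.comp (contDiff_id.add contDiff_const)
  exact ((hh.comp ((contDiff_id.add contDiff_const).add contDiff_const)).add (ht c)).add
    ((ht b).add hh)

theorem solOp_mixedDiff {b c : ℝ × ℝ × ℝ} (hb : b.2.2 = 0) (hc : c.2.2 = 0)
    (hh : ContDiff ℝ 2 h) (he : ∀ w, solOp p q a h w = lam * h w) (w : ℝ × ℝ × ℝ) :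
    solOp p q a (mixedDiff b c h) w = lam * mixedDiff b c h w := by
  have ht : ∀ d : ℝ × ℝ × ℝ, ContDiff ℝ 2 fun w => h (w + d) := fun d =>
    hh.comp (contDiff_id.add contDiff_const)
  have hcb : (c + b).2.2 = 0 := by simp [hb, hc]
  unfold mixedDiff
  simp only [add_assoc]
  rw [solOp_sub ((ht _).sub (ht _)) ((ht _).sub hh), solOp_sub (ht _) (ht _),
    solOp_sub (ht _) hh]
  beta_reduce
  rw [solOp_translate hcb hh, solOp_translate hb hh, solOp_translate hc hh]
  simp only [he]
  ring

theorem solOp_mixedSum {b c : ℝ × ℝ × ℝ} (hb : b.2.2 = 0) (hc : c.2.2 = 0)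
    (hh : ContDiff ℝ 2 h) (he : ∀ w, solOp p q a h w = lam * h w) (w : ℝ × ℝ × ℝ) :
    solOp p q a (mixedSum b c h) w = lam * mixedSum b c h w := by
  have ht : ∀ d : ℝ × ℝ × ℝ, ContDiff ℝ 2 fun w => h (w + d) := fun d =>
    hh.comp (contDiff_id.add contDiff_const)
  have hcb : (c + b).2.2 = 0 := by simp [hb, hc]
  unfold mixedSum
  simp only [add_assoc]
  have h1 := solOp_add (p := p) (q := q) (a := a) (ht b) hh
  have h2 := solOp_add (p := p) (q := q) (a := a) (ht c) ((ht b).add hh)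
  have h3 := solOp_add (p := p) (q := q) (a := a) (ht (c + b)) ((ht c).add ((ht b).add hh))
  rw [h3, h2, h1]
  beta_reduce
  rw [solOp_translate hcb hh, solOp_translate hb hh, solOp_translate hc hh]
  simp only [he]
  ring

theorem abs_mixedDiff_le {b d : ℝ × ℝ × ℝ} {c : ℝ} (hh : Differentiable ℝ h)
    (hpos : ∀ w, 0 < h w) {w : ℝ × ℝ × ℝ}
    (hc : ∀ w' : ℝ × ℝ × ℝ, w'.2.2 = w.2.2 → |pd b h w'| ≤ c * h w') (hb : b.2.2 = 0)
    (hd : d.2.2 = 0) : |mixedDiff b d h w| ≤ (Real.exp c - 1) * mixedSum b d h w := by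
  have h1 := abs_sub_le_of_abs_pd_le (w := w) hh (fun t => hc _ (by simp [hb])) (hpos _).le
  have h2 := abs_sub_le_of_abs_pd_le (w := w + d) hh (fun t => hc _ (by simp [hb, hd])) (hpos _).le
  have hc0 : 0 ≤ c := by
    have := (abs_nonneg _).trans (hc w rfl)
    exact nonneg_of_mul_nonneg_left this (hpos w)
  have he : 0 ≤ Real.exp c - 1 := sub_nonneg.2 (Real.one_le_exp hc0)
  have h3 := mul_nonneg he (hpos (w + d + b)).le
  have h4 := mul_nonneg he (hpos (w + b)).le
  have h5 : |mixedDiff b d h w| ≤ |h (w + d + b) - h (w + d)| + |h (w + b) - h w| := abs_sub _ _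
  rw [mixedSum]
  linarith

theorem mixedDiff_eq_zero_of_contDiff_three (hp : 0 < p) (hq : 0 < q) (hh : ContDiff ℝ 3 h)
    (hpos : ∀ w, 0 < h w) (he : ∀ w, solOp p q a h w = lam * h w) (s t : ℝ)
    (w : ℝ × ℝ × ℝ) : mixedDiff (s, 0, 0) (0, t, 0) h w = 0 := by
  obtain ⟨C, hC0, hC⟩ := exists_gradient_bound hp hq a lam
  have hh2 : ContDiff ℝ 2 h := hh.of_le (by norm_num)
  have hd := hh2.differentiable_of_two
  set ε : ℝ → ℝ := fun N => (Real.exp (|s| * C * Real.exp (-(p * N))) - 1)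
    + (Real.exp (|t| * C * Real.exp (-(q * N))) - 1) with hεdef
  have hsum0 : ∀ w, 0 < mixedSum (s, 0, 0) (0, t, 0) h w := fun w => by
    rw [mixedSum]
    linarith [hpos (w + (0, t, 0) + (s, 0, 0)), hpos (w + (0, t, 0)), hpos (w + (s, 0, 0)), hpos w]
  have hexp0 : ∀ r c : ℝ, 0 ≤ Real.exp (|r| * C * Real.exp c) - 1 := fun r c =>
    sub_nonneg.2 (Real.one_le_exp (by positivity))
  have hε0 : ∀ N, 0 ≤ ε N := fun N => add_nonneg (hexp0 _ _) (hexp0 _ _)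
  have hlim : ∀ r c : ℝ, 0 < c →
      Tendsto (fun N => Real.exp (|r| * C * Real.exp (-(c * N))) - 1) atTop (𝓝 0) := by
    intro r c hc
    have h1 : Tendsto (fun N : ℝ => Real.exp (-(c * N))) atTop (𝓝 0) :=
      Real.tendsto_exp_neg_atTop_nhds_zero.comp (tendsto_id.const_mul_atTop hc)
    have h2 := ((Real.continuous_exp.tendsto _).comp (h1.const_mul (|r| * C))).sub_const 1
    simpa using h2
  have hε : Tendsto ε atTop (𝓝 0) := by simpa using (hlim s p hp).add (hlim t q hq)
  have bound : ∀ w, |mixedDiff (s, 0, 0) (0, t, 0) h w| ≤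
      ε |w.2.2| * mixedSum (s, 0, 0) (0, t, 0) h w := by
    intro w
    rcases le_total 0 w.2.2 with hz | hz
    · have := abs_mixedDiff_le (b := (s, 0, 0)) (d := (0, t, 0))
        (c := |s| * C * Real.exp (-(p * |w.2.2|))) hd hpos (w := w) (fun w' hw' => ?_) rfl rfl
      · refine this.trans (mul_le_mul_of_nonneg_right ?_ (hsum0 w).le)
        exact le_add_of_nonneg_right (hexp0 _ _)
      · have e : ((s, 0, 0) : ℝ × ℝ × ℝ) = s • (1, 0, 0) := by simp
        have h1 := (hC h hh hpos he w').1
        rw [abs_mul, abs_of_pos (Real.exp_pos _), hw', ← le_div_iff₀' (Real.exp_pos _),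
          div_eq_mul_inv, ← Real.exp_neg] at h1
        rw [e, pd_smul_dir, abs_mul, abs_of_nonneg hz]
        calc |s| * |∂₁ h w'| ≤ |s| * (C * h w' * Real.exp (-(p * w.2.2))) := by gcongr
          _ = _ := by ring
    · have := abs_mixedDiff_le (b := (0, t, 0)) (d := (s, 0, 0))
        (c := |t| * C * Real.exp (-(q * |w.2.2|))) hd hpos (w := w) (fun w' hw' => ?_) rfl rfl
      · rw [mixedDiff_comm, mixedSum_comm]
        refine this.trans (mul_le_mul_of_nonneg_right ?_ (mixedSum_comm _ _ w ▸ hsum0 w).le)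
        exact le_add_of_nonneg_left (hexp0 _ _)
      · have e : ((0, t, 0) : ℝ × ℝ × ℝ) = t • (0, 1, 0) := by simp
        have h1 := (hC h hh hpos he w').2.1
        rw [abs_mul, abs_of_pos (Real.exp_pos _), hw', ← le_div_iff₀' (Real.exp_pos _),
          div_eq_mul_inv, ← Real.exp_neg] at h1
        rw [e, pd_smul_dir, abs_mul, abs_of_nonpos hz]
        calc |t| * |∂₂ h w'| ≤ |t| * (C * h w' * Real.exp (- -(q * w.2.2))) := by gcongr
          _ = _ := by rw [mul_neg]; ring
  have habs : ∀ w, |mixedDiff (s, 0, 0) (0, t, 0) h w| ≤ mixedSum (s, 0, 0) (0, t, 0) h w := by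
    intro w
    have h1 := hpos (w + (0, t, 0) + (s, 0, 0))
    have h2 := hpos (w + (0, t, 0))
    have h3 := hpos (w + (s, 0, 0))
    have h4 := hpos w
    rw [mixedDiff, mixedSum, abs_le]
    constructor <;> linarith
  have hD : ContDiff ℝ 2 (mixedDiff (s, 0, 0) (0, t, 0) h) := hh2.mixedDiff
  have hDe := solOp_mixedDiff (p := p) (q := q) (a := a) (b := (s, 0, 0)) (c := (0, t, 0))
    rfl rfl hh2 he
  have hS := solOp_mixedSum (p := p) (q := q) (a := a) (b := (s, 0, 0)) (c := (0, t, 0))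
    rfl rfl hh2 he
  refine le_antisymm ?_ ?_
  · exact nonpos_of_forall_slab hp hq hh.mixedSum hsum0 hS hD hDe
      (fun w => (le_abs_self _).trans (habs w)) hε0 hε
      (fun w => (le_abs_self _).trans (bound w)) w
  · have := nonpos_of_forall_slab (g := fun w => (-1) * mixedDiff (s, 0, 0) (0, t, 0) h w)
      hp hq hh.mixedSum hsum0 hS (contDiff_const.mul hD)
      (fun w => by rw [solOp_const_mul hD]; simp only [hDe]; ring)
      (fun w => by linarith [neg_abs_le (mixedDiff (s, 0, 0) (0, t, 0) h w), habs w]) hε0 hε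
      (fun w => by linarith [neg_abs_le (mixedDiff (s, 0, 0) (0, t, 0) h w), bound w]) w
    linarith

theorem mixedDiff_segInt {v b c : ℝ × ℝ × ℝ} {ε : ℝ} (hh : Continuous h) :
    mixedDiff b c (segInt v ε h) = segInt v ε (mixedDiff b c h) := by
  funext w
  have I : ∀ d : ℝ × ℝ × ℝ,
      IntervalIntegrable (fun s : ℝ => h (d + s • v)) MeasureTheory.volume 0 ε := fun d =>
    (by fun_prop : Continuous fun s : ℝ => h (d + s • v)).intervalIntegrable _ _
  have e : ∀ s : ℝ, mixedDiff b c h (w + s • v) = h (w + c + b + s • v) - h (w + c + s • v)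
      - (h (w + b + s • v) - h (w + s • v)) := fun s => by
    simp only [mixedDiff, add_right_comm _ (s • v)]
  simp only [mixedDiff, segInt]
  rw [← intervalIntegral.integral_sub (I _) (I _), ← intervalIntegral.integral_sub (I _) (I _),
    ← intervalIntegral.integral_sub ((I _).sub (I _)) ((I _).sub (I _))]
  exact intervalIntegral.integral_congr fun s _ => (e s).symm

theorem mixedDiff_eq_zero (hp : 0 < p) (hq : 0 < q) (hh : ContDiff ℝ 2 h)
    (hpos : ∀ w, 0 < h w) (he : ∀ w, solOp p q a h w = lam * h w) (s t : ℝ)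
    (w : ℝ × ℝ × ℝ) : mixedDiff (s, 0, 0) (0, t, 0) h w = 0 := by
  have hc := hh.continuous
  have hD : Continuous (mixedDiff (s, 0, 0) (0, t, 0) h) := (hh.mixedDiff).continuous
  refine eq_zero_of_segInt_eq_zero (v := (1, 0, 0)) hD fun ε' hε' => ?_
  refine eq_zero_of_segInt_eq_zero (v := (0, 1, 0)) hD.segInt fun ε hε => ?_
  obtain ⟨h3, h3e⟩ := contDiff_three_segInt_segInt (ε := ε) (ε' := ε') hh he
  have := mixedDiff_eq_zero_of_contDiff_three hp hq h3
    (segInt_pos hε hc.segInt (segInt_pos hε' hc hpos)) h3e s t w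
  rwa [mixedDiff_segInt hc.segInt, mixedDiff_segInt hc] at this

end MixedDifferences

section Splitting

variable {p q a lam r₁ r₂ : ℝ} {h A B : ℝ × ℝ × ℝ → ℝ}

theorem contDiff_two_of_hasDerivAt {g g' g'' : ℝ → ℝ} (h1 : ∀ t, HasDerivAt g (g' t) t)
    (h2 : ∀ t, HasDerivAt g' (g'' t) t) (hc : Continuous g'') : ContDiff ℝ 2 g := by
  have e1 : deriv g = g' := funext fun t => (h1 t).deriv
  have e2 : deriv g' = g'' := funext fun t => (h2 t).deriv
  have hg' : ContDiff ℝ 1 g' := by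
    rw [contDiff_one_iff_deriv, e2]
    exact ⟨fun t => (h2 t).differentiableAt, hc⟩
  rw [show (2 : WithTop ℕ∞) = 1 + 1 by norm_num, contDiff_succ_iff_deriv, e1]
  exact ⟨fun t => (h1 t).differentiableAt, by simp, hg'⟩

/-- The solution by variation of parameters of `(d/dz - r₂)(d/dz - r₁) φ = e^{r₂ z} I'`. -/
noncomputable def odeSol (r₁ r₂ c : ℝ) (I : ℝ → ℝ) (z : ℝ) : ℝ :=
  Real.exp (r₁ * z) * (c + ∫ t in (0 : ℝ)..z, Real.exp ((r₂ - r₁) * t) * I t)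

theorem hasDerivAt_exp_mul (r z : ℝ) :
    HasDerivAt (fun z => Real.exp (r * z)) (Real.exp (r * z) * r) z := by
  simpa using ((hasDerivAt_id z).const_mul r).exp

theorem hasDerivAt_odeSol (c : ℝ) {I : ℝ → ℝ} (hI : Continuous I) (z : ℝ) :
    HasDerivAt (odeSol r₁ r₂ c I) (r₁ * odeSol r₁ r₂ c I z + Real.exp (r₂ * z) * I z) z := by
  have hcont : Continuous fun t => Real.exp ((r₂ - r₁) * t) * I t := by fun_prop
  have hJ : HasDerivAt (fun z => c + ∫ t in (0 : ℝ)..z, Real.exp ((r₂ - r₁) * t) * I t)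
      (Real.exp ((r₂ - r₁) * z) * I z) z :=
    (intervalIntegral.integral_hasDerivAt_right (hcont.intervalIntegrable _ _)
      (hcont.stronglyMeasurableAtFilter _ _) hcont.continuousAt).const_add c
  refine ((hasDerivAt_exp_mul r₁ z).mul hJ).congr_deriv ?_
  have e : Real.exp (r₂ * z) = Real.exp (r₁ * z) * Real.exp ((r₂ - r₁) * z) := by
    rw [← Real.exp_add]; congr 1; ring
  rw [e, odeSol]
  ring

theorem contDiff_odeSol_and_solOp {I i : ℝ → ℝ} (c : ℝ) (hsum : r₁ + r₂ = -2 * a)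
    (hprod : r₁ * r₂ = -2 * lam) (hI : ∀ t, HasDerivAt I (i t) t) (hi : Continuous i) :
    ContDiff ℝ 2 (fun w : ℝ × ℝ × ℝ => odeSol r₁ r₂ c I w.2.2) ∧
    ∀ w : ℝ × ℝ × ℝ, solOp p q a (fun w => odeSol r₁ r₂ c I w.2.2) w =
      lam * odeSol r₁ r₂ c I w.2.2 + 1/2 * (Real.exp (r₂ * w.2.2) * i w.2.2) := by
  have hIc : Continuous I := continuous_iff_continuousAt.2 fun t => (hI t).continuousAt
  have h1 := hasDerivAt_odeSol (r₁ := r₁) (r₂ := r₂) c hIc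
  have h2 : ∀ z, HasDerivAt (fun z => r₁ * odeSol r₁ r₂ c I z + Real.exp (r₂ * z) * I z)
      (r₁ * (r₁ * odeSol r₁ r₂ c I z + Real.exp (r₂ * z) * I z)
        + (Real.exp (r₂ * z) * r₂ * I z + Real.exp (r₂ * z) * i z)) z := fun z =>
    ((h1 z).const_mul r₁).add ((hasDerivAt_exp_mul r₂ z).mul (hI z))
  have hc : Continuous (odeSol r₁ r₂ c I) :=
    continuous_iff_continuousAt.2 fun t => (h1 t).continuousAt
  have hC2 : ContDiff ℝ 2 (odeSol r₁ r₂ c I) := contDiff_two_of_hasDerivAt h1 h2 (by fun_prop)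
  refine ⟨hC2.comp (contDiff_snd.comp contDiff_snd), fun w => ?_⟩
  have key := fun v => pd_pd_comp_coordinate (v := v) (ℓ := fun w : ℝ × ℝ × ℝ => w.2.2)
    (by fun_prop) pd_snd_snd h1 h2
  simp only [solOp, (key _).2]
  simp only [(key _).1]
  linear_combination (1/2 * r₁ * odeSol r₁ r₂ c I w.2.2
    + 1/2 * (Real.exp (r₂ * w.2.2) * I w.2.2)) * hsum - 1/2 * odeSol r₁ r₂ c I w.2.2 * hprod

/-- The projection `(x, y, z) ↦ (x, 0, z)`. -/
noncomputable def projX : ℝ × ℝ × ℝ →L[ℝ] ℝ × ℝ × ℝ :=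
  (ContinuousLinearMap.fst ℝ ℝ (ℝ × ℝ)).prod ((0 : ℝ × ℝ × ℝ →L[ℝ] ℝ).prod
    ((ContinuousLinearMap.snd ℝ ℝ ℝ).comp (ContinuousLinearMap.snd ℝ ℝ (ℝ × ℝ))))

theorem projX_apply (w : ℝ × ℝ × ℝ) : projX w = (w.1, 0, w.2.2) := rfl

theorem pd_comp_clm (P : ℝ × ℝ × ℝ →L[ℝ] ℝ × ℝ × ℝ) (hh : Differentiable ℝ h)
    (v : ℝ × ℝ × ℝ) : pd v (fun w => h (P w)) = fun w => pd (P v) h (P w) :=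
  pd_comp_affine (fun _ => P.hasFDerivAt) hh

theorem solOp_comp_projX (hh : ContDiff ℝ 2 h) (w : ℝ × ℝ × ℝ) :
    solOp p q a (fun w => h (projX w)) w = solOp p q a h (w.1, 0, w.2.2)
      - 1/2 * (Real.exp (-(2 * q * w.2.2)) * ∂₂ (∂₂ h) (w.1, 0, w.2.2)) := by
  have e1 : projX (1, 0, 0) = (1, 0, 0) := rfl
  have e2 : projX (0, 1, 0) = 0 := rfl
  have e3 : projX (0, 0, 1) = (0, 0, 1) := rfl
  simp only [solOp, pd_comp_clm projX hh.differentiable_of_two,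
    pd_comp_clm projX (hh.differentiable_pd_of_two _), e1, e2, e3, pd_zero_dir, pd_const]
  simp only [projX_apply]
  ring

theorem exists_splitting (hp : 0 < p) (hq : 0 < q) (hlam : -(a ^ 2) / 2 ≤ lam)
    (hh : ContDiff ℝ 2 h) (hpos : ∀ w, 0 < h w) (he : ∀ w, solOp p q a h w = lam * h w) :
    ∃ A B : ℝ × ℝ × ℝ → ℝ, ContDiff ℝ 2 A ∧ ContDiff ℝ 2 B ∧
      (∀ w, solOp p q a A w = lam * A w) ∧ (∀ w, solOp p q a B w = lam * B w) ∧
      (∀ w, h w = A w + B w) ∧ (∀ x y z, A (x, y, z) = A (x, 0, z)) ∧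
      ∀ x y z, B (x, y, z) = B (0, y, z) := by
  have hdec : ∀ x y z, h (x, y, z) = h (x, 0, z) + h (0, y, z) - h (0, 0, z) := by
    intro x y z
    have := mixedDiff_eq_zero hp hq hh hpos he x y (0, 0, z)
    simp only [mixedDiff, Prod.mk_add_mk, zero_add, add_zero] at this
    linarith
  have hyy : ∀ x z, ∂₂ (∂₂ h) (x, 0, z) = ∂₂ (∂₂ h) (0, 0, z) := by
    intro x z
    have h2 : ∂₂ h = fun w => ∂₂ h (w + (-w.1, 0, 0)) := by
      funext w
      have d1 := (hasDerivAt_line hh.differentiable_of_two w (0, 1, 0) 0)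
      have d2 := (hasDerivAt_line hh.differentiable_of_two (w + (-w.1, 0, 0)) (0, 1, 0) 0)
      have e : (fun s : ℝ => h (w + s • (0, 1, 0))) =
          fun s : ℝ => h (w + (-w.1, 0, 0) + s • (0, 1, 0)) + (h (w.1, 0, w.2.2)
            - h (0, 0, w.2.2)) := by
        funext s
        obtain ⟨x, y, z⟩ := w
        simp only [Prod.smul_mk, smul_eq_mul, mul_zero, mul_one, Prod.mk_add_mk, add_zero,
          add_neg_cancel]
        rw [hdec]
        ring
      rw [e] at d1
      simpa using d1.unique (d2.add_const _)
    have d1 := (hasDerivAt_line (hh.differentiable_pd_of_two (0, 1, 0)) (x, 0, z) (0, 1, 0) 0)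
    have d2 := (hasDerivAt_line (hh.differentiable_pd_of_two (0, 1, 0)) (0, 0, z) (0, 1, 0) 0)
    have e : (fun s : ℝ => ∂₂ h ((x, 0, z) + s • (0, 1, 0))) =
        fun s : ℝ => ∂₂ h ((0, 0, z) + s • (0, 1, 0)) := by
      funext s
      rw [h2]
      simp
    rw [e] at d1
    simpa using d1.unique d2
  set s := √(a ^ 2 + 2 * lam) with hs
  have hs2 : s * s = a ^ 2 + 2 * lam := Real.mul_self_sqrt (by linarith)
  set i : ℝ → ℝ := fun t =>
    Real.exp (-((-a - s) * t)) * (-(Real.exp (-(2 * q * t)) * ∂₂ (∂₂ h) (0, 0, t))) with hidef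
  have hcyy : Continuous (∂₂ (∂₂ h)) :=
    ((hh.pd (v := (0, 1, 0)) (m := 1) (by norm_num)).pd (m := 0) (by norm_num)).continuous
  have hi : Continuous i := by fun_prop
  have hI : ∀ t, HasDerivAt (fun t => ∫ s in (0 : ℝ)..t, i s) (i t) t := fun t =>
    intervalIntegral.integral_hasDerivAt_right (hi.intervalIntegrable _ _)
      (hi.stronglyMeasurableAtFilter _ _) hi.continuousAt
  obtain ⟨hψ, hψe⟩ := contDiff_odeSol_and_solOp (p := p) (q := q) (a := a) (lam := lam)
    (r₁ := -a + s) (r₂ := -a - s) 0 (by ring) (by linear_combination -hs2) hI hi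
  set ψ := odeSol (-a + s) (-a - s) 0 (fun t => ∫ s in (0 : ℝ)..t, i s) with hψdef
  have hP : ContDiff ℝ 2 fun w => h (projX w) := hh.comp projX.contDiff
  have hA := hP.sub hψ
  have hAe : ∀ w, solOp p q a (fun w => h (projX w) - ψ w.2.2) w
      = lam * (h (projX w) - ψ w.2.2) := by
    intro w
    rw [solOp_sub hP hψ]
    simp only [hψe, solOp_comp_projX hh, he, hyy, hidef]
    simp only [projX_apply]
    have : Real.exp ((-a - s) * w.2.2) * Real.exp (-((-a - s) * w.2.2)) = 1 := by
      rw [← Real.exp_add]; simp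
    linear_combination (1/2 * (Real.exp (-(2 * q * w.2.2)) * ∂₂ (∂₂ h) (0, 0, w.2.2))) * this
  refine ⟨fun w => h (projX w) - ψ w.2.2, fun w => h w - (h (projX w) - ψ w.2.2), hA, hh.sub hA,
    hAe, ?_, fun w => by ring, fun x y z => rfl, fun x y z => ?_⟩
  · intro w
    rw [solOp_sub hh hA]
    simp only [hAe, he]
    ring
  · simp only [projX_apply]
    linarith [hdec x y z]

end Splitting

section NonnegSplitting

variable {p q a lam r₁ r₂ : ℝ} {h A B : ℝ × ℝ × ℝ → ℝ}

theorem odeSol_const (c d z : ℝ) : odeSol r₁ r₂ c (fun _ => d) z =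
    Real.exp (r₁ * z) * (c + d * ∫ t in (0 : ℝ)..z, Real.exp ((r₂ - r₁) * t)) := by
  rw [odeSol, intervalIntegral.integral_mul_const, mul_comm d]

theorem contDiff_odeSol_const_and_solOp (hsum : r₁ + r₂ = -2 * a) (hprod : r₁ * r₂ = -2 * lam)
    (c d : ℝ) : ContDiff ℝ 2 (fun w : ℝ × ℝ × ℝ => odeSol r₁ r₂ c (fun _ => d) w.2.2) ∧
    ∀ w : ℝ × ℝ × ℝ, solOp p q a (fun w => odeSol r₁ r₂ c (fun _ => d) w.2.2) w =
      lam * odeSol r₁ r₂ c (fun _ => d) w.2.2 := by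
  have := contDiff_odeSol_and_solOp (p := p) (q := q) c hsum hprod
    (fun t => hasDerivAt_const t d) continuous_const
  refine ⟨this.1, fun w => ?_⟩
  rw [this.2]
  ring

/-- An eigenfunction which is dominated by a function of the height on a slab, and is nonpositive
on the boundary of the slab, is nonpositive on the slab. -/
theorem nonpos_on_slab_of_le_height {g : ℝ × ℝ × ℝ → ℝ} {k : ℝ → ℝ} {N : ℝ} (hp : 0 < p)
    (hq : 0 < q) (hsum : r₁ + r₂ = -2 * a) (hprod : r₁ * r₂ = -2 * lam) (hg : ContDiff ℝ 2 g)
    (hge : ∀ w, solOp p q a g w = lam * g w) (hk : Continuous k) (hgk : ∀ w, g w ≤ k w.2.2)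
    (hbd : ∀ w, |w.2.2| = N → g w ≤ 0) (w : ℝ × ℝ × ℝ) (hw : |w.2.2| ≤ N) : g w ≤ 0 := by
  obtain ⟨K, hK⟩ := (isCompact_Icc (a := -N) (b := N)).bddAbove_image
    (f := fun z => k z * Real.exp (-(r₁ * z))) (by fun_prop)
  obtain ⟨hH, hHe⟩ := contDiff_odeSol_const_and_solOp (p := p) (q := q) hsum hprod 1 0
  have e : (fun w : ℝ × ℝ × ℝ => odeSol r₁ r₂ 1 (fun _ => 0) w.2.2)
      = fun w => Real.exp (r₁ * w.2.2) := by
    funext w; simp [odeSol_const]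
  have hval : ∀ w : ℝ × ℝ × ℝ, odeSol r₁ r₂ 1 (fun _ => 0) w.2.2 = Real.exp (r₁ * w.2.2) :=
    fun w => congrFun e w
  rw [e] at hH
  simp only [hval] at hHe
  have hd := fun v : ℝ × ℝ × ℝ => pd_exp_height r₁ v
  refine slab_maximum_principle (C := |r₁|) (K := K) hp hq hH (fun w => Real.exp_pos _) hHe hg hge
    ?_ ?_ hbd hw
  · intro w _
    have hpos := Real.exp_pos (r₁ * w.2.2)
    simp only [hd]
    refine ⟨?_, ?_, ?_⟩
    · simpa using by positivity
    · simpa using by positivity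
    · simp [abs_mul, mul_comm]
  · intro w hw
    have := hK ⟨w.2.2, abs_le.1 hw, rfl⟩
    have h1 := mul_le_mul_of_nonneg_right this (Real.exp_pos (r₁ * w.2.2)).le
    have h2 : Real.exp (-(r₁ * w.2.2)) * Real.exp (r₁ * w.2.2) = 1 := by
      rw [← Real.exp_add]; simp
    have h3 := hgk w
    simp only [mul_assoc, h2, mul_one] at h1
    linarith

/-- The two functions of a splitting are separated on a slab by a solution depending only on the
height. -/
theorem exists_odeSol_between_on_slab {N : ℝ} (hN : 0 < N) (hp : 0 < p) (hq : 0 < q)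
    (hsum : r₁ + r₂ = -2 * a) (hprod : r₁ * r₂ = -2 * lam) (hA : ContDiff ℝ 2 A)
    (hB : ContDiff ℝ 2 B) (hAe : ∀ w, solOp p q a A w = lam * A w)
    (hBe : ∀ w, solOp p q a B w = lam * B w) (hpos : ∀ w, 0 < A w + B w)
    (hAy : ∀ x y z, A (x, y, z) = A (x, 0, z)) (hBx : ∀ x y z, B (x, y, z) = B (0, y, z)) :
    ∃ c d : ℝ, ∀ w : ℝ × ℝ × ℝ, |w.2.2| ≤ N →
      -B w ≤ odeSol r₁ r₂ c (fun _ => d) w.2.2 ∧ odeSol r₁ r₂ c (fun _ => d) w.2.2 ≤ A w := by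
  have hAB : ∀ x y z, -B (0, y, z) ≤ A (x, 0, z) := by
    intro x y z
    have := hpos (x, y, z)
    rw [hAy, hBx] at this
    linarith
  set α : ℝ → ℝ := fun z => ⨅ x, A (x, 0, z)
  have hαA : ∀ x z, α z ≤ A (x, 0, z) := fun x z =>
    ciInf_le ⟨-B (0, 0, z), by rintro _ ⟨x, rfl⟩; exact hAB x 0 z⟩ x
  have hBα : ∀ y z, -B (0, y, z) ≤ α z := fun y z => le_ciInf fun x => hAB x y z
  set S : ℝ → ℝ := fun z => ∫ t in (0 : ℝ)..z, Real.exp ((r₂ - r₁) * t) with hS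
  have hSpos : 0 < S N := intervalIntegral.intervalIntegral_pos_of_pos
    (Continuous.intervalIntegrable (by fun_prop) _ _) (fun _ => Real.exp_pos _) hN
  have hSneg : S (-N) < 0 := by
    rw [hS]
    beta_reduce
    rw [intervalIntegral.integral_symm, neg_lt_zero]
    exact intervalIntegral.intervalIntegral_pos_of_pos
      (Continuous.intervalIntegrable (by fun_prop) _ _) (fun _ => Real.exp_pos _) (by linarith)
  set u := Real.exp (-(r₁ * N)) * α N with hu
  set v := Real.exp (r₁ * N) * α (-N) with hv
  set d := (u - v) / (S N - S (-N)) with hd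
  have hd' : d * (S N - S (-N)) = u - v := div_mul_cancel₀ _ (by linarith)
  have hφN : odeSol r₁ r₂ (u - d * S N) (fun _ => d) N = α N := by
    rw [odeSol_const, sub_add_cancel, hu, ← mul_assoc, ← Real.exp_add]
    simp
  have hφN' : odeSol r₁ r₂ (u - d * S N) (fun _ => d) (-N) = α (-N) := by
    rw [odeSol_const, show u - d * S N + d * ∫ t in (0 : ℝ)..(-N), Real.exp ((r₂ - r₁) * t) = v by
      linear_combination -hd', hv, ← mul_assoc, ← Real.exp_add]
    simp
  obtain ⟨hφ, hφe⟩ := contDiff_odeSol_const_and_solOp (p := p) (q := q) hsum hprod (u - d * S N) d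
  have hφc : Continuous (odeSol r₁ r₂ (u - d * S N) fun _ => d) :=
    continuous_iff_continuousAt.2 fun t => (hasDerivAt_odeSol _ continuous_const t).continuousAt
  set φ := odeSol r₁ r₂ (u - d * S N) fun _ => d
  have hφα : ∀ z, |z| = N → φ z = α z := by
    intro z hz
    rcases eq_or_eq_neg_of_abs_eq hz with rfl | rfl
    · exact hφN
    · exact hφN'
  refine ⟨u - d * S N, d, fun w hw => ⟨?_, ?_⟩⟩
  · have hBc := hB.continuous
    have hAc := hA.continuous
    have hge : ∀ w, solOp p q a (fun w => -1 * B w - φ w.2.2) w = lam * (-1 * B w - φ w.2.2) := by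
      intro w
      rw [solOp_sub (contDiff_const.mul hB) hφ, solOp_const_mul hB]
      simp only [hBe, hφe]
      ring
    have := nonpos_on_slab_of_le_height (N := N) (k := fun z => A (0, 0, z) - φ z) hp hq hsum hprod
      ((contDiff_const.mul hB).sub hφ) hge (by fun_prop) ?_ ?_ w hw
    · linarith
    · rintro ⟨x, y, z⟩
      simp only [hBx x]
      linarith [hAB 0 y z]
    · rintro ⟨x, y, z⟩ hz
      simp only [hBx x, hφα z hz]
      linarith [hBα y z]
  · have hBc := hB.continuous
    have hge : ∀ w, solOp p q a (fun w => φ w.2.2 - A w) w = lam * (φ w.2.2 - A w) := by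
      intro w
      rw [solOp_sub hφ hA]
      simp only [hAe, hφe]
      ring
    have := nonpos_on_slab_of_le_height (N := N) (k := fun z => φ z + B (0, 0, z)) hp hq hsum hprod
      (hφ.sub hA) hge (by fun_prop) ?_ ?_ w hw
    · linarith
    · rintro ⟨x, y, z⟩
      simp only [hAy x y]
      linarith [hAB x 0 z]
    · rintro ⟨x, y, z⟩ hz
      simp only [hAy x y, hφα z hz]
      linarith [hαA x z]

theorem exists_odeSol_between (hp : 0 < p) (hq : 0 < q)
    (hsum : r₁ + r₂ = -2 * a) (hprod : r₁ * r₂ = -2 * lam) (hA : ContDiff ℝ 2 A)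
    (hB : ContDiff ℝ 2 B) (hAe : ∀ w, solOp p q a A w = lam * A w)
    (hBe : ∀ w, solOp p q a B w = lam * B w) (hpos : ∀ w, 0 < A w + B w)
    (hAy : ∀ x y z, A (x, y, z) = A (x, 0, z)) (hBx : ∀ x y z, B (x, y, z) = B (0, y, z)) :
    ∃ c d : ℝ, ∀ w : ℝ × ℝ × ℝ,
      -B w ≤ odeSol r₁ r₂ c (fun _ => d) w.2.2 ∧ odeSol r₁ r₂ c (fun _ => d) w.2.2 ≤ A w := by
  set K : ℕ → Set (ℝ × ℝ) := fun n => {c | ∀ w : ℝ × ℝ × ℝ, |w.2.2| ≤ (n : ℝ) + 1 →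
    -B w ≤ odeSol r₁ r₂ c.1 (fun _ => c.2) w.2.2 ∧
      odeSol r₁ r₂ c.1 (fun _ => c.2) w.2.2 ≤ A w} with hK
  have hclosed : ∀ n, IsClosed (K n) := by
    intro n
    simp only [hK, odeSol_const, Set.ofPred_forall]
    refine isClosed_iInter fun w => isClosed_iInter fun _ => ?_
    exact IsClosed.and (isClosed_le (by fun_prop) (by fun_prop))
      (isClosed_le (by fun_prop) (by fun_prop))
  have hne : ∀ n, (K n).Nonempty := by
    intro n
    obtain ⟨c, d, hcd⟩ := exists_odeSol_between_on_slab (N := (n : ℝ) + 1) (by positivity) hp hq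
      hsum hprod hA hB hAe hBe hpos hAy hBx
    exact ⟨(c, d), hcd⟩
  have hanti : ∀ n, K (n + 1) ⊆ K n := by
    intro n c hc w hw
    refine hc w ?_
    push_cast
    linarith
  have hcompact : IsCompact (K 0) := by
    set σ := ∫ t in (0 : ℝ)..1, Real.exp ((r₂ - r₁) * t) with hσ
    have hσpos : 0 < σ := intervalIntegral.intervalIntegral_pos_of_pos
      (Continuous.intervalIntegrable (by fun_prop) _ _) (fun _ => Real.exp_pos _) one_pos
    have himg := ((isCompact_Icc (a := -B (0, 0, 0)) (b := A (0, 0, 0))).prod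
      (isCompact_Icc (a := -B (0, 0, 1)) (b := A (0, 0, 1)))).image
      (f := fun u : ℝ × ℝ => (u.1, (Real.exp (-r₁) * u.2 - u.1) / σ)) (by fun_prop)
    refine himg.of_isClosed_subset (hclosed 0) fun c hc => ?_
    refine ⟨(odeSol r₁ r₂ c.1 (fun _ => c.2) 0, odeSol r₁ r₂ c.1 (fun _ => c.2) 1),
      ⟨hc (0, 0, 0) (by simp), hc (0, 0, 1) (by simp)⟩, ?_⟩
    have e : Real.exp (-r₁) * Real.exp r₁ = 1 := by rw [← Real.exp_add]; simp
    refine Prod.ext (by simp [odeSol_const]) ?_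
    simp only [odeSol_const, mul_one, ← hσ, ← mul_assoc, e]
    simp [hσpos.ne']
  obtain ⟨c, hc⟩ := IsCompact.nonempty_iInter_of_sequence_nonempty_isCompact_isClosed K hanti hne
    hcompact hclosed
  refine ⟨c.1, c.2, fun w => ?_⟩
  obtain ⟨n, hn⟩ := exists_nat_ge |w.2.2|
  exact Set.mem_iInter.1 hc n w (by linarith)

/-- Every positive eigenfunction is the sum of two nonnegative ones, the first of which does not
depend on `y` and the second of which does not depend on `x`. -/
theorem exists_nonneg_splitting (hp : 0 < p) (hq : 0 < q) (hlam : -(a ^ 2) / 2 ≤ lam)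
    (hh : ContDiff ℝ 2 h) (hpos : ∀ w, 0 < h w) (he : ∀ w, solOp p q a h w = lam * h w) :
    ∃ A B : ℝ × ℝ × ℝ → ℝ, ContDiff ℝ 2 A ∧ (∀ w, solOp p q a A w = lam * A w) ∧
      (∀ w, 0 ≤ A w) ∧ (∀ w, 0 ≤ B w) ∧
      (∀ w, h w = A w + B w) ∧ (∀ x y z, A (x, y, z) = A (x, 0, z)) ∧
      ∀ x y z, B (x, y, z) = B (0, y, z) := by
  obtain ⟨A, B, hA, hB, hAe, hBe, hAB, hAy, hBx⟩ := exists_splitting hp hq hlam hh hpos he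
  set s := √(a ^ 2 + 2 * lam) with hs
  have hs2 : s * s = a ^ 2 + 2 * lam := Real.mul_self_sqrt (by linarith)
  have hsum : (-a + s) + (-a - s) = -2 * a := by ring
  have hprod : (-a + s) * (-a - s) = -2 * lam := by linear_combination -hs2
  obtain ⟨c, d, hcd⟩ := exists_odeSol_between hp hq hsum hprod hA hB hAe hBe
    (fun w => (hpos w).trans_eq (hAB w)) hAy hBx
  obtain ⟨hφ, hφe⟩ := contDiff_odeSol_const_and_solOp (p := p) (q := q) hsum hprod c d
  refine ⟨fun w => A w - odeSol (-a + s) (-a - s) c (fun _ => d) w.2.2,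
    fun w => B w + odeSol (-a + s) (-a - s) c (fun _ => d) w.2.2, hA.sub hφ, fun w => ?_,
    fun w => sub_nonneg.2 (hcd w).2, fun w => by linarith [(hcd w).1],
    fun w => by rw [hAB]; ring, fun x y z => by simp only [hAy x y],
    fun x y z => by simp only [hBx x]⟩
  rw [solOp_sub hA hφ]
  simp only [hAe, hφe]
  ring

end NonnegSplitting

section Minimal

variable {p q a lam : ℝ}

theorem solLap_lift_fst (g : ℝ × ℝ → ℝ) (w : ℝ × ℝ × ℝ) :
    solLap p q a (fun w => g (w.1, w.2.2)) w = hypLap p a g (w.1, w.2.2) := by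
  simp [solLap, hypLap, iteratedDeriv_const]

theorem solLap_lift_snd (g : ℝ × ℝ → ℝ) (w : ℝ × ℝ × ℝ) :
    solLap p q a (fun w => g (w.2.1, -w.2.2)) w = hypLap q (-a) g (w.2.1, -w.2.2) := by
  simp only [solLap, hypLap, iteratedDeriv_const, iteratedDeriv_comp_neg 2 (fun t => g (w.2.1, t)),
    deriv_comp_neg (fun t => g (w.2.1, t))]
  simp

theorem isHypMinimal_of_isSolMinimal_lift {r b : ℝ} {g : ℝ × ℝ → ℝ} {proj : ℝ × ℝ × ℝ → ℝ × ℝ}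
    (hproj : ContDiff ℝ 2 proj) (hsurj : Function.Surjective proj) (h0 : proj (0, 0, 0) = (0, 0))
    (hlift : ∀ f w, solLap p q a (fun w => f (proj w)) w = hypLap r b f (proj w))
    (hg : ContDiff ℝ 2 g) (hmin : IsSolMinimal p q a lam fun w => g (proj w)) :
    IsHypMinimal r b lam g := by
  obtain ⟨⟨-, hpos, he⟩, h1, hm⟩ := hmin
  refine ⟨⟨hg, fun u => ?_, fun u => ?_⟩, by simpa [h0] using h1, fun f ⟨hf, hfpos, hfe⟩ hfg => ?_⟩
  · obtain ⟨w, rfl⟩ := hsurj u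
    exact hpos w
  · obtain ⟨w, rfl⟩ := hsurj u
    rw [← hlift, he]
  · obtain ⟨c, hc⟩ := hm (fun w => f (proj w))
      ⟨hf.comp hproj, fun w => hfpos _, fun w => by rw [hlift, hfe]⟩ fun w => hfg _
    refine ⟨c, fun u => ?_⟩
    obtain ⟨w, rfl⟩ := hsurj u
    exact hc w

end Minimal

theorem minimal_eigenfunctions_split (p q a lam : ℝ) (hp : 0 < p) (hq : 0 < q)
    (hlam : -a^2/2 ≤ lam) (h : ℝ × ℝ × ℝ → ℝ) (hmin : IsSolMinimal p q a lam h) :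
    (∃ h₁ : ℝ × ℝ → ℝ, IsHypMinimal p a lam h₁ ∧
        ∀ w : ℝ × ℝ × ℝ, h w = h₁ (w.1, w.2.2)) ∨
    (∃ h₂ : ℝ × ℝ → ℝ, IsHypMinimal q (-a) lam h₂ ∧
        ∀ w : ℝ × ℝ × ℝ, h w = h₂ (w.2.1, -w.2.2)) := by
  obtain ⟨⟨hh, hpos, he⟩, -, hm⟩ := id hmin
  obtain ⟨A, B, hA, hAe, hA0, hB0, hAB, hAy, hBx⟩ := exists_nonneg_splitting hp hq hlam hh hpos
    fun w => by rw [← solLap_eq_solOp hh, he]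
  have hf : ContDiff ℝ 2 fun w => 1/2 * h w + 1/2 * A w := by fun_prop
  obtain ⟨c, hc⟩ := hm (fun w => 1/2 * h w + 1/2 * A w)
    ⟨hf, fun w => by linarith [hpos w, hA0 w], fun w => by
      rw [solLap_eq_solOp hf, solOp_add (contDiff_const.mul hh) (contDiff_const.mul hA),
        solOp_const_mul hh, solOp_const_mul hA]
      simp only [hAe, ← solLap_eq_solOp hh, he]
      ring⟩
    fun w => by linarith [hAB w, hB0 w]
  have hAc : ∀ w, A w = (2 * c - 1) * h w := fun w => by linarith [hc w]
  by_cases hc0 : 2 * c - 1 = 0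
  · have hx : ∀ w : ℝ × ℝ × ℝ, h w = h (0, w.2.1, w.2.2) := fun w => by
      rw [hAB, hAB (0, _), hAc, hAc, hc0, zero_mul, zero_mul]
      exact congrArg _ (hBx w.1 w.2.1 w.2.2)
    have hw : ∀ w : ℝ × ℝ × ℝ, h w = h (0, w.2.1, - -w.2.2) := fun w => by rw [neg_neg, ← hx]
    refine .inr ⟨fun u => h (0, u.1, -u.2), ?_, hw⟩
    refine isHypMinimal_of_isSolMinimal_lift (p := p) (proj := fun w => (w.2.1, -w.2.2)) (by fun_prop)
      (fun u => ⟨(0, u.1, -u.2), by simp⟩) (by simp) solLap_lift_snd (by fun_prop) ?_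
    rwa [← funext hw]
  · have hy : ∀ w : ℝ × ℝ × ℝ, h w = h (w.1, 0, w.2.2) := fun w => by
      refine mul_left_cancel₀ hc0 ?_
      rw [← hAc, ← hAc]
      exact hAy w.1 w.2.1 w.2.2
    refine .inl ⟨fun u => h (u.1, 0, u.2), ?_, hy⟩
    refine isHypMinimal_of_isSolMinimal_lift (q := q) (proj := fun w => (w.1, w.2.2)) (by fun_prop)
      (fun u => ⟨(u.1, 0, u.2), by simp⟩) rfl solLap_lift_fst (by fun_prop) ?_
    rwa [← funext hy]
end
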